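/- In the degenerate case ρ = 1, σ = 0: the system dX₁ = (g·1{X₁≤X₂} − h·1{X₁>X₂}) dt + 1{X₁>X₂} dW, dX₂ = (g·1{X₁>X₂} − h·1{X₁≤X₂}) dt − 1{X₁≤X₂} dW admits a strong solution (adapted to the filtration of the driving Brownian motion W), which is therefore pathwise unique; whereas the system dX₁ = (g·1{X₁≤X₂} − h·1{X₁>X₂}) dt + 1{X₁>X₂} dV, dX₂ = (g·1{X₁>X₂} − h·1{X₁≤X₂}) dt + 1{X₁≤X₂} dV admits no strong solution. -/

import Mathlib

open MeasureTheory ProbabilityTheory Filter Set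

noncomputable section

namespace SDEPaper

/-- The signum convention of the paper: `psgn y = 1` for `y > 0`, `= -1` for `y ≤ 0`. -/
def psgn (y : ℝ) : ℝ := if 0 < y then 1 else -1

variable {Ω : Type*} [m : MeasurableSpace Ω]

/-- The σ-algebra generated by the process `Ξ` on the time interval `[0, t]`. -/
def natSA {E : Type*} [MeasurableSpace E] (Ξ : ℝ → Ω → E) (t : ℝ) : MeasurableSpace Ω :=
  ⨆ s ∈ Icc (0 : ℝ) t, MeasurableSpace.comap (Ξ s) inferInstance

/-- The `μ`-augmentation of a σ-algebra. -/
def augSA (μ : Measure Ω) (m' : MeasurableSpace Ω) : MeasurableSpace Ω :=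
  m' ⊔ MeasurableSpace.generateFrom {A : Set Ω | μ A = 0}

/-- `𝔉^Ξ(t)`: the `μ`-augmented σ-algebra generated by the process `Ξ` up to time `t`. -/
def natFilt {E : Type*} [MeasurableSpace E] (μ : Measure Ω) (Ξ : ℝ → Ω → E) (t : ℝ) :
    MeasurableSpace Ω := augSA μ (natSA Ξ t)

/-- Dyadic left-point Riemann sum of `H` against `X` on `[0,t]`. -/
def rsum (H X : ℝ → Ω → ℝ) (t : ℝ) (n : ℕ) (ω : Ω) : ℝ :=
  ∑ i ∈ Finset.range (2 ^ n),
    H (t * i / 2 ^ n) ω * (X (t * (i + 1) / 2 ^ n) ω - X (t * i / 2 ^ n) ω)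

/-- `I = ∫₀^· H dX`: dyadic Riemann sums converge in probability, and `I 0 = 0` a.s. -/
def IsSI (μ : Measure Ω) (H X I : ℝ → Ω → ℝ) : Prop :=
  (∀ᵐ ω ∂μ, I 0 ω = 0) ∧
  ∀ t : ℝ, 0 ≤ t → TendstoInMeasure μ (fun n => rsum H X t n) atTop (I t)

/-- `I = ∫₀^· H₁ dX₁ + ∫₀^· H₂ dX₂` in the sense of convergence in probability
of dyadic Riemann sums. -/
def IsSI2 (μ : Measure Ω) (H₁ X₁ H₂ X₂ I : ℝ → Ω → ℝ) : Prop :=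
  (∀ᵐ ω ∂μ, I 0 ω = 0) ∧
  ∀ t : ℝ, 0 ≤ t →
    TendstoInMeasure μ (fun n ω => rsum H₁ X₁ t n ω + rsum H₂ X₂ t n ω) atTop (I t)

/-- Dyadic sums of products of increments. -/
def qsum (X Y : ℝ → Ω → ℝ) (t : ℝ) (n : ℕ) (ω : Ω) : ℝ :=
  ∑ i ∈ Finset.range (2 ^ n),
    (X (t * (i + 1) / 2 ^ n) ω - X (t * i / 2 ^ n) ω) *
      (Y (t * (i + 1) / 2 ^ n) ω - Y (t * i / 2 ^ n) ω)

/-- `C = ⟨X,Y⟩`: the quadratic covariation, as a limit in probability of dyadic sums. -/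
def IsQV (μ : Measure Ω) (X Y C : ℝ → Ω → ℝ) : Prop :=
  ∀ t : ℝ, 0 ≤ t → TendstoInMeasure μ (fun n => qsum X Y t n) atTop (C t)

/-- `W` is a standard one-dimensional Brownian motion with respect to the family of
σ-algebras `F` (a filtration contained in the ambient σ-algebra). -/
structure IsBM (μ : Measure Ω) (F : ℝ → MeasurableSpace Ω) (W : ℝ → Ω → ℝ) : Prop where
  le : ∀ t : ℝ, F t ≤ m
  mono : Monotone F
  adapted : ∀ t : ℝ, 0 ≤ t → MeasurableSpace.comap (W t) inferInstance ≤ F t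
  init : ∀ᵐ ω ∂μ, W 0 ω = 0
  cont : ∀ᵐ ω ∂μ, Continuous fun t => W t ω
  law : ∀ s t : ℝ, 0 ≤ s → s ≤ t →
    μ.map (fun ω => W t ω - W s ω) = gaussianReal 0 ((t - s).toNNReal)
  indep : ∀ s t : ℝ, 0 ≤ s → s ≤ t →
    Indep (MeasurableSpace.comap (fun ω => W t ω - W s ω) inferInstance) (F s) μ

/-- `(B₁, B₂)` is a planar Brownian motion: two independent standard Brownian motions
with respect to the common filtration `F`. -/
def IsPlanarBM (μ : Measure Ω) (F : ℝ → MeasurableSpace Ω) (B₁ B₂ : ℝ → Ω → ℝ) : Prop :=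
  IsBM μ F B₁ ∧ IsBM μ F B₂ ∧
    IndepFun (fun ω => (fun t => B₁ t ω)) (fun ω => (fun t => B₂ t ω)) μ

/-- `L` is the (right) local time at the origin of the process `Y`:
`L t = lim_{ε ↓ 0} (4ε)⁻¹ ∫₀ᵗ 1{|Y(s)| < ε} ds`. -/
def IsLocalTime (μ : Measure Ω) (Y L : ℝ → Ω → ℝ) : Prop :=
  ∀ᵐ ω ∂μ, ∀ t : ℝ, 0 ≤ t →
    Tendsto (fun ε : ℝ =>
        (4 * ε)⁻¹ * ∫ s in (0:ℝ)..t, (if |Y s ω| < ε then (1:ℝ) else 0))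
      (nhdsWithin 0 (Ioi 0)) (nhds (L t ω))

/-- A continuous local martingale with respect to the filtration `F`. -/
def IsContLocMart (μ : Measure Ω) (F : Filtration ℝ m) (M : ℝ → Ω → ℝ) : Prop :=
  (∀ᵐ ω ∂μ, Continuous fun t => M t ω) ∧ StronglyAdapted F M ∧
    ∃ τ : ℕ → Ω → ℝ, (∀ n, IsStoppingTime F (fun ω => (τ n ω : WithTop ℝ))) ∧
      (∀ᵐ ω ∂μ, Tendsto (fun n => τ n ω) atTop atTop) ∧
      ∀ n, Martingale (fun t ω => M (min t (τ n ω)) ω) F μ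

/-- Orthogonality: the cross-variation `⟨M,N⟩` vanishes identically. -/
def Orthogonal (μ : Measure Ω) (M N : ℝ → Ω → ℝ) : Prop :=
  IsQV μ M N fun _ _ => 0

/-- Domination: `⟨M⟩(t) = ∫₀ᵗ q(s) d⟨N⟩(s)` for a progressively measurable
process `q` with values in `[0,c]`. -/
def Dominated (μ : Measure Ω) (F : Filtration ℝ m) (M N : ℝ → Ω → ℝ) (c : ℝ) : Prop :=
  ∃ QM QN q : ℝ → Ω → ℝ, IsQV μ M M QM ∧ IsQV μ N N QN ∧
    ProgMeasurable F q ∧ (∀ t ω, q t ω ∈ Icc (0:ℝ) c) ∧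
    ∀ᵐ ω ∂μ, ∃ ν : Measure ℝ,
      (∀ a b : ℝ, 0 ≤ a → a ≤ b → ν (Ioc a b) = ENNReal.ofReal (QN b ω - QN a ω)) ∧
      ∀ t : ℝ, 0 ≤ t → QM t ω = ∫ s in Ioc (0:ℝ) t, q s ω ∂ν

/-- The law of the two-dimensional process `(X₁, X₂)` on path space. -/
def pathLaw (μ : Measure Ω) (X₁ X₂ : ℝ → Ω → ℝ) : Measure (ℝ → ℝ × ℝ) :=
  μ.map fun ω => (fun t => (X₁ t ω, X₂ t ω))
/-- `(X₁, X₂)` solves the system (1.1)-(1.2) driven by `(B₁, B₂)`. -/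
def Solves11 (μ : Measure Ω) (F : ℝ → MeasurableSpace Ω) (g h ρ σ x₁ x₂ : ℝ)
    (B₁ B₂ X₁ X₂ : ℝ → Ω → ℝ) : Prop :=
  (∀ t : ℝ, 0 ≤ t →
    MeasurableSpace.comap (fun ω => (X₁ t ω, X₂ t ω)) inferInstance ≤ F t) ∧
  (∀ᵐ ω ∂μ, Continuous (fun t => X₁ t ω) ∧ Continuous (fun t => X₂ t ω)) ∧
  ∃ I₁ I₂ : ℝ → Ω → ℝ,
    IsSI μ (fun s ω => if X₁ s ω ≤ X₂ s ω then σ else ρ) B₁ I₁ ∧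
    IsSI μ (fun s ω => if X₁ s ω ≤ X₂ s ω then ρ else σ) B₂ I₂ ∧
    ∀ᵐ ω ∂μ, ∀ t : ℝ, 0 ≤ t →
      X₁ t ω = x₁ + (∫ s in (0:ℝ)..t, (if X₁ s ω ≤ X₂ s ω then g else -h)) + I₁ t ω ∧
      X₂ t ω = x₂ + (∫ s in (0:ℝ)..t, (if X₁ s ω ≤ X₂ s ω then -h else g)) + I₂ t ω

/-- `(X₁, X₂)` solves the system (4.7)-(4.8), driven by the single Brownian motion `W`. -/
def Solves47 (μ : Measure Ω) (F : ℝ → MeasurableSpace Ω) (g h x₁ x₂ : ℝ)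
    (W X₁ X₂ : ℝ → Ω → ℝ) : Prop :=
  (∀ t : ℝ, 0 ≤ t →
    MeasurableSpace.comap (fun ω => (X₁ t ω, X₂ t ω)) inferInstance ≤ F t) ∧
  (∀ᵐ ω ∂μ, Continuous (fun t => X₁ t ω) ∧ Continuous (fun t => X₂ t ω)) ∧
  ∃ I₁ I₂ : ℝ → Ω → ℝ,
    IsSI μ (fun s ω => if X₁ s ω ≤ X₂ s ω then (0:ℝ) else 1) W I₁ ∧
    IsSI μ (fun s ω => if X₁ s ω ≤ X₂ s ω then (-1:ℝ) else 0) W I₂ ∧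
    ∀ᵐ ω ∂μ, ∀ t : ℝ, 0 ≤ t →
      X₁ t ω = x₁ + (∫ s in (0:ℝ)..t, (if X₁ s ω ≤ X₂ s ω then g else -h)) + I₁ t ω ∧
      X₂ t ω = x₂ + (∫ s in (0:ℝ)..t, (if X₁ s ω ≤ X₂ s ω then -h else g)) + I₂ t ω

/-- `(X₁, X₂)` solves the system (4.9)-(4.10), driven by the single Brownian motion `V`. -/
def Solves49 (μ : Measure Ω) (F : ℝ → MeasurableSpace Ω) (g h x₁ x₂ : ℝ)
    (V X₁ X₂ : ℝ → Ω → ℝ) : Prop :=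
  (∀ t : ℝ, 0 ≤ t →
    MeasurableSpace.comap (fun ω => (X₁ t ω, X₂ t ω)) inferInstance ≤ F t) ∧
  (∀ᵐ ω ∂μ, Continuous (fun t => X₁ t ω) ∧ Continuous (fun t => X₂ t ω)) ∧
  ∃ I₁ I₂ : ℝ → Ω → ℝ,
    IsSI μ (fun s ω => if X₁ s ω ≤ X₂ s ω then (0:ℝ) else 1) V I₁ ∧
    IsSI μ (fun s ω => if X₁ s ω ≤ X₂ s ω then (1:ℝ) else 0) V I₂ ∧
    ∀ᵐ ω ∂μ, ∀ t : ℝ, 0 ≤ t →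
      X₁ t ω = x₁ + (∫ s in (0:ℝ)..t, (if X₁ s ω ≤ X₂ s ω then g else -h)) + I₁ t ω ∧
      X₂ t ω = x₂ + (∫ s in (0:ℝ)..t, (if X₁ s ω ≤ X₂ s ω then -h else g)) + I₂ t ω

/-- `(X₁, X₂)` solves the system (2.12)-(2.13), driven by the planar BM `(W₁, W₂)`. -/
def Solves212 (μ : Measure Ω) (F : ℝ → MeasurableSpace Ω) (g h ρ σ x₁ x₂ : ℝ)
    (W₁ W₂ X₁ X₂ : ℝ → Ω → ℝ) : Prop :=
  (∀ t : ℝ, 0 ≤ t →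
    MeasurableSpace.comap (fun ω => (X₁ t ω, X₂ t ω)) inferInstance ≤ F t) ∧
  (∀ᵐ ω ∂μ, Continuous (fun t => X₁ t ω) ∧ Continuous (fun t => X₂ t ω)) ∧
  ∃ I₁ I₂ : ℝ → Ω → ℝ,
    IsSI2 μ (fun s ω => if X₁ s ω ≤ X₂ s ω then 0 else ρ) W₁
            (fun s ω => if X₁ s ω ≤ X₂ s ω then σ else 0) W₂ I₁ ∧
    IsSI2 μ (fun s ω => if X₁ s ω ≤ X₂ s ω then -ρ else 0) W₁
            (fun s ω => if X₁ s ω ≤ X₂ s ω then 0 else -σ) W₂ I₂ ∧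
    ∀ᵐ ω ∂μ, ∀ t : ℝ, 0 ≤ t →
      X₁ t ω = x₁ + (∫ s in (0:ℝ)..t, (if X₁ s ω ≤ X₂ s ω then g else -h)) + I₁ t ω ∧
      X₂ t ω = x₂ + (∫ s in (0:ℝ)..t, (if X₁ s ω ≤ X₂ s ω then -h else g)) + I₂ t ω

/-- `(X₁, X₂)` solves the system (2.14)-(2.15), driven by the planar BM `(V₁, V₂)`. -/
def Solves214 (μ : Measure Ω) (F : ℝ → MeasurableSpace Ω) (g h ρ σ x₁ x₂ : ℝ)
    (V₁ V₂ X₁ X₂ : ℝ → Ω → ℝ) : Prop :=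
  (∀ t : ℝ, 0 ≤ t →
    MeasurableSpace.comap (fun ω => (X₁ t ω, X₂ t ω)) inferInstance ≤ F t) ∧
  (∀ᵐ ω ∂μ, Continuous (fun t => X₁ t ω) ∧ Continuous (fun t => X₂ t ω)) ∧
  ∃ I₁ I₂ : ℝ → Ω → ℝ,
    IsSI2 μ (fun s ω => if X₁ s ω ≤ X₂ s ω then 0 else ρ) V₁
            (fun s ω => if X₁ s ω ≤ X₂ s ω then σ else 0) V₂ I₁ ∧
    IsSI2 μ (fun s ω => if X₁ s ω ≤ X₂ s ω then ρ else 0) V₁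
            (fun s ω => if X₁ s ω ≤ X₂ s ω then 0 else σ) V₂ I₂ ∧
    ∀ᵐ ω ∂μ, ∀ t : ℝ, 0 ≤ t →
      X₁ t ω = x₁ + (∫ s in (0:ℝ)..t, (if X₁ s ω ≤ X₂ s ω then g else -h)) + I₁ t ω ∧
      X₂ t ω = x₂ + (∫ s in (0:ℝ)..t, (if X₁ s ω ≤ X₂ s ω then -h else g)) + I₂ t ω

/-- `(X₁, X₂)` solves the system `dX = Σ(X) dU + G(X) dt` of (eq:xSigma), where
`Σ(x) = Σ₊ 1{x₁ > x₂} + Σ₋ 1{x₁ ≤ x₂}`. -/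
def SolvesGen (μ : Measure Ω) (F : ℝ → MeasurableSpace Ω) (g h : ℝ)
    (Sp Sm : Matrix (Fin 2) (Fin 2) ℝ) (x₁ x₂ : ℝ)
    (U₁ U₂ X₁ X₂ : ℝ → Ω → ℝ) : Prop :=
  (∀ t : ℝ, 0 ≤ t →
    MeasurableSpace.comap (fun ω => (X₁ t ω, X₂ t ω)) inferInstance ≤ F t) ∧
  (∀ᵐ ω ∂μ, Continuous (fun t => X₁ t ω) ∧ Continuous (fun t => X₂ t ω)) ∧
  ∃ I₁ I₂ : ℝ → Ω → ℝ,
    IsSI2 μ (fun s ω => if X₁ s ω ≤ X₂ s ω then Sm 0 0 else Sp 0 0) U₁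
            (fun s ω => if X₁ s ω ≤ X₂ s ω then Sm 0 1 else Sp 0 1) U₂ I₁ ∧
    IsSI2 μ (fun s ω => if X₁ s ω ≤ X₂ s ω then Sm 1 0 else Sp 1 0) U₁
            (fun s ω => if X₁ s ω ≤ X₂ s ω then Sm 1 1 else Sp 1 1) U₂ I₂ ∧
    ∀ᵐ ω ∂μ, ∀ t : ℝ, 0 ≤ t →
      X₁ t ω = x₁ + (∫ s in (0:ℝ)..t, (if X₁ s ω ≤ X₂ s ω then g else -h)) + I₁ t ω ∧
      X₂ t ω = x₂ + (∫ s in (0:ℝ)..t, (if X₁ s ω ≤ X₂ s ω then -h else g)) + I₂ t ω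


set_option linter.unusedSectionVars false
set_option linter.unusedVariables false

section Part1

section BMbasics

variable {μ : Measure Ω} {F : ℝ → MeasurableSpace Ω} {W : ℝ → Ω → ℝ}

lemma IsBM.measF (hB : IsBM μ F W) {t : ℝ} (ht : 0 ≤ t) : Measurable[F t] (W t) :=
  Measurable.of_comap_le (hB.adapted t ht)

lemma IsBM.meas (hB : IsBM μ F W) {t : ℝ} (ht : 0 ≤ t) : Measurable (W t) :=
  (hB.measF ht).mono (hB.le t) le_rfl

lemma IsBM.measFle (hB : IsBM μ F W) {s t : ℝ} (hs : 0 ≤ s) (hst : s ≤ t) :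
    Measurable[F t] (W s) := (hB.measF hs).mono (hB.mono hst) le_rfl

lemma IsBM.meas_incr (hB : IsBM μ F W) {s t : ℝ} (hs : 0 ≤ s) (hst : s ≤ t) :
    Measurable (fun ω => W t ω - W s ω) :=
  (hB.meas (hs.trans hst)).sub (hB.meas hs)

lemma IsBM.measF_incr (hB : IsBM μ F W) {s t : ℝ} (hs : 0 ≤ s) (hst : s ≤ t) :
    Measurable[F t] (fun ω => W t ω - W s ω) :=
  (hB.measF (hs.trans hst)).sub (hB.measFle hs hst)

lemma IsBM.indepFun (hB : IsBM μ F W) {s t : ℝ} (hs : 0 ≤ s) (hst : s ≤ t)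
    {E : Type*} [MeasurableSpace E] {f : Ω → E} (hf : Measurable[F s] f) :
    IndepFun f (fun ω => W t ω - W s ω) μ := by
  rw [IndepFun_iff_Indep]
  exact (indep_of_indep_of_le_right (hB.indep s t hs hst) hf.comap_le).symm

lemma IsBM.integral_mul (hB : IsBM μ F W) {s t : ℝ} (hs : 0 ≤ s) (hst : s ≤ t)
    {𝕜 : Type*} [RCLike 𝕜] {Z : Ω → 𝕜} (hZ : Measurable[F s] Z) {φ : ℝ → 𝕜} (hφ : Measurable φ) :
    ∫ ω, Z ω * φ (W t ω - W s ω) ∂μ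
      = (∫ ω, Z ω ∂μ) * ∫ x, φ x ∂(gaussianReal 0 ((t - s).toNNReal)) := by
  have h := (hB.indepFun hs hst hZ).integral_fun_comp_mul_comp (f := fun z : 𝕜 => z) (g := φ)
    (hZ.mono (hB.le s) le_rfl).aemeasurable (hB.meas_incr hs hst).aemeasurable
    measurable_id.aestronglyMeasurable hφ.aestronglyMeasurable
  rw [h, ← hB.law s t hs hst, integral_map (hB.meas_incr hs hst).aemeasurable
    hφ.aestronglyMeasurable]

lemma IsBM.memLp (hB : IsBM μ F W) {s t : ℝ} (hs : 0 ≤ s) (hst : s ≤ t) (p : NNReal) :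
    MemLp (fun ω => W t ω - W s ω) p μ := by
  have h : MemLp id p (μ.map (fun ω => W t ω - W s ω)) := by
    rw [hB.law s t hs hst]; exact memLp_id_gaussianReal p
  exact (memLp_map_measure_iff measurable_id.aestronglyMeasurable
    (hB.meas_incr hs hst).aemeasurable).1 h

lemma IsBM.integral_mul_incr (hB : IsBM μ F W) {s t : ℝ} (hs : 0 ≤ s) (hst : s ≤ t)
    {Z : Ω → ℝ} (hZ : Measurable[F s] Z) :
    ∫ ω, Z ω * (W t ω - W s ω) ∂μ = 0 := by
  have := hB.integral_mul hs hst hZ (φ := fun x => x) measurable_id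
  rw [this, integral_id_gaussianReal, mul_zero]

lemma integral_sq_gaussian (v : NNReal) : ∫ x, x ^ 2 ∂(gaussianReal 0 v) = v := by
  have h := variance_fun_id_gaussianReal (μ := 0) (v := v)
  rw [variance_eq_integral (X := fun x : ℝ => x) measurable_id.aemeasurable] at h
  simpa [integral_id_gaussianReal] using h

lemma IsBM.integral_mul_incr_sq (hB : IsBM μ F W) {s t : ℝ} (hs : 0 ≤ s) (hst : s ≤ t)
    {Z : Ω → ℝ} (hZ : Measurable[F s] Z) :
    ∫ ω, Z ω * (W t ω - W s ω) ^ 2 ∂μ = (∫ ω, Z ω ∂μ) * (t - s) := by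
  have := hB.integral_mul hs hst hZ (φ := fun x => x ^ 2) (by fun_prop)
  rw [this, integral_sq_gaussian, Real.coe_toNNReal _ (by linarith)]

lemma integral_exp_gaussian (v : NNReal) (c : ℝ) :
    ∫ x, Complex.exp ((c * x : ℝ) * Complex.I) ∂(gaussianReal 0 v)
      = Complex.exp (-((c ^ 2 * v / 2 : ℝ) : ℂ)) := by
  have h := charFun_gaussianReal (μ := 0) (v := v) c
  rw [charFun_apply_real] at h
  have h2 : ∀ x : ℝ, Complex.exp ((c * x : ℝ) * Complex.I) = Complex.exp (c * x * Complex.I) := by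
    intro x; push_cast; rfl
  simp_rw [h2, h]
  congr 1
  push_cast
  ring

/-- One step: a sign times a Brownian increment is Gaussian, independent of the past. -/
lemma IsBM.step (hB : IsBM μ F W) [IsProbabilityMeasure μ] {s t : ℝ} (hs : 0 ≤ s) (hst : s ≤ t)
    {Z : Ω → ℂ} (hZ : Measurable[F s] Z) {C : ℝ} (hZb : ∀ ω, ‖Z ω‖ ≤ C)
    {H : Ω → ℝ} (hH : Measurable[F s] H) (hH1 : ∀ ω, H ω = 1 ∨ H ω = -1) (c : ℝ) :
    ∫ ω, Z ω * Complex.exp ((c * (H ω * (W t ω - W s ω)) : ℝ) * Complex.I) ∂μ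
      = (∫ ω, Z ω ∂μ) * Complex.exp (-((c ^ 2 * (t - s) / 2 : ℝ) : ℂ)) := by
  set v := (t - s).toNNReal with hv
  have hvc : (v : ℝ) = t - s := Real.coe_toNNReal _ (by linarith)
  have hHc : Measurable[F s] (fun ω => ((H ω : ℝ) : ℂ)) := Complex.measurable_ofReal.comp hH
  have hZ1 : Measurable[F s] (fun ω => Z ω * ((1 + H ω) / 2)) :=
    hZ.mul ((measurable_const.add hHc).div measurable_const)
  have hZ2 : Measurable[F s] (fun ω => Z ω * ((1 - H ω) / 2)) :=
    hZ.mul ((measurable_const.sub hHc).div measurable_const)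
  have m1 : Measurable (fun x : ℝ => Complex.exp ((c * x : ℝ) * Complex.I)) := by fun_prop
  have m2 : Measurable (fun x : ℝ => Complex.exp (((-c) * x : ℝ) * Complex.I)) := by fun_prop
  have e1 := hB.integral_mul hs hst hZ1 m1
  have e2 := hB.integral_mul hs hst hZ2 m2
  rw [integral_exp_gaussian] at e1 e2
  rw [neg_sq] at e2
  have mΔ := hB.meas_incr hs hst
  have b1 : ∀ ω, ‖Z ω * ((1 + H ω) / 2)‖ ≤ C := by
    intro ω
    rcases hH1 ω with h | h <;> simp [h]
    · norm_num; exact hZb ω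
    · exact (norm_nonneg _).trans (hZb ω)
  have b2 : ∀ ω, ‖Z ω * ((1 - H ω) / 2)‖ ≤ C := by
    intro ω
    rcases hH1 ω with h | h <;> simp [h]
    · exact (norm_nonneg _).trans (hZb ω)
    · norm_num; exact hZb ω
  have i1 : Integrable (fun ω => Z ω * ((1 + H ω) / 2)) μ :=
    Integrable.of_bound (hZ1.mono (hB.le s) le_rfl).aestronglyMeasurable C (ae_of_all _ b1)
  have i2 : Integrable (fun ω => Z ω * ((1 - H ω) / 2)) μ :=
    Integrable.of_bound (hZ2.mono (hB.le s) le_rfl).aestronglyMeasurable C (ae_of_all _ b2)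
  have j1 : Integrable (fun ω => Z ω * ((1 + H ω) / 2) *
      Complex.exp ((c * (W t ω - W s ω) : ℝ) * Complex.I)) μ := by
    refine Integrable.of_bound ((hZ1.mono (hB.le s) le_rfl).mul
      (m1.comp mΔ)).aestronglyMeasurable C (ae_of_all _ fun ω => ?_)
    rw [norm_mul, Complex.norm_exp_ofReal_mul_I, mul_one]; exact b1 ω
  have j2 : Integrable (fun ω => Z ω * ((1 - H ω) / 2) *
      Complex.exp (((-c) * (W t ω - W s ω) : ℝ) * Complex.I)) μ := by
    refine Integrable.of_bound ((hZ2.mono (hB.le s) le_rfl).mul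
      (m2.comp mΔ)).aestronglyMeasurable C (ae_of_all _ fun ω => ?_)
    rw [norm_mul, Complex.norm_exp_ofReal_mul_I, mul_one]; exact b2 ω
  have hpt : ∀ ω, Z ω * Complex.exp ((c * (H ω * (W t ω - W s ω)) : ℝ) * Complex.I)
      = Z ω * ((1 + H ω) / 2) * Complex.exp ((c * (W t ω - W s ω) : ℝ) * Complex.I)
        + Z ω * ((1 - H ω) / 2) * Complex.exp (((-c) * (W t ω - W s ω) : ℝ) * Complex.I) := by
    intro ω
    rcases hH1 ω with h | h
    · simp [h]
    · simp [h]
      left; congr 1; ring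
  have hZs : ∫ ω, Z ω ∂μ = (∫ ω, Z ω * ((1 + H ω) / 2) ∂μ) + ∫ ω, Z ω * ((1 - H ω) / 2) ∂μ := by
    rw [← integral_add i1 i2]; congr 1; ext ω; ring
  simp_rw [hpt]
  rw [integral_add j1 j2, e1, e2, hZs, hvc]; ring

/-- Signed sums of Brownian increments are Gaussian, independent of the past. -/
lemma IsBM.gauss_sum (hB : IsBM μ F W) [IsProbabilityMeasure μ] {a : ℕ → ℝ} (ha : Monotone a)
    (ha0 : 0 ≤ a 0) {Z : Ω → ℂ} (hZ : Measurable[F (a 0)] Z) {C : ℝ} (hZb : ∀ ω, ‖Z ω‖ ≤ C)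
    {H : ℕ → Ω → ℝ} (hH : ∀ k, Measurable[F (a k)] (H k))
    (hH1 : ∀ k ω, H k ω = 1 ∨ H k ω = -1) (c : ℕ → ℝ) (N : ℕ) :
    ∫ ω, Z ω * Complex.exp
        ((∑ k ∈ Finset.range N, c k * (H k ω * (W (a (k+1)) ω - W (a k) ω)) : ℝ) * Complex.I) ∂μ
      = (∫ ω, Z ω ∂μ) *
        Complex.exp (-((∑ k ∈ Finset.range N, c k ^ 2 * (a (k+1) - a k) / 2 : ℝ) : ℂ)) := by
  have hak : ∀ k, 0 ≤ a k := fun k => ha0.trans (ha (Nat.zero_le k))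
  induction N with
  | zero => simp
  | succ N ih =>
    have hS : Measurable[F (a N)] (fun ω =>
        ∑ k ∈ Finset.range N, c k * (H k ω * (W (a (k+1)) ω - W (a k) ω))) := by
      refine Finset.measurable_sum _ fun k hk => ?_
      have hkN : k + 1 ≤ N := Finset.mem_range.1 hk
      have h1 : Measurable[F (a N)] (H k) := (hH k).mono (hB.mono (ha (by omega))) le_rfl
      have h2 : Measurable[F (a N)] (fun ω => W (a (k+1)) ω - W (a k) ω) :=
        (hB.measF_incr (hak k) (ha (Nat.le_succ k))).mono (hB.mono (ha hkN)) le_rfl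
      exact measurable_const.mul (h1.mul h2)
    have hZ' : Measurable[F (a N)] (fun ω => Z ω * Complex.exp
        ((∑ k ∈ Finset.range N, c k * (H k ω * (W (a (k+1)) ω - W (a k) ω)) : ℝ)
          * Complex.I)) := by
      have h3 : Measurable (fun x : ℝ => Complex.exp ((x : ℝ) * Complex.I)) := by fun_prop
      exact (hZ.mono (hB.mono (ha (Nat.zero_le N))) le_rfl).mul (h3.comp hS)
    have := hB.step (hak N) (ha (Nat.le_succ N)) hZ' (C := C) (fun ω => by
      rw [norm_mul, Complex.norm_exp_ofReal_mul_I, mul_one]; exact hZb ω) (hH N) (hH1 N) (c N)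
    rw [ih] at this
    rw [Finset.sum_range_succ, Complex.ofReal_add, neg_add, Complex.exp_add, ← mul_assoc, ← this]
    congr 1
    ext ω
    rw [Finset.sum_range_succ, mul_assoc, ← Complex.exp_add]
    congr 2
    push_cast
    ring

end BMbasics

end Part1

section Part2

section Isometry

variable {μ : Measure Ω} {F : ℝ → MeasurableSpace Ω} {W : ℝ → Ω → ℝ}

lemma IsBM.memLp2 (hB : IsBM μ F W) {a b : ℝ} (ha : 0 ≤ a) (hab : a ≤ b) :
    MemLp (fun ω => W b ω - W a ω) 2 μ := by
  simpa using hB.memLp ha hab 2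

lemma IsBM.integrable_mul_mul (hB : IsBM μ F W) {a b c d : ℝ}
    (ha : 0 ≤ a) (hab : a ≤ b) (hc : 0 ≤ c) (hcd : c ≤ d) {Z : Ω → ℝ} (hZ : Measurable Z)
    {C : ℝ} (hZb : ∀ ω, |Z ω| ≤ C) :
    Integrable (fun ω => Z ω * (W b ω - W a ω) * (W d ω - W c ω)) μ := by
  have h := (hB.memLp2 ha hab).integrable_mul (hB.memLp2 hc hcd)
  have h2 := h.bdd_mul (c := C) hZ.aestronglyMeasurable (ae_of_all _ hZb)
  refine h2.congr (ae_of_all _ fun ω => ?_)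
  simp [mul_assoc]

lemma IsBM.pair_aux (hB : IsBM μ F W) {a b c d : ℝ}
    (ha : 0 ≤ a) (hab : a ≤ b) (hac : a ≤ c) (hcd : c ≤ d) {Z : Ω → ℝ} (hZ : Measurable[F c] Z)
    {C : ℝ} (hZb : ∀ ω, |Z ω| ≤ C) :
    ∫ ω, Z ω * (W b ω - W a ω) * (W d ω - W c ω) ∂μ
      = (∫ ω, Z ω ∂μ) * max 0 (min b d - max a c) := by
  have hc : 0 ≤ c := ha.trans hac
  have hZm : Measurable Z := hZ.mono (hB.le c) le_rfl
  have key0 : ∫ ω, Z ω * (W c ω - W a ω) * (W d ω - W c ω) ∂μ = 0 :=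
    hB.integral_mul_incr hc hcd (hZ.mul (hB.measF_incr ha hac))
  rcases le_total b c with hbc | hbc
  · have h1 : ∫ ω, Z ω * (W b ω - W a ω) * (W d ω - W c ω) ∂μ = 0 :=
      hB.integral_mul_incr hc hcd
        (hZ.mul ((hB.measF_incr ha hab).mono (hB.mono hbc) le_rfl))
    rw [h1, max_eq_right hac, max_eq_left, mul_zero]
    have := min_le_left b d
    linarith
  · rcases le_total b d with hbd | hbd
    · have i1 := hB.integrable_mul_mul ha hac hc hcd hZm hZb
      have i2 := hB.integrable_mul_mul hc hbc hc hbc hZm hZb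
      have i3 := hB.integrable_mul_mul hc hbc (hc.trans hbc) hbd hZm hZb
      have k3 : ∫ ω, Z ω * (W b ω - W c ω) * (W d ω - W b ω) ∂μ = 0 :=
        hB.integral_mul_incr (hc.trans hbc) hbd
          ((hZ.mono (hB.mono hbc) le_rfl).mul (hB.measF_incr hc hbc))
      have k2 : ∫ ω, Z ω * (W b ω - W c ω) * (W b ω - W c ω) ∂μ = (∫ ω, Z ω ∂μ) * (b - c) := by
        rw [← hB.integral_mul_incr_sq hc hbc hZ]; congr 1; ext ω; ring
      have : ∀ ω, Z ω * (W b ω - W a ω) * (W d ω - W c ω) =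
          Z ω * (W c ω - W a ω) * (W d ω - W c ω) + Z ω * (W b ω - W c ω) * (W b ω - W c ω)
          + Z ω * (W b ω - W c ω) * (W d ω - W b ω) := by intro ω; ring
      simp_rw [this]
      rw [integral_add (show Integrable (fun ω => _ + _) μ from i1.add i2) i3, integral_add i1 i2, key0, k2, k3, min_eq_left hbd,
        max_eq_right hac, max_eq_right (by linarith)]
      ring
    · have i1 := hB.integrable_mul_mul ha hac hc hcd hZm hZb
      have i2 := hB.integrable_mul_mul hc hcd hc hcd hZm hZb
      have i3 := hB.integrable_mul_mul hc hcd (hc.trans hcd) hbd hZm hZb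
      have k3 : ∫ ω, Z ω * (W d ω - W c ω) * (W b ω - W d ω) ∂μ = 0 :=
        hB.integral_mul_incr (hc.trans hcd) hbd
          ((hZ.mono (hB.mono hcd) le_rfl).mul (hB.measF_incr hc hcd))
      have k2 : ∫ ω, Z ω * (W d ω - W c ω) * (W d ω - W c ω) ∂μ = (∫ ω, Z ω ∂μ) * (d - c) := by
        rw [← hB.integral_mul_incr_sq hc hcd hZ]; congr 1; ext ω; ring
      have : ∀ ω, Z ω * (W b ω - W a ω) * (W d ω - W c ω) =
          Z ω * (W c ω - W a ω) * (W d ω - W c ω) + Z ω * (W d ω - W c ω) * (W d ω - W c ω)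
          + Z ω * (W d ω - W c ω) * (W b ω - W d ω) := by intro ω; ring
      simp_rw [this]
      rw [integral_add (show Integrable (fun ω => _ + _) μ from i1.add i2) i3, integral_add i1 i2, key0, k2, k3, min_eq_right hbd,
        max_eq_right hac, max_eq_right (by linarith)]
      ring

lemma overlap (a b c d : ℝ) :
    ∫ s, (Ico a b).indicator (fun _ => (1:ℝ)) s * (Ico c d).indicator (fun _ => (1:ℝ)) s
      = max 0 (min b d - max a c) := by
  have : ∀ s, (Ico a b).indicator (fun _ => (1:ℝ)) s * (Ico c d).indicator (fun _ => (1:ℝ)) s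
      = (Ico (max a c) (min b d)).indicator (fun _ => (1:ℝ)) s := by
    intro s
    rw [← Ico_inter_Ico]
    by_cases h1 : s ∈ Ico a b <;> by_cases h2 : s ∈ Ico c d <;>
      simp only [indicator, h1, h2, mem_inter_iff, and_self, and_false, false_and, if_true,
        if_false, mul_one, mul_zero]
  simp_rw [this]
  rw [integral_indicator measurableSet_Ico]
  simp [Measure.real, max_comm, ENNReal.toReal_ofReal']

lemma IsBM.pair (hB : IsBM μ F W) {a b c d : ℝ}
    (ha : 0 ≤ a) (hab : a ≤ b) (hc : 0 ≤ c) (hcd : c ≤ d) {X Y : Ω → ℝ}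
    (hX : Measurable[F a] X) (hY : Measurable[F c] Y)
    {C D : ℝ} (hXb : ∀ ω, |X ω| ≤ C) (hYb : ∀ ω, |Y ω| ≤ D) :
    ∫ ω, (X ω * (W b ω - W a ω)) * (Y ω * (W d ω - W c ω)) ∂μ
      = (∫ ω, X ω * Y ω ∂μ) *
        ∫ s, (Ico a b).indicator (fun _ => (1:ℝ)) s * (Ico c d).indicator (fun _ => (1:ℝ)) s := by
  rw [overlap]
  have hb : ∀ ω, |X ω * Y ω| ≤ C * D := fun ω => by
    rw [abs_mul]
    exact mul_le_mul (hXb ω) (hYb ω) (abs_nonneg _) ((abs_nonneg _).trans (hXb ω))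
  rcases le_total a c with hac | hac
  · rw [← hB.pair_aux (Z := fun ω => X ω * Y ω) ha hab hac hcd ((hX.mono (hB.mono hac) le_rfl).mul hY) hb]
    congr 1; ext ω; ring
  · rw [min_comm, max_comm a c,
      ← hB.pair_aux (Z := fun ω => X ω * Y ω) hc hcd hac hab (hX.mul (hY.mono (hB.mono hac) le_rfl)) hb]
    congr 1; ext ω; ring

lemma integrable_ind (a b c d : ℝ) : Integrable
    (fun s => (Ico a b).indicator (fun _ => (1:ℝ)) s * (Ico c d).indicator (fun _ => (1:ℝ)) s) := by
  have : ∀ s, (Ico a b).indicator (fun _ => (1:ℝ)) s * (Ico c d).indicator (fun _ => (1:ℝ)) s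
      = (Ico (max a c) (min b d)).indicator (fun _ => (1:ℝ)) s := by
    intro s
    rw [← Ico_inter_Ico]
    by_cases h1 : s ∈ Ico a b <;> by_cases h2 : s ∈ Ico c d <;>
      simp only [indicator, h1, h2, mem_inter_iff, and_self, and_false, false_and, if_true,
        if_false, mul_one, mul_zero]
  simp_rw [this]
  exact (integrable_indicator_iff measurableSet_Ico).2 (by simp)

/-- Itô isometry for elementary integrands. -/
lemma IsBM.isometry (hB : IsBM μ F W) [IsProbabilityMeasure μ] {ι : Type*} (S : Finset ι)
    {a b : ι → ℝ} (ha : ∀ i, 0 ≤ a i) (hab : ∀ i, a i ≤ b i) {X : ι → Ω → ℝ}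
    (hX : ∀ i, Measurable[F (a i)] (X i)) {C : ℝ} (hXb : ∀ i ω, |X i ω| ≤ C) :
    ∫ ω, (∑ i ∈ S, X i ω * (W (b i) ω - W (a i) ω)) ^ 2 ∂μ
      = ∫ s, ∫ ω, (∑ i ∈ S, X i ω * (Ico (a i) (b i)).indicator (fun _ => (1:ℝ)) s) ^ 2 ∂μ := by
  have hXm : ∀ i, Measurable (X i) := fun i => (hX i).mono (hB.le _) le_rfl
  have hbb : ∀ i j ω, |X i ω * X j ω| ≤ C * C := fun i j ω => by
    rw [abs_mul]
    exact mul_le_mul (hXb i ω) (hXb j ω) (abs_nonneg _) ((abs_nonneg _).trans (hXb i ω))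
  have hXi : ∀ i j, Integrable (fun ω => X i ω * X j ω) μ := fun i j =>
    Integrable.of_bound ((hXm i).mul (hXm j)).aestronglyMeasurable (C * C)
      (ae_of_all _ (hbb i j))
  have l : ∀ ω, (∑ i ∈ S, X i ω * (W (b i) ω - W (a i) ω)) ^ 2 = ∑ i ∈ S, ∑ j ∈ S,
      (X i ω * (W (b i) ω - W (a i) ω)) * (X j ω * (W (b j) ω - W (a j) ω)) := fun ω => by
    rw [sq, Finset.sum_mul_sum]
  have r : ∀ s, ∫ ω, (∑ i ∈ S, X i ω * (Ico (a i) (b i)).indicator (fun _ => (1:ℝ)) s) ^ 2 ∂μ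
      = ∑ i ∈ S, ∑ j ∈ S, (∫ ω, X i ω * X j ω ∂μ) *
        ((Ico (a i) (b i)).indicator (fun _ => (1:ℝ)) s *
          (Ico (a j) (b j)).indicator (fun _ => (1:ℝ)) s) := by
    intro s
    have : ∀ ω, (∑ i ∈ S, X i ω * (Ico (a i) (b i)).indicator (fun _ => (1:ℝ)) s) ^ 2
      = ∑ i ∈ S, ∑ j ∈ S, (X i ω * X j ω) * ((Ico (a i) (b i)).indicator (fun _ => (1:ℝ)) s *
          (Ico (a j) (b j)).indicator (fun _ => (1:ℝ)) s) := fun ω => by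
      rw [sq, Finset.sum_mul_sum]
      refine Finset.sum_congr rfl fun i _ => Finset.sum_congr rfl fun j _ => by ring
    simp_rw [this]
    rw [integral_finsetSum _ fun i _ => integrable_finsetSum _ fun j _ => (hXi i j).mul_const _]
    refine Finset.sum_congr rfl fun i _ => ?_
    rw [integral_finsetSum _ fun j _ => (hXi i j).mul_const _]
    refine Finset.sum_congr rfl fun j _ => ?_
    rw [integral_mul_const]
  have iw : ∀ i j, Integrable (fun ω => (X i ω * (W (b i) ω - W (a i) ω)) *
      (X j ω * (W (b j) ω - W (a j) ω))) μ := fun i j => by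
    refine (hB.integrable_mul_mul (ha i) (hab i) (ha j) (hab j) ((hXm i).mul (hXm j))
      (hbb i j)).congr (ae_of_all _ fun ω => ?_)
    simp only [Pi.mul_apply]; ring
  simp_rw [l, r]
  rw [integral_finsetSum _ fun i _ => integrable_finsetSum _ fun j _ => iw i j,
    integral_finsetSum _ fun i _ => integrable_finsetSum _ fun j _ =>
      (integrable_ind _ _ _ _).const_mul _]
  refine Finset.sum_congr rfl fun i _ => ?_
  rw [integral_finsetSum _ fun j _ => iw i j,
    integral_finsetSum _ fun j _ => (integrable_ind _ _ _ _).const_mul _]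
  refine Finset.sum_congr rfl fun j _ => ?_
  rw [integral_const_mul, hB.pair (ha i) (hab i) (ha j) (hab j) (hX i) (hX j) (hXb i) (hXb j)]

/-- Left-point sum on the uniform grid of mesh `c`. -/
def usum (c : ℝ) (N : ℕ) (K V : ℝ → Ω → ℝ) (ω : Ω) : ℝ :=
  ∑ i ∈ Finset.range N, K (c * i) ω * (V (c * (i + 1)) ω - V (c * i) ω)

def ustep (c : ℝ) (N : ℕ) (K : ℝ → Ω → ℝ) (s : ℝ) (ω : Ω) : ℝ :=
  ∑ i ∈ Finset.range N, K (c * i) ω *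
    (Ico (c * i) (c * (i + 1))).indicator (fun _ => (1:ℝ)) s

lemma ustep_eq {c : ℝ} (hc : 0 < c) (N : ℕ) (K : ℝ → Ω → ℝ) {s : ℝ} (hs : 0 ≤ s) (ω : Ω) :
    ustep c N K s ω = if s < c * N then K (c * ⌊s / c⌋₊) ω else 0 := by
  unfold ustep
  have hmem : ∀ i : ℕ, s ∈ Ico (c * i) (c * (i + 1)) ↔ i = ⌊s / c⌋₊ := by
    intro i
    rw [eq_comm, Nat.floor_eq_iff (by positivity), mem_Ico, le_div_iff₀ hc, div_lt_iff₀ hc,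
      mul_comm c, mul_comm c]
  have : ∀ i ∈ Finset.range N, K (c * i) ω *
      (Ico (c * (i:ℝ)) (c * (i + 1))).indicator (fun _ => (1:ℝ)) s
      = if i = ⌊s / c⌋₊ then K (c * ⌊s / c⌋₊) ω else 0 := by
    intro i _
    by_cases h : i = ⌊s / c⌋₊
    · rw [indicator_of_mem ((hmem i).2 h), if_pos h, mul_one, h]
    · rw [indicator_of_notMem (fun h' => h ((hmem i).1 h')), if_neg h, mul_zero]
  rw [Finset.sum_congr rfl this, Finset.sum_ite_eq']
  congr 1
  rw [Finset.mem_range, Nat.floor_lt (by positivity), div_lt_iff₀ hc, mul_comm]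

lemma ustep_neg {c : ℝ} (hc : 0 < c) (N : ℕ) (K : ℝ → Ω → ℝ) {s : ℝ} (hs : s < 0) (ω : Ω) :
    ustep c N K s ω = 0 := by
  unfold ustep
  refine Finset.sum_eq_zero fun i _ => ?_
  rw [indicator_of_notMem, mul_zero]
  intro h
  have : 0 ≤ c * i := by positivity
  linarith [h.1]

/-- adapted and bounded -/
structure AB (F : ℝ → MeasurableSpace Ω) (C : ℝ) (K : ℝ → Ω → ℝ) : Prop where
  meas : ∀ s, 0 ≤ s → Measurable[F s] (K s)
  bdd : ∀ s ω, |K s ω| ≤ C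

lemma usum_isometry (hB : IsBM μ F W) [IsProbabilityMeasure μ] {c c' : ℝ} (hc : 0 < c)
    (hc' : 0 < c') (N N' : ℕ) {K K' : ℝ → Ω → ℝ} {C : ℝ} (hK : AB F C K) (hK' : AB F C K') :
    ∫ ω, (usum c N K W ω - usum c' N' K' W ω) ^ 2 ∂μ
      = ∫ s, ∫ ω, (ustep c N K s ω - ustep c' N' K' s ω) ^ 2 ∂μ := by
  have h := hB.isometry (ι := ℕ ⊕ ℕ) (Finset.disjSum (Finset.range N) (Finset.range N'))
    (a := Sum.elim (fun i => c * i) (fun i => c' * i))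
    (b := Sum.elim (fun i => c * (i + 1)) (fun i => c' * (i + 1)))
    (X := Sum.elim (fun i => K (c * i)) (fun i ω => - K' (c' * i) ω)) (C := C)
    (by rintro (i | i) <;> simp <;> positivity)
    (by rintro (i | i) <;> simp <;> nlinarith)
    (by
      rintro (i | i)
      · exact hK.meas _ (by positivity)
      · exact (hK'.meas _ (by positivity)).neg)
    (by
      rintro (i | i) ω
      · exact hK.bdd _ _
      · simpa using hK'.bdd _ _)
  simp only [Finset.sum_disjSum, Sum.elim_inl, Sum.elim_inr, neg_mul, Finset.sum_neg_distrib,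
    ← sub_eq_add_neg] at h
  exact h

lemma usum_meas (hB : IsBM μ F W) {c : ℝ} (hc : 0 ≤ c) (N : ℕ) {K : ℝ → Ω → ℝ} {C : ℝ}
    (hK : AB F C K) : Measurable[F (c * N)] (usum c N K W) := by
  unfold usum
  refine Finset.measurable_sum _ fun i hi => ?_
  have hi' : (i:ℝ) + 1 ≤ N := by exact_mod_cast Finset.mem_range.1 hi
  have e1 : c * (i + 1) ≤ c * N := by gcongr
  have e2 : c * i ≤ c * (i + 1) := by gcongr; linarith
  exact ((hK.meas _ (by positivity)).mono (hB.mono (e2.trans e1)) le_rfl).mul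
    ((hB.measF_incr (by positivity) e2).mono (hB.mono e1) le_rfl)

lemma usum_memLp (hB : IsBM μ F W) {c : ℝ} (hc : 0 ≤ c) (N : ℕ) {K : ℝ → Ω → ℝ} {C : ℝ}
    (hK : AB F C K) : MemLp (usum c N K W) 2 μ := by
  unfold usum
  refine memLp_finsetSum _ fun i hi => ?_
  have e2 : c * i ≤ c * (i + 1) := by gcongr; linarith
  have h := (hB.memLp2 (by positivity) e2)
  refine MemLp.of_le_mul (c := C) h (((hK.meas _ (by positivity)).mono (hB.le _) le_rfl).mul
    (hB.meas_incr (by positivity) e2)).aestronglyMeasurable (ae_of_all _ fun ω => ?_)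
  rw [norm_mul]
  exact mul_le_mul_of_nonneg_right (hK.bdd _ _) (norm_nonneg _)

lemma ustep_measω (hle : ∀ t, F t ≤ m) {c : ℝ} (hc : 0 ≤ c) (N : ℕ) {K : ℝ → Ω → ℝ} {C : ℝ}
    (hK : AB F C K) (s : ℝ) : Measurable (ustep c N K s) := by
  unfold ustep
  refine Finset.measurable_sum _ fun i hi => ?_
  exact ((hK.meas _ (by positivity)).mono (hle _) le_rfl).mul measurable_const

lemma ustep_measprod (hle : ∀ t, F t ≤ m) {c : ℝ} (hc : 0 ≤ c) (N : ℕ) {K : ℝ → Ω → ℝ} {C : ℝ}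
    (hK : AB F C K) : Measurable (fun p : ℝ × Ω => ustep c N K p.1 p.2) := by
  unfold ustep
  refine Finset.measurable_sum _ fun i hi => ?_
  have h1 : Measurable (fun p : ℝ × Ω => K (c * i) p.2) :=
    ((hK.meas _ (by positivity)).mono (hle _) le_rfl).comp measurable_snd
  have h2 : Measurable (fun s : ℝ => (Ico (c * (i:ℝ)) (c * (i + 1))).indicator
      (fun _ => (1:ℝ)) s) := measurable_const.indicator measurableSet_Ico
  exact h1.mul (h2.comp measurable_fst)

lemma L2_tendsto (hB : IsBM μ F W) [IsProbabilityMeasure μ] {ι : Type*} {l : Filter ι}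
    [l.IsCountablyGenerated] {c c' : ι → ℝ} (hc : ∀ i, 0 < c i) (hc' : ∀ i, 0 < c' i)
    {N N' : ι → ℕ} {K K' : ι → ℝ → Ω → ℝ} {C : ℝ} (hK : ∀ i, AB F C (K i))
    (hK' : ∀ i, AB F C (K' i)) {t : ℝ}
    (ht : Tendsto (fun i => c i * N i) l (nhds t)) (ht' : Tendsto (fun i => c' i * N' i) l (nhds t))
    (hp : ∀ s, 0 < s → s < t → Tendsto (fun i => ∫ ω, (K i (c i * ⌊s / c i⌋₊) ω
      - K' i (c' i * ⌊s / c' i⌋₊) ω) ^ 2 ∂μ) l (nhds 0)) :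
    Tendsto (fun i => ∫ ω, (usum (c i) (N i) (K i) W ω - usum (c' i) (N' i) (K' i) W ω) ^ 2 ∂μ)
      l (nhds 0) := by
  simp_rw [usum_isometry hB (hc _) (hc' _) _ _ (hK _) (hK' _)]
  have h0 : (0:ℝ) = ∫ s : ℝ, (0:ℝ) := by simp
  rw [h0]
  have hbd : ∀ i s ω, 0 ≤ s → |ustep (c i) (N i) (K i) s ω| ≤ C := by
    intro i s ω hs
    rw [ustep_eq (hc i) _ _ hs]
    split_ifs
    · exact (hK i).bdd _ _
    · simpa using (abs_nonneg _).trans ((hK i).bdd 0 ω)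
  have hbd' : ∀ i s ω, 0 ≤ s → |ustep (c' i) (N' i) (K' i) s ω| ≤ C := by
    intro i s ω hs
    rw [ustep_eq (hc' i) _ _ hs]
    split_ifs
    · exact (hK' i).bdd _ _
    · simpa using (abs_nonneg _).trans ((hK i).bdd 0 ω)
  refine tendsto_integral_filter_of_dominated_convergence
    ((Icc 0 (t+1)).indicator (fun _ => (2 * C) ^ 2)) ?_ ?_ ?_ ?_
  · refine Eventually.of_forall fun i => ?_
    have := (((ustep_measprod hB.le (hc i).le (N i) (hK i)).sub
      (ustep_measprod hB.le (hc' i).le (N' i) (hK' i))).pow_const 2).stronglyMeasurable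
    exact (this.integral_prod_right (ν := μ)).aestronglyMeasurable
  · have e1 := ht.eventually_lt_const (show t < t + 1 by linarith)
    have e2 := ht'.eventually_lt_const (show t < t + 1 by linarith)
    filter_upwards [e1, e2] with i h1 h2
    refine ae_of_all _ fun s => ?_
    rcases lt_or_ge s 0 with hs | hs
    · rw [indicator_of_notMem (by simp [hs])]
      simp [ustep_neg (hc i) _ _ hs, ustep_neg (hc' i) _ _ hs]
    · by_cases hs2 : s ≤ t + 1
      · rw [indicator_of_mem (show s ∈ Icc 0 (t+1) from ⟨hs, hs2⟩)]
        have : ∀ ω, ‖(ustep (c i) (N i) (K i) s ω - ustep (c' i) (N' i) (K' i) s ω) ^ 2‖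
            ≤ (2 * C) ^ 2 := by
          intro ω
          rw [norm_pow]
          have b1 := hbd i s ω hs
          have b2 := hbd' i s ω hs
          gcongr
          rw [Real.norm_eq_abs]
          rw [abs_le] at b1 b2 ⊢
          constructor <;> linarith [b1.1, b1.2, b2.1, b2.2]
        refine (norm_integral_le_of_norm_le_const (ae_of_all _ this)).trans (by simp)
      · push Not at hs2
        rw [indicator_of_notMem (by simp [hs, hs2])]
        simp [ustep_eq (hc i) _ _ hs, ustep_eq (hc' i) _ _ hs, (h1.trans hs2).not_gt,
          (h2.trans hs2).not_gt]
  · exact (integrable_indicator_iff measurableSet_Icc).2 continuous_const.integrableOn_Icc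
  · have n0 : ∀ᵐ s : ℝ, s ≠ 0 := by simp [ae_iff]
    have nt : ∀ᵐ s : ℝ, s ≠ t := by simp [ae_iff]
    filter_upwards [n0, nt] with s hs0 hst
    rcases lt_or_gt_of_ne hs0 with hs | hs
    · simp [ustep_neg (hc _) _ _ hs, ustep_neg (hc' _) _ _ hs, tendsto_const_nhds]
    · rcases lt_or_gt_of_ne hst with h | h
      · refine (hp s hs h).congr' ?_
        filter_upwards [ht.eventually_const_lt h, ht'.eventually_const_lt h] with i h1 h2
        simp [ustep_eq (hc i) _ _ hs.le, ustep_eq (hc' i) _ _ hs.le, h1, h2]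
      · refine (tendsto_const_nhds).congr' ?_
        filter_upwards [ht.eventually_lt_const h, ht'.eventually_lt_const h] with i h1 h2
        simp [ustep_eq (hc i) _ _ hs.le, ustep_eq (hc' i) _ _ hs.le, h1.not_gt, h2.not_gt]

end Isometry

end Part2

section Part3

section Conv

variable {μ : Measure Ω} {F : ℝ → MeasurableSpace Ω} {W : ℝ → Ω → ℝ}

lemma tim_iff [IsFiniteMeasure μ] {ι : Type*} {l : Filter ι} {f : ι → Ω → ℝ} {g : Ω → ℝ} :
    TendstoInMeasure μ f l g ↔
      ∀ ε, 0 < ε → Tendsto (fun i => μ.real {x | ε ≤ |f i x - g x|}) l (nhds 0) := by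
  rw [tendstoInMeasure_iff_measureReal_norm]; rfl

lemma tim_of_bound [IsFiniteMeasure μ] {ι : Type*} {l : Filter ι} {f f' f'' : ι → Ω → ℝ}
    {g g' g'' : Ω → ℝ}
    (h' : TendstoInMeasure μ f' l g') (h'' : TendstoInMeasure μ f'' l g'')
    (hb : ∀ i ω, |f i ω - g ω| ≤ |f' i ω - g' ω| + |f'' i ω - g'' ω|) :
    TendstoInMeasure μ f l g := by
  rw [tim_iff] at *
  intro ε hε
  have h := (h' (ε/2) (by positivity)).add (h'' (ε/2) (by positivity))
  rw [add_zero] at h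
  refine squeeze_zero (fun _ => measureReal_nonneg) (fun i => ?_) h
  refine (measureReal_mono ?_).trans (measureReal_union_le _ _)
  intro ω hω
  simp only [mem_ofPred_eq, mem_union] at hω ⊢
  by_contra! hc
  linarith [hb i ω]

lemma tim_add [IsFiniteMeasure μ] {ι : Type*} {l : Filter ι} {f' f'' : ι → Ω → ℝ}
    {g' g'' : Ω → ℝ}
    (h' : TendstoInMeasure μ f' l g') (h'' : TendstoInMeasure μ f'' l g'') :
    TendstoInMeasure μ (fun i ω => f' i ω + f'' i ω) l (fun ω => g' ω + g'' ω) := by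
  refine tim_of_bound h' h'' fun i ω => ?_
  refine le_trans (le_of_eq ?_) (abs_add_le _ _); congr 1; ring

lemma tim_sub [IsFiniteMeasure μ] {ι : Type*} {l : Filter ι} {f' f'' : ι → Ω → ℝ}
    {g' g'' : Ω → ℝ}
    (h' : TendstoInMeasure μ f' l g') (h'' : TendstoInMeasure μ f'' l g'') :
    TendstoInMeasure μ (fun i ω => f' i ω - f'' i ω) l (fun ω => g' ω - g'' ω) := by
  refine tim_of_bound h' h'' fun i ω => ?_
  rw [← abs_neg (f'' i ω - g'' ω)]
  refine le_trans (le_of_eq ?_) (abs_add_le _ _); congr 1; ring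

lemma tim_const [IsFiniteMeasure μ] {ι : Type*} {l : Filter ι} {g : Ω → ℝ} :
    TendstoInMeasure μ (fun _ : ι => g) l g := by
  rw [tim_iff]; intro ε hε
  simp [hε.not_ge, tendsto_const_nhds]

lemma tim_mul_bdd [IsFiniteMeasure μ] {ι : Type*} {l : Filter ι} {f : ι → Ω → ℝ}
    {g a : Ω → ℝ} {C : ℝ} (ha : ∀ ω, |a ω| ≤ C)
    (h' : TendstoInMeasure μ f l g) :
    TendstoInMeasure μ (fun i ω => a ω * f i ω) l (fun ω => a ω * g ω) := by
  rw [tim_iff] at *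
  intro ε hε
  refine squeeze_zero (fun _ => measureReal_nonneg) (fun i => ?_) (h' (ε / (|C| + 1)) (by positivity))
  refine measureReal_mono ?_
  intro ω hω
  simp only [mem_ofPred_eq] at hω ⊢
  rw [← mul_sub, abs_mul] at hω
  rw [div_le_iff₀ (by positivity)]
  have := ha ω
  nlinarith [le_abs_self C, abs_nonneg (f i ω - g ω)]

lemma tim_sum [IsFiniteMeasure μ] {ι κ : Type*} {l : Filter ι} (S : Finset κ) {f : κ → ι → Ω → ℝ}
    {g : κ → Ω → ℝ} (h' : ∀ k ∈ S, TendstoInMeasure μ (f k) l (g k)) :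
    TendstoInMeasure μ (fun i ω => ∑ k ∈ S, f k i ω) l (fun ω => ∑ k ∈ S, g k ω) := by
  classical
  induction S using Finset.induction_on with
  | empty => simpa using tim_const (μ := μ) (l := l) (g := fun _ => (0:ℝ))
  | insert a S ha ih =>
    simp only [Finset.sum_insert ha]
    exact tim_add (h' a (by simp)) (ih fun k hk => h' k (by simp [hk]))

lemma tim_of_sub [IsFiniteMeasure μ] {ι : Type*} {l : Filter ι} {f f' : ι → Ω → ℝ}
    {g : Ω → ℝ} (h : TendstoInMeasure μ (fun i ω => f i ω - f' i ω) l (fun _ => 0))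
    (h' : TendstoInMeasure μ f' l g) : TendstoInMeasure μ f l g := by
  simpa using tim_add h h'

lemma tim_of_sub' [IsFiniteMeasure μ] {ι : Type*} {l : Filter ι} {f f' : ι → Ω → ℝ}
    {g : Ω → ℝ} (h : TendstoInMeasure μ (fun i ω => f' i ω - f i ω) l (fun _ => 0))
    (h' : TendstoInMeasure μ f' l g) : TendstoInMeasure μ f l g := by
  simpa using tim_sub h' h

lemma tim_of_ae [IsFiniteMeasure μ] {ι : Type*} {l : Filter ι} [l.IsCountablyGenerated]
    {f : ι → Ω → ℝ} {g : Ω → ℝ} (hm : ∀ i, AEMeasurable (f i) μ) (hg : AEMeasurable g μ)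
    (h : ∀ᵐ ω ∂μ, Tendsto (fun i => f i ω) l (nhds (g ω))) : TendstoInMeasure μ f l g := by
  rw [tim_iff]
  intro ε hε
  rw [tendsto_iff_seq_tendsto]
  intro u hu
  have := tendstoInMeasure_of_tendsto_ae (μ := μ) (f := fun n => f (u n)) (g := g)
    (fun n => (hm _).aestronglyMeasurable)
    (h.mono fun ω hω => hω.comp hu)
  rw [tim_iff] at this
  exact this ε hε

lemma tim_of_sq [IsFiniteMeasure μ] {ι : Type*} {l : Filter ι} {f : ι → Ω → ℝ}
    (hm : ∀ i, MemLp (f i) 2 μ) (h : Tendsto (fun i => ∫ ω, (f i ω) ^ 2 ∂μ) l (nhds 0)) :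
    TendstoInMeasure μ f l (fun _ => 0) := by
  rw [tim_iff]
  intro ε hε
  have h2 := h.const_mul ((ε ^ 2)⁻¹)
  rw [mul_zero] at h2
  refine squeeze_zero (fun _ => measureReal_nonneg) (fun i => ?_) h2
  have h3 := mul_meas_ge_le_integral_of_nonneg (μ := μ) (f := fun ω => (f i ω) ^ 2)
    (ae_of_all _ fun ω => sq_nonneg _) (hm i).integrable_sq (ε ^ 2)
  have h4 : {x | ε ≤ |f i x - 0|} = {x | ε ^ 2 ≤ (f i x) ^ 2} := by
    ext x
    simp only [mem_ofPred_eq, sub_zero]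
    rw [← sq_abs (f i x)]
    exact (pow_le_pow_iff_left₀ hε.le (abs_nonneg _) two_ne_zero).symm
  rw [h4, inv_mul_eq_div, le_div_iff₀ (by positivity), mul_comm]
  exact h3

/-- a.s. continuity at every fixed positive time -/
def CA (μ : Measure Ω) (K : ℝ → Ω → ℝ) : Prop :=
  ∀ s, 0 < s → ∀ᵐ ω ∂μ, ContinuousAt (fun r => K r ω) s

lemma sq_tendsto [IsFiniteMeasure μ] {ι : Type*} {l : Filter ι} [l.IsCountablyGenerated]
    {X : ι → Ω → ℝ} (hm : ∀ i, Measurable (X i)) {C : ℝ} (hb : ∀ i ω, |X i ω| ≤ C)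
    (h : ∀ᵐ ω ∂μ, Tendsto (fun i => X i ω) l (nhds 0)) :
    Tendsto (fun i => ∫ ω, (X i ω) ^ 2 ∂μ) l (nhds 0) := by
  have h0 : (0:ℝ) = ∫ ω, (0:ℝ) ∂μ := by simp
  rw [h0]
  refine tendsto_integral_filter_of_dominated_convergence (fun _ => C ^ 2) ?_ ?_ ?_ ?_
  · exact Eventually.of_forall fun i => ((hm i).pow_const 2).aestronglyMeasurable
  · refine Eventually.of_forall fun i => ae_of_all _ fun ω => ?_
    rw [norm_pow]
    exact pow_le_pow_left₀ (norm_nonneg _) (hb i ω) 2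
  · exact integrable_const _
  · filter_upwards [h] with ω hω
    simpa using hω.pow 2

lemma usum_tendsto (hB : IsBM μ F W) [IsProbabilityMeasure μ] {ι : Type*} {l : Filter ι}
    [l.IsCountablyGenerated] {c c' : ι → ℝ} (hc : ∀ i, 0 < c i) (hc' : ∀ i, 0 < c' i)
    {N N' : ι → ℕ} {K K' : ι → ℝ → Ω → ℝ} {C : ℝ} (hK : ∀ i, AB F C (K i))
    (hK' : ∀ i, AB F C (K' i)) {t : ℝ}
    (ht : Tendsto (fun i => c i * N i) l (nhds t)) (ht' : Tendsto (fun i => c' i * N' i) l (nhds t))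
    (hp : ∀ s, 0 < s → s < t → ∀ᵐ ω ∂μ, Tendsto (fun i => K i (c i * ⌊s / c i⌋₊) ω
      - K' i (c' i * ⌊s / c' i⌋₊) ω) l (nhds 0)) :
    Tendsto (fun i => ∫ ω, (usum (c i) (N i) (K i) W ω - usum (c' i) (N' i) (K' i) W ω) ^ 2 ∂μ)
      l (nhds 0) ∧
    TendstoInMeasure μ (fun i ω => usum (c i) (N i) (K i) W ω - usum (c' i) (N' i) (K' i) W ω)
      l (fun _ => 0) := by
  have hmain : Tendsto (fun i => ∫ ω, (usum (c i) (N i) (K i) W ω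
      - usum (c' i) (N' i) (K' i) W ω) ^ 2 ∂μ) l (nhds 0) := by
    refine L2_tendsto hB hc hc' hK hK' ht ht' fun s hs hst => ?_
    refine sq_tendsto (C := C + C) (fun i => ?_) (fun i ω => ?_) (hp s hs hst)
    · have h0 := (hc i).le
      have h0' := (hc' i).le
      exact (((hK i).meas _ (by positivity)).mono (hB.le _) le_rfl).sub
        (((hK' i).meas _ (by positivity)).mono (hB.le _) le_rfl)
    · have b1 := (hK i).bdd (c i * ⌊s / c i⌋₊) ω
      have b2 := (hK' i).bdd (c' i * ⌊s / c' i⌋₊) ω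
      rw [abs_le] at b1 b2 ⊢
      constructor <;> linarith [b1.1, b1.2, b2.1, b2.2]
  exact ⟨hmain, tim_of_sq (fun i => (usum_memLp hB (hc i).le _ (hK i)).sub
    (usum_memLp hB (hc' i).le _ (hK' i))) hmain⟩

lemma floor_tendsto {ι : Type*} {l : Filter ι} {c : ι → ℝ} (hc : ∀ i, 0 < c i)
    (h : Tendsto c l (nhds 0)) {s : ℝ} (hs : 0 ≤ s) :
    Tendsto (fun i => c i * (⌊s / c i⌋₊ : ℝ)) l (nhds s) := by
  have h1 : Tendsto (fun i => s - c i) l (nhds s) := by simpa using tendsto_const_nhds.sub h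
  refine tendsto_of_tendsto_of_tendsto_of_le_of_le h1 tendsto_const_nhds (fun i => ?_) fun i => ?_
  · have := Nat.lt_floor_add_one (s / c i)
    rw [div_lt_iff₀ (hc i)] at this
    simp only; nlinarith
  · have := Nat.floor_le (div_nonneg hs (hc i).le)
    rw [le_div_iff₀ (hc i)] at this
    simp only; linarith

/-- dyadic mesh -/
def dm (n : ℕ) : ℝ := ((2:ℝ) ^ n)⁻¹

lemma dm_pos (n : ℕ) : 0 < dm n := by unfold dm; positivity

lemma dm_tendsto : Tendsto dm atTop (nhds 0) := by
  have := tendsto_pow_atTop_nhds_zero_of_lt_one (r := (1/2:ℝ)) (by norm_num) (by norm_num)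
  refine this.congr fun n => ?_
  simp [dm]

lemma rsum_eq (H X : ℝ → Ω → ℝ) (t : ℝ) (n : ℕ) :
    rsum H X t n = usum (t * dm n) (2 ^ n) H X := by
  ext ω
  unfold rsum usum dm
  refine Finset.sum_congr rfl fun i _ => ?_
  have e1 : t * (i:ℝ) / 2 ^ n = t * ((2:ℝ) ^ n)⁻¹ * i := by field_simp
  have e2 : t * ((i:ℝ) + 1) / 2 ^ n = t * ((2:ℝ) ^ n)⁻¹ * (i + 1) := by field_simp
  rw [e1, e2]

/-- left-point sum over the global dyadic grid -/
def gs (H X : ℝ → Ω → ℝ) (t : ℝ) (n : ℕ) (ω : Ω) : ℝ := usum (dm n) ⌊t / dm n⌋₊ H X ω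

lemma rsum_zero (H X : ℝ → Ω → ℝ) (n : ℕ) (ω : Ω) : rsum H X 0 n ω = 0 := by
  simp [rsum]

lemma gs_zero (H X : ℝ → Ω → ℝ) (n : ℕ) (ω : Ω) : gs H X 0 n ω = 0 := by
  simp [gs, usum]

lemma rsum_sub_gs (hB : IsBM μ F W) [IsProbabilityMeasure μ] {K : ℝ → Ω → ℝ} {C : ℝ}
    (hK : AB F C K) (hc : CA μ K) {t : ℝ} (ht : 0 ≤ t) :
    TendstoInMeasure μ (fun n ω => rsum K W t n ω - gs K W t n ω) atTop (fun _ => 0) := by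
  rcases ht.eq_or_lt with rfl | ht
  · simpa [rsum_zero, gs_zero] using tim_const (μ := μ) (l := (atTop : Filter ℕ)) (g := fun _ => (0:ℝ))
  · simp_rw [rsum_eq, gs]
    have hd : Tendsto (fun n => t * dm n) atTop (nhds 0) := by
      simpa using dm_tendsto.const_mul t
    have hdp : ∀ n, 0 < t * dm n := fun n => mul_pos ht (dm_pos n)
    refine (usum_tendsto hB (K := fun _ => K) (K' := fun _ => K) (t := t) hdp dm_pos (fun _ => hK)
      (fun _ => hK) ?_ (floor_tendsto dm_pos dm_tendsto ht.le) ?_).2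
    · refine tendsto_const_nhds.congr fun n => ?_
      simp only [dm]; push_cast; field_simp
    · intro s hs _
      filter_upwards [hc s hs] with ω hω
      have := (hω.tendsto.comp (floor_tendsto hdp hd hs.le)).sub
        (hω.tendsto.comp (floor_tendsto dm_pos dm_tendsto hs.le))
      simpa using this

lemma gs_of_rsum (hB : IsBM μ F W) [IsProbabilityMeasure μ] {K : ℝ → Ω → ℝ} {C : ℝ}
    (hK : AB F C K) (hc : CA μ K) {t : ℝ} (ht : 0 ≤ t) {Z : Ω → ℝ}
    (h : TendstoInMeasure μ (fun n => rsum K W t n) atTop Z) :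
    TendstoInMeasure μ (fun n => gs K W t n) atTop Z :=
  tim_of_sub' (rsum_sub_gs hB hK hc ht) h

lemma rsum_of_gs (hB : IsBM μ F W) [IsProbabilityMeasure μ] {K : ℝ → Ω → ℝ} {C : ℝ}
    (hK : AB F C K) (hc : CA μ K) {t : ℝ} (ht : 0 ≤ t) {Z : Ω → ℝ}
    (h : TendstoInMeasure μ (fun n => gs K W t n) atTop Z) :
    TendstoInMeasure μ (fun n => rsum K W t n) atTop Z :=
  tim_of_sub (rsum_sub_gs hB hK hc ht) h

end Conv

end Part3

section Part4

section Det

/-- drift of the difference process -/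
def bd (lam y : ℝ) : ℝ := if y ≤ 0 then lam else -lam

lemma bd_anti {lam : ℝ} (hl : 0 ≤ lam) {x y : ℝ} (h : x ≤ y) : bd lam y ≤ bd lam x := by
  unfold bd; split_ifs <;> linarith

lemma bd_abs {lam : ℝ} (hl : 0 ≤ lam) (y : ℝ) : |bd lam y| ≤ lam := by
  unfold bd; split_ifs <;> simp [abs_of_nonneg hl]

lemma bd_meas (lam : ℝ) : Measurable (bd lam) :=
  Measurable.ite measurableSet_Iic measurable_const measurable_const

lemma bd_ii {lam : ℝ} (hl : 0 ≤ lam) {u : ℝ → ℝ} (hu : Measurable u) (a b : ℝ) :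
    IntervalIntegrable (fun s => bd lam (u s)) volume a b := by
  refine (intervalIntegrable_const (c := lam)).mono_fun
    ((bd_meas lam).comp hu).aestronglyMeasurable (ae_of_all _ fun s => ?_)
  simp only [Real.norm_eq_abs, abs_of_nonneg hl]
  exact bd_abs hl _

lemma bd_lip {lam : ℝ} (hl : 0 ≤ lam) (u : ℝ → ℝ) (a b : ℝ) :
    |∫ s in a..b, bd lam (u s)| ≤ lam * |b - a| := by
  rw [← Real.norm_eq_abs (∫ s in a..b, bd lam (u s))]
  exact intervalIntegral.norm_integral_le_of_norm_le_const fun s _ => bd_abs hl _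

lemma comparison {lam : ℝ} (hl : 0 ≤ lam) {z u v ut vt : ℝ → ℝ} (hut : Measurable ut)
    (hvt : Measurable vt) {T η : ℝ} (hη : 0 ≤ η)
    (hu : ∀ t ∈ Icc 0 T, u t = z t + ∫ s in (0:ℝ)..t, bd lam (ut s))
    (hv : ∀ t ∈ Icc 0 T, v t = z t + ∫ s in (0:ℝ)..t, bd lam (vt s))
    (hun : ∀ t ∈ Icc 0 T, |ut t - u t| ≤ η) (hvn : ∀ t ∈ Icc 0 T, |vt t - v t| ≤ η) :
    ∀ t ∈ Icc 0 T, u t - v t ≤ 2 * η := by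
  intro t1 ht1
  by_contra! hcon
  set p := fun s => bd lam (ut s) - bd lam (vt s) with hp
  have hpi : ∀ a b, IntervalIntegrable p volume a b := fun a b =>
    (bd_ii hl hut a b).sub (bd_ii hl hvt a b)
  set D := fun t => ∫ s in (0:ℝ)..t, p s with hD
  have hDc : Continuous D := intervalIntegral.continuous_primitive hpi 0
  have hDe : ∀ t ∈ Icc 0 T, u t - v t = D t := by
    intro t ht
    rw [hu t ht, hv t ht, hD]
    simp only [hp]
    rw [intervalIntegral.integral_sub (bd_ii hl hut _ _) (bd_ii hl hvt _ _)]
    ring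
  rw [hDe t1 ht1] at hcon
  set S := Icc 0 t1 ∩ D ⁻¹' (Iic (2 * η)) with hS
  have hSc : IsCompact S := isCompact_Icc.inter_right (isClosed_Iic.preimage hDc)
  have hSn : S.Nonempty := ⟨0, ⟨le_rfl, ht1.1⟩, by simp [hD, hη]⟩
  obtain ⟨s0, hs0, hmax⟩ := hSc.exists_isGreatest hSn
  have hs0t : s0 ≤ t1 := hs0.1.2
  have h1 : D t1 - D s0 = ∫ s in s0..t1, p s :=
    intervalIntegral.integral_interval_sub_left (hpi _ _) (hpi _ _)
  have h2 : ∫ s in s0..t1, p s ≤ 0 := by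
    rw [intervalIntegral.integral_of_le hs0t]
    refine setIntegral_nonpos measurableSet_Ioc fun s hs => ?_
    have hsI : s ∈ Icc 0 T := ⟨hs0.1.1.trans hs.1.le, hs.2.trans ht1.2⟩
    have h3 : 2 * η < D s := by
      by_contra! h
      exact absurd (hmax ⟨⟨hsI.1, hs.2⟩, h⟩) (not_le.2 hs.1)
    rw [← hDe s hsI] at h3
    have h4 := abs_le.1 (hun s hsI)
    have h5 := abs_le.1 (hvn s hsI)
    have := bd_anti hl (show vt s ≤ ut s by linarith)
    simp only [hp]; linarith
  have h3 : D s0 ≤ 2 * η := hs0.2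
  linarith

lemma comparison_abs {lam : ℝ} (hl : 0 ≤ lam) {z u v ut vt : ℝ → ℝ} (hut : Measurable ut)
    (hvt : Measurable vt) {T η : ℝ} (hη : 0 ≤ η)
    (hu : ∀ t ∈ Icc 0 T, u t = z t + ∫ s in (0:ℝ)..t, bd lam (ut s))
    (hv : ∀ t ∈ Icc 0 T, v t = z t + ∫ s in (0:ℝ)..t, bd lam (vt s))
    (hun : ∀ t ∈ Icc 0 T, |ut t - u t| ≤ η) (hvn : ∀ t ∈ Icc 0 T, |vt t - v t| ≤ η) :
    ∀ t ∈ Icc 0 T, |u t - v t| ≤ 2 * η := by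
  intro t ht
  have h1 := comparison hl hut hvt hη hu hv hun hvn t ht
  have h2 := comparison hl hvt hut hη hv hu hvn hun t ht
  rw [abs_le]; constructor <;> linarith

/-- Euler scheme -/
def eul (lam y0 δ : ℝ) (w : ℕ → ℝ) : ℕ → ℝ
  | 0 => y0
  | k + 1 => eul lam y0 δ w k + bd lam (eul lam y0 δ w k) * δ + (w (k + 1) - w k)

lemma eul_meas {α : Type*} [MeasurableSpace α] (lam y0 δ : ℝ) {w : α → ℕ → ℝ} (K : ℕ)
    (hw : ∀ k ≤ K, Measurable (fun a => w a k)) : Measurable (fun a => eul lam y0 δ (w a) K) := by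
  induction K with
  | zero => exact measurable_const
  | succ K ih =>
    have h := ih fun k hk => hw k (by omega)
    simp only [eul]
    exact (h.add (((bd_meas lam).comp h).mul_const _)).add
      ((hw _ le_rfl).sub (hw _ (by omega)))

/-- the piecewise constant Euler path -/
def ep (lam y0 : ℝ) (w : ℝ → ℝ) (n : ℕ) (t : ℝ) : ℝ :=
  eul lam y0 (dm n) (fun k => w (dm n * k)) ⌊t / dm n⌋₊

lemma ep_meas (lam y0 : ℝ) (w : ℝ → ℝ) (n : ℕ) : Measurable (ep lam y0 w n) := by
  unfold ep
  exact (measurable_from_nat (f := eul lam y0 (dm n) fun k => w (dm n * k))).comp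
    (Nat.measurable_floor.comp (measurable_id.div_const _))

/-- interpolated Euler path -/
def ei (lam y0 : ℝ) (w : ℝ → ℝ) (n : ℕ) (t : ℝ) : ℝ :=
  (y0 + (w t - w 0)) + ∫ s in (0:ℝ)..t, bd lam (ep lam y0 w n s)

lemma ei_grid {lam : ℝ} (hl : 0 ≤ lam) (y0 : ℝ) (w : ℝ → ℝ) (n k : ℕ) :
    ei lam y0 w n (dm n * k) = eul lam y0 (dm n) (fun k => w (dm n * k)) k := by
  induction k with
  | zero => simp [ei, eul]
  | succ k ih =>
    rw [eul, ← ih]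
    unfold ei
    have hI := bd_ii hl (ep_meas lam y0 w n)
    rw [← intervalIntegral.integral_add_adjacent_intervals (hI 0 (dm n * k)) (hI _ (dm n * (k+1:ℕ)))]
    have hd := dm_pos n
    have hle : dm n * k ≤ dm n * (k + 1 : ℕ) := by push_cast; nlinarith
    have : ∫ s in (dm n * k)..(dm n * (k+1:ℕ)), bd lam (ep lam y0 w n s)
        = ∫ s in (dm n * k)..(dm n * (k+1:ℕ)),
          bd lam (eul lam y0 (dm n) (fun k => w (dm n * k)) k) := by
      rw [intervalIntegral.integral_of_le hle, intervalIntegral.integral_of_le hle,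
        ← integral_Ico_eq_integral_Ioc, ← integral_Ico_eq_integral_Ioc]
      refine setIntegral_congr_fun measurableSet_Ico fun s hs => ?_
      have : ⌊s / dm n⌋₊ = k := by
        have h0 : 0 ≤ s := le_trans (by positivity) hs.1
        rw [Nat.floor_eq_iff (by positivity), le_div_iff₀ hd, div_lt_iff₀ hd]
        have h1 := hs.1
        have h2 := hs.2
        push_cast at h2
        constructor <;> linarith
      simp only [ep, this]
    rw [this, intervalIntegral.integral_const, ← ih]
    simp only [smul_eq_mul, ei]
    push_cast; ring

lemma ep_near {lam : ℝ} (hl : 0 ≤ lam) (y0 : ℝ) {w : ℝ → ℝ} (hw : Continuous w) (T : ℝ)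
    {ε : ℝ} (hε : 0 < ε) :
    ∀ᶠ n in atTop, ∀ t ∈ Icc 0 T, |ep lam y0 w n t - ei lam y0 w n t| ≤ ε := by
  have huc : UniformContinuousOn w (Icc 0 T) :=
    isCompact_Icc.uniformContinuousOn_of_continuous hw.continuousOn
  rw [Metric.uniformContinuousOn_iff] at huc
  obtain ⟨δ, hδ, hu⟩ := huc (ε/2) (by positivity)
  have e1 := dm_tendsto.eventually_lt_const hδ
  have e2 := (dm_tendsto.const_mul lam).eventually_lt_const (show lam * 0 < ε/2 by linarith)
  filter_upwards [e1, e2] with n h1 h2 t ht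
  have hd := dm_pos n
  have hI := bd_ii hl (ep_meas lam y0 w n)
  set k := ⌊t / dm n⌋₊ with hk
  have hk1 : dm n * k ≤ t := by
    have := Nat.floor_le (div_nonneg ht.1 hd.le)
    rw [le_div_iff₀ hd] at this; linarith
  have hk2 : t < dm n * k + dm n := by
    have := Nat.lt_floor_add_one (t / dm n)
    rw [div_lt_iff₀ hd] at this; linarith
  have hk0 : 0 ≤ dm n * k := by positivity
  have h3 : ep lam y0 w n t = ei lam y0 w n (dm n * k) := by
    rw [ei_grid hl]; rfl
  have h4 : ei lam y0 w n (dm n * k) - ei lam y0 w n t = (w (dm n * k) - w t)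
      + ∫ s in t..(dm n * k), bd lam (ep lam y0 w n s) := by
    unfold ei
    rw [← intervalIntegral.integral_interval_sub_left (hI 0 _) (hI 0 t)]
    ring
  rw [h3, h4]
  have h5 : |w (dm n * k) - w t| < ε/2 := by
    have := hu (dm n * k) ⟨hk0, hk1.trans ht.2⟩ t ht
      (by rw [Real.dist_eq, abs_lt]; constructor <;> linarith)
    rwa [Real.dist_eq] at this
  have h6 := bd_lip hl (ep lam y0 w n) t (dm n * k)
  have h7 : |dm n * k - t| ≤ dm n := by rw [abs_le]; constructor <;> linarith
  have h8 : lam * |dm n * k - t| ≤ lam * dm n := by gcongr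
  refine (abs_add_le _ _).trans ?_
  linarith

lemma ep_exact {lam : ℝ} (hl : 0 ≤ lam) (y0 : ℝ) {w : ℝ → ℝ} (hw : Continuous w)
    {Y : ℝ → ℝ} (hYm : Measurable Y)
    (hY : ∀ t, 0 ≤ t → Y t = (y0 + (w t - w 0)) + ∫ s in (0:ℝ)..t, bd lam (Y s))
    {t : ℝ} (ht : 0 ≤ t) : Tendsto (fun n => ep lam y0 w n t) atTop (nhds (Y t)) := by
  rw [Metric.tendsto_atTop']
  intro ε hε
  obtain ⟨N, hN⟩ := eventually_atTop.1 (ep_near hl y0 hw t (show 0 < ε/4 by positivity))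
  refine ⟨N, fun n hn => ?_⟩
  have h1 := hN n hn.le
  have h2 := comparison_abs hl (ep_meas lam y0 w n) hYm (show 0 ≤ ε/4 by positivity) (T := t)
    (u := ei lam y0 w n) (z := fun t => y0 + (w t - w 0)) (v := Y)
    (fun s _ => rfl) (fun s hs => hY s hs.1) h1 (fun s _ => by simp; positivity) t ⟨ht, le_rfl⟩
  have h3 := h1 t ⟨ht, le_rfl⟩
  rw [Real.dist_eq]
  have := abs_sub_le (ep lam y0 w n t) (ei lam y0 w n t) (Y t)
  linarith

lemma ep_conv {lam : ℝ} (hl : 0 ≤ lam) (y0 : ℝ) {w : ℝ → ℝ} (hw : Continuous w)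
    {t : ℝ} (ht : 0 ≤ t) : ∃ L, Tendsto (fun n => ep lam y0 w n t) atTop (nhds L) := by
  refine cauchySeq_tendsto_of_complete ?_
  rw [Metric.cauchySeq_iff]
  intro ε hε
  obtain ⟨N, hN⟩ := eventually_atTop.1 (ep_near hl y0 hw t (show 0 < ε/8 by positivity))
  refine ⟨N, fun n hn k hk => ?_⟩
  have h1 := hN n hn
  have h1' := hN k hk
  have h2 := comparison_abs hl (ep_meas lam y0 w n) (ep_meas lam y0 w k)
    (show 0 ≤ ε/8 by positivity) (T := t)
    (u := ei lam y0 w n) (z := fun t => y0 + (w t - w 0)) (v := ei lam y0 w k)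
    (fun s _ => rfl) (fun s _ => rfl) h1 h1' t ⟨ht, le_rfl⟩
  have h3 := h1 t ⟨ht, le_rfl⟩
  have h4 := h1' t ⟨ht, le_rfl⟩
  rw [abs_sub_comm] at h4
  rw [Real.dist_eq]
  have := abs_sub_le (ep lam y0 w n t) (ei lam y0 w n t) (ep lam y0 w k t)
  have := abs_sub_le (ei lam y0 w n t) (ei lam y0 w k t) (ep lam y0 w k t)
  linarith

lemma ei_tendsto {lam : ℝ} (hl : 0 ≤ lam) (y0 : ℝ) {w : ℝ → ℝ} (hw : Continuous w)
    {t L : ℝ} (ht : 0 ≤ t) (h : Tendsto (fun n => ep lam y0 w n t) atTop (nhds L)) :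
    Tendsto (fun n => ei lam y0 w n t) atTop (nhds L) := by
  have : Tendsto (fun n => ep lam y0 w n t - ei lam y0 w n t) atTop (nhds 0) := by
    rw [Metric.tendsto_atTop']
    intro ε hε
    obtain ⟨N, hN⟩ := eventually_atTop.1 (ep_near hl y0 hw t (show 0 < ε/2 by positivity))
    refine ⟨N, fun n hn => ?_⟩
    have := hN n hn.le t ⟨ht, le_rfl⟩
    rw [Real.dist_eq, sub_zero]; linarith
  simpa using h.sub this

/-- limit of the Euler scheme, as a functional of the dyadic values -/
def Psi (lam y0 : ℝ) (t : ℝ) (b : ℕ × ℕ → ℝ) : ℝ :=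
  limUnder atTop (fun n => eul lam y0 (dm n) (fun k => b (n, k)) ⌊t / dm n⌋₊)

/-- dyadic values of a path -/
def dyv (w : ℝ → ℝ) (p : ℕ × ℕ) : ℝ := w (dm p.1 * p.2)

lemma Psi_meas (lam y0 t : ℝ) : Measurable (Psi lam y0 t) := by
  refine (StronglyMeasurable.limUnder (l := atTop) fun n => ?_).measurable
  exact (eul_meas lam y0 (dm n) _ fun k _ => measurable_pi_apply (n, k)).stronglyMeasurable

lemma Psi_dyv (lam y0 t : ℝ) (w : ℝ → ℝ) {L : ℝ}
    (h : Tendsto (fun n => ep lam y0 w n t) atTop (nhds L)) : Psi lam y0 t (dyv w) = L :=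
  Tendsto.limUnder_eq h

lemma Psi_tendsto {lam : ℝ} (hl : 0 ≤ lam) (y0 : ℝ) {w : ℝ → ℝ} (hw : Continuous w)
    {t : ℝ} (ht : 0 ≤ t) :
    Tendsto (fun n => ep lam y0 w n t) atTop (nhds (Psi lam y0 t (dyv w))) := by
  obtain ⟨L, hL⟩ := ep_conv hl y0 hw ht
  rwa [Psi_dyv lam y0 t w hL]

lemma Psi_exact {lam : ℝ} (hl : 0 ≤ lam) (y0 : ℝ) {w : ℝ → ℝ} (hw : Continuous w)
    {Y : ℝ → ℝ} (hYm : Measurable Y)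
    (hY : ∀ t, 0 ≤ t → Y t = (y0 + (w t - w 0)) + ∫ s in (0:ℝ)..t, bd lam (Y s))
    {t : ℝ} (ht : 0 ≤ t) : Psi lam y0 t (dyv w) = Y t :=
  Psi_dyv lam y0 t w (ep_exact hl y0 hw hYm hY ht)

lemma Psi_lip {lam : ℝ} (hl : 0 ≤ lam) (y0 : ℝ) {w : ℝ → ℝ} (hw : Continuous w)
    {s t : ℝ} (hs : 0 ≤ s) (ht : 0 ≤ t) :
    |(Psi lam y0 t (dyv w) - w t) - (Psi lam y0 s (dyv w) - w s)| ≤ lam * |t - s| := by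
  have h1 := ei_tendsto hl y0 hw ht (Psi_tendsto hl y0 hw ht)
  have h2 := ei_tendsto hl y0 hw hs (Psi_tendsto hl y0 hw hs)
  refine le_of_tendsto ((h1.sub_const (w t)).sub (h2.sub_const (w s))).abs
    (Eventually.of_forall fun n => ?_)
  have hI := bd_ii hl (ep_meas lam y0 w n)
  have := bd_lip hl (ep lam y0 w n) s t
  rw [← intervalIntegral.integral_interval_sub_left (hI 0 _) (hI 0 s)] at this
  refine le_trans (le_of_eq ?_) this
  congr 1
  unfold ei; ring

lemma bd_tendsto {lam : ℝ} {x : ℝ} (hx : x ≠ 0) : ContinuousAt (bd lam) x := by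
  rcases lt_or_gt_of_ne hx with h | h
  · have : bd lam =ᶠ[nhds x] fun _ => lam := by
      filter_upwards [gt_mem_nhds h] with y hy
      simp [bd, hy.le]
    exact continuousAt_const.congr this.symm
  · have : bd lam =ᶠ[nhds x] fun _ => -lam := by
      filter_upwards [lt_mem_nhds h] with y hy
      simp [bd, not_le.2 hy]
    exact continuousAt_const.congr this.symm

lemma Psi_solves {lam : ℝ} (hl : 0 ≤ lam) (y0 : ℝ) {w : ℝ → ℝ} (hw : Continuous w)
    (hne : ∀ᵐ s ∂(volume.restrict (Ioi (0:ℝ))), Psi lam y0 s (dyv w) ≠ 0) {t : ℝ} (ht : 0 ≤ t) :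
    Psi lam y0 t (dyv w) = (y0 + (w t - w 0)) + ∫ s in (0:ℝ)..t, bd lam (Psi lam y0 s (dyv w)) := by
  have h1 := ei_tendsto hl y0 hw ht (Psi_tendsto hl y0 hw ht)
  refine tendsto_nhds_unique h1 ?_
  refine tendsto_const_nhds.add ?_
  refine intervalIntegral.tendsto_integral_filter_of_dominated_convergence (fun _ => lam) ?_ ?_ ?_ ?_
  · exact Eventually.of_forall fun n => ((bd_meas lam).comp (ep_meas lam y0 w n)).aestronglyMeasurable
  · exact Eventually.of_forall fun n => ae_of_all _ fun s _ => bd_abs hl _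
  · exact intervalIntegrable_const
  · have hne' := (ae_restrict_iff' measurableSet_Ioi).1 hne
    filter_upwards [hne'] with s hs hst
    rw [uIoc_of_le ht] at hst
    exact (bd_tendsto (hs hst.1)).tendsto.comp (Psi_tendsto hl y0 hw hst.1.le)

end Det

end Part4

section Part5

section Zero

variable {μ : Measure Ω} {F : ℝ → MeasurableSpace Ω} {W : ℝ → Ω → ℝ}

lemma gaussian_Icc_le {v : NNReal} (hv : v ≠ 0) {r : ℝ} (hr : 0 ≤ r) (a : ℝ) :
    gaussianReal 0 v {x | |a + x| ≤ r} ≤ ENNReal.ofReal (r / √v) := by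
  have hv' : (0:ℝ) < v := by positivity
  have hset : {x : ℝ | |a + x| ≤ r} = Icc (-a - r) (-a + r) := by
    ext x
    simp only [mem_ofPred_eq, mem_Icc, abs_le]
    constructor <;> rintro ⟨h1, h2⟩ <;> constructor <;> linarith
  rw [hset, gaussianReal_apply _ hv]
  calc ∫⁻ x in Icc (-a - r) (-a + r), gaussianPDF 0 v x
      ≤ ∫⁻ x in Icc (-a - r) (-a + r), ENNReal.ofReal ((2 * √v)⁻¹) := by
        refine lintegral_mono fun x => ?_
        rw [gaussianPDF_def]
        refine ENNReal.ofReal_le_ofReal ?_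
        rw [gaussianPDFReal_def]
        have h1 : Real.exp (-(x - 0) ^ 2 / (2 * v)) ≤ 1 := by
          rw [Real.exp_le_one_iff]
          exact div_nonpos_of_nonpos_of_nonneg (by nlinarith [sq_nonneg (x - 0)]) (by positivity)
        have h2 : 2 * √v ≤ √(2 * Real.pi * v) := by
          rw [show (2:ℝ) = √4 by rw [show (4:ℝ) = 2 ^ 2 by norm_num]; simp, ← Real.sqrt_mul (by norm_num)]
          refine Real.sqrt_le_sqrt ?_
          have h3 : √(4:ℝ) = 2 := by rw [show (4:ℝ) = 2 ^ 2 by norm_num]; simp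
          rw [h3]
          nlinarith [Real.pi_gt_three]
        have h4 : 0 < 2 * √(v:ℝ) := by positivity
        calc _ ≤ (√(2 * Real.pi * v))⁻¹ * 1 := mul_le_mul_of_nonneg_left h1 (by positivity)
          _ ≤ _ := by rw [mul_one]; exact inv_anti₀ h4 h2
    _ = ENNReal.ofReal (r / √v) := by
        rw [setLIntegral_const, Real.volume_Icc, ← ENNReal.ofReal_mul (by positivity)]
        congr 1
        field_simp
        ring

lemma gauss_block (hB : IsBM μ F W) [IsProbabilityMeasure μ] {a : ℕ → ℝ} (ha : Monotone a)
    (ha0 : 0 ≤ a 0) {H : ℕ → Ω → ℝ} (hH : ∀ k, Measurable[F (a k)] (H k))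
    (hH1 : ∀ k ω, H k ω = 1 ∨ H k ω = -1) (N : ℕ) {A : Ω → ℝ} (hA : Measurable[F (a 0)] A) :
    Measurable (fun ω => ∑ k ∈ Finset.range N, H k ω * (W (a (k+1)) ω - W (a k) ω)) ∧
    μ.map (fun ω => ∑ k ∈ Finset.range N, H k ω * (W (a (k+1)) ω - W (a k) ω))
      = gaussianReal 0 (a N - a 0).toNNReal ∧
    IndepFun A (fun ω => ∑ k ∈ Finset.range N, H k ω * (W (a (k+1)) ω - W (a k) ω)) μ := by
  have hak : ∀ k, 0 ≤ a k := fun k => ha0.trans (ha (Nat.zero_le k))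
  set S := fun ω => ∑ k ∈ Finset.range N, H k ω * (W (a (k+1)) ω - W (a k) ω) with hS
  have hSm : Measurable S := by
    refine Finset.measurable_sum _ fun k _ => ?_
    exact ((hH k).mono (hB.le _) le_rfl).mul (hB.meas_incr (hak k) (ha (Nat.le_succ k)))
  have hAm : Measurable A := hA.mono (hB.le _) le_rfl
  have hsum : ∀ θ : ℝ, ∑ k ∈ Finset.range N, θ ^ 2 * (a (k+1) - a k) / 2
      = θ ^ 2 * (a N - a 0) / 2 := by
    intro θ
    rw [← Finset.sum_range_sub a N, Finset.mul_sum, Finset.sum_div]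
  have key : ∀ (Z : Ω → ℂ), Measurable[F (a 0)] Z → (∀ ω, ‖Z ω‖ ≤ 1) → ∀ θ : ℝ,
      ∫ ω, Z ω * Complex.exp (((θ * S ω : ℝ) : ℂ) * Complex.I) ∂μ
      = (∫ ω, Z ω ∂μ) * Complex.exp (-((θ ^ 2 * (a N - a 0) / 2 : ℝ) : ℂ)) := by
    intro Z hZ hZb θ
    rw [← hsum, ← hB.gauss_sum ha ha0 hZ hZb hH hH1 (fun _ => θ) N]
    congr 1; ext ω
    rw [hS, Finset.mul_sum]
  have hcS : ∀ θ : ℝ, charFun (μ.map S) θ = Complex.exp (-((θ ^ 2 * (a N - a 0) / 2 : ℝ) : ℂ)) := by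
    intro θ
    rw [charFun_apply_real, integral_map hSm.aemeasurable (by fun_prop)]
    have := key (fun _ => 1) measurable_const (by simp) θ
    simp only [one_mul, integral_const, probReal_univ, one_smul] at this
    rw [← this]
    congr 1; ext ω; push_cast; ring_nf
  refine ⟨hSm, ?_, ?_⟩
  · have : IsProbabilityMeasure (μ.map S) := Measure.isProbabilityMeasure_map hSm.aemeasurable
    refine Measure.ext_of_charFun ?_
    ext θ
    rw [hcS, charFun_gaussianReal, Real.coe_toNNReal _ (sub_nonneg.2 (ha (Nat.zero_le N)))]
    congr 1; push_cast; ring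
  · rw [indepFun_iff_charFun_prod hAm.aemeasurable hSm.aemeasurable]
    intro t
    rw [hcS]
    rw [charFun_apply, integral_map (by fun_prop) (by fun_prop), charFun_apply_real,
      integral_map hAm.aemeasurable (by fun_prop)]
    rw [← key (fun ω => Complex.exp (t.ofLp.1 * A ω * Complex.I))
      (by
        have h1 : Measurable (fun x : ℝ => Complex.exp ((t.ofLp.1:ℂ) * x * Complex.I)) := by fun_prop
        exact h1.comp hA)
      (by intro ω; rw [← Complex.ofReal_mul, Complex.norm_exp_ofReal_mul_I]) t.ofLp.2]
    congr 1; ext ω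
    rw [← Complex.exp_add]
    congr 1
    simp [WithLp.prod_inner_apply]
    ring

lemma indep_anti [IsProbabilityMeasure μ] {A S : Ω → ℝ} (hA : Measurable A) (hS : Measurable S)
    (h : IndepFun A S μ) {v : NNReal} (hv : v ≠ 0) (hl : μ.map S = gaussianReal 0 v)
    {r : ℝ} (hr : 0 ≤ r) : μ.real {ω | |A ω + S ω| ≤ r} ≤ r / √v := by
  have h1 := (indepFun_iff_map_prod_eq_prod_map_map hA.aemeasurable hS.aemeasurable).1 h
  have hms : MeasurableSet {p : ℝ × ℝ | |p.1 + p.2| ≤ r} :=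
    measurableSet_le (by fun_prop) measurable_const
  have h2 : μ {ω | |A ω + S ω| ≤ r} = (μ.map (fun ω => (A ω, S ω))) {p : ℝ × ℝ | |p.1 + p.2| ≤ r} := by
    rw [Measure.map_apply (hA.prodMk hS) hms]; rfl
  have : IsProbabilityMeasure (μ.map A) := Measure.isProbabilityMeasure_map hA.aemeasurable
  have h3 : μ {ω | |A ω + S ω| ≤ r} ≤ ENNReal.ofReal (r / √v) := by
    rw [h2, h1, hl, Measure.prod_apply hms]
    calc _ ≤ ∫⁻ x, ENNReal.ofReal (r / √v) ∂(μ.map A) :=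
          lintegral_mono fun x => gaussian_Icc_le hv hr x
      _ = _ := by simp
  exact ENNReal.toReal_le_of_le_ofReal (by positivity) h3

lemma zero_prob (hB : IsBM μ F W) [IsProbabilityMeasure μ] {H B Y : ℝ → Ω → ℝ}
    (hH : ∀ s, 0 ≤ s → Measurable[F s] (H s)) (hH1 : ∀ s ω, H s ω = 1 ∨ H s ω = -1)
    (hBt : ∀ t, 0 ≤ t → TendstoInMeasure μ (fun n => rsum H W t n) atTop (B t))
    (hY : ∀ t, 0 ≤ t → Measurable[F t] (Y t)) {lam : ℝ} (hl : 0 ≤ lam)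
    (hLip : ∀ᵐ ω ∂μ, ∀ s t, 0 ≤ s → 0 ≤ t →
      |(Y t ω - B t ω) - (Y s ω - B s ω)| ≤ lam * |t - s|)
    {t : ℝ} (ht : 0 < t) : μ {ω | Y t ω = 0} = 0 := by
  have hAB : AB F 1 H := ⟨hH, fun s ω => by rcases hH1 s ω with h | h <;> simp [h]⟩
  -- main estimate
  have main : ∀ k : ℕ, ∀ η : ℝ, 0 < η →
      μ.real {ω | Y t ω = 0} ≤ (lam * (t * dm k) + 2 * η) / √(t * dm k) := by
    intro k η hη
    set δ := t * dm k with hδ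
    have hδ0 : 0 < δ := mul_pos ht (dm_pos k)
    have hdk : dm k ≤ 1 := by
      unfold dm; exact inv_le_one_of_one_le₀ (one_le_pow₀ (by norm_num))
    have hδt : 0 ≤ t - δ := by rw [hδ]; nlinarith
    have l1 := (tim_iff.1 (hBt t ht.le)) η hη
    have l2 := (tim_iff.1 (hBt (t - δ) hδt)) η hη
    have l3 := (l1.add l2).const_add ((lam * δ + 2 * η) / √δ)
    simp only [add_zero] at l3
    refine ge_of_tendsto l3 ?_
    filter_upwards [eventually_ge_atTop k] with n hn
    obtain ⟨j, rfl⟩ := Nat.exists_eq_add_of_le hn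
    -- split
    set c := t * dm (k + j) with hc
    have hc0 : 0 < c := mul_pos ht (dm_pos _)
    have hcj : c * (2:ℝ) ^ j = δ := by
      rw [hc, hδ]; unfold dm; rw [pow_add]; field_simp
    obtain ⟨N1, hN1⟩ : ∃ N1 : ℕ, 2 ^ (k + j) = N1 + 2 ^ j := by
      refine ⟨2 ^ (k+j) - 2 ^ j, ?_⟩
      have : 2 ^ j ≤ 2 ^ (k + j) := Nat.pow_le_pow_right (by norm_num) (by omega)
      omega
    have hcN : c * N1 = t - δ := by
      have h1 : c * (2:ℝ) ^ (k + j) = t := by rw [hc]; unfold dm; field_simp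
      have h2 : ((2:ℝ) ^ (k + j)) = N1 + 2 ^ j := by exact_mod_cast hN1
      rw [h2, mul_add, hcj] at h1; linarith
    set S2 := fun ω => ∑ i ∈ Finset.range (2 ^ j), H (c * (N1 + i : ℕ)) ω *
        (W (c * (N1 + (i + 1) : ℕ)) ω - W (c * (N1 + i : ℕ)) ω) with hS2
    have hsplit : ∀ ω, rsum H W t (k + j) ω = usum c N1 H W ω + S2 ω := by
      intro ω
      rw [rsum_eq, ← hc, hN1]
      unfold usum
      rw [Finset.sum_range_add]
      congr 1
      refine Finset.sum_congr rfl fun i _ => ?_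
      push_cast; ring_nf
    have hmono : Monotone (fun i : ℕ => c * ((N1 + i : ℕ) : ℝ)) := by
      intro i i' h
      have : ((N1 + i : ℕ) : ℝ) ≤ ((N1 + i' : ℕ) : ℝ) := by exact_mod_cast Nat.add_le_add_left h _
      simp only; gcongr
    set A := fun ω => Y (t - δ) ω - rsum H W (t - δ) (k + j) ω + usum c N1 H W ω with hA
    have e0 : c * ((N1 + 0 : ℕ) : ℝ) = t - δ := by simpa using hcN
    have hAm : Measurable[F (c * ((N1 + 0 : ℕ) : ℝ))] A := by
      rw [e0]
      refine ((hY _ hδt).sub ?_).add ?_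
      · rw [rsum_eq]
        have := usum_meas hB (c := (t - δ) * dm (k + j)) (mul_nonneg hδt (dm_pos _).le)
          (2 ^ (k+j)) hAB
        convert this using 2
        unfold dm; push_cast; field_simp
      · have := usum_meas hB hc0.le N1 hAB
        rwa [hcN] at this
    obtain ⟨b1, b2, b3⟩ := gauss_block hB hmono (show 0 ≤ c * ((N1 + 0 : ℕ) : ℝ) by positivity)
      (H := fun i => H (c * ((N1 + i : ℕ) : ℝ))) (fun i => hH _ (by positivity))
      (fun i ω => hH1 _ ω) (2 ^ j) hAm
    have evar : c * ((N1 + 2 ^ j : ℕ) : ℝ) - c * ((N1 + 0 : ℕ) : ℝ) = δ := by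
      rw [e0]; push_cast; rw [mul_add, hcN, hcj]; ring
    simp only [evar] at b2
    have hv : δ.toNNReal ≠ 0 := by simpa using hδ0
    have hb := indep_anti (hAm.mono (hB.le _) le_rfl) b1 b3 hv b2
      (r := lam * δ + 2 * η) (by positivity)
    rw [Real.coe_toNNReal _ hδ0.le] at hb
    have hsub : μ.real {ω | Y t ω = 0} ≤ μ.real ({ω | |A ω + S2 ω| ≤ lam * δ + 2 * η} ∪
        ({x | η ≤ |rsum H W t (k+j) x - B t x|} ∪
          {x | η ≤ |rsum H W (t - δ) (k+j) x - B (t - δ) x|})) := by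
      refine ENNReal.toReal_mono (measure_ne_top _ _) (measure_mono_ae ?_)
      filter_upwards [hLip] with ω hω h0
      by_contra hcon
      have hcon' : ω ∉ ({ω | |A ω + S2 ω| ≤ lam * δ + 2 * η} ∪
        ({x | η ≤ |rsum H W t (k+j) x - B t x|} ∪
          {x | η ≤ |rsum H W (t - δ) (k+j) x - B (t - δ) x|})) := hcon
      have h0' : Y t ω = 0 := h0
      simp only [mem_union, mem_ofPred_eq, not_or, not_le] at hcon'
      obtain ⟨c1, c2, c3⟩ := hcon'
      have hL := hω (t - δ) t hδt ht.le
      rw [show t - (t - δ) = δ by ring, abs_of_pos hδ0, h0'] at hL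
      have : A ω + S2 ω = Y (t - δ) ω - rsum H W (t - δ) (k+j) ω + rsum H W t (k+j) ω := by
        rw [hsplit, hA]; ring
      rw [this] at c1
      rw [abs_lt] at c2 c3
      rw [abs_le] at hL
      have : |Y (t - δ) ω - rsum H W (t - δ) (k+j) ω + rsum H W t (k+j) ω| ≤ lam * δ + 2 * η := by
        rw [abs_le]; constructor <;> linarith [c2.1, c2.2, c3.1, c3.2, hL.1, hL.2]
      linarith
    refine hsub.trans ((measureReal_union_le _ _).trans ?_)
    have := measureReal_union_le (μ := μ) {x | η ≤ |rsum H W t (k+j) x - B t x|}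
          {x | η ≤ |rsum H W (t - δ) (k+j) x - B (t - δ) x|}
    linarith [hb]
  have main2 : ∀ k : ℕ, μ.real {ω | Y t ω = 0} ≤ lam * √(t * dm k) := by
    intro k
    have hδ0 : 0 < t * dm k := mul_pos ht (dm_pos k)
    have hlim : Tendsto (fun η : ℝ => (lam * (t * dm k) + 2 * η) / √(t * dm k))
        (nhdsWithin 0 (Ioi 0)) (nhds ((lam * (t * dm k) + 2 * 0) / √(t * dm k))) := by
      have : Continuous (fun η : ℝ => (lam * (t * dm k) + 2 * η) / √(t * dm k)) := by fun_prop
      exact (this.tendsto 0).mono_left nhdsWithin_le_nhds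
    have h1 := ge_of_tendsto hlim (eventually_nhdsWithin_of_forall fun η hη => main k η hη)
    rwa [mul_zero, add_zero, mul_div_assoc, Real.div_sqrt] at h1
  have hlim : Tendsto (fun k => lam * √(t * dm k)) atTop (nhds 0) := by
    have h1 : Tendsto (fun k => t * dm k) atTop (nhds 0) := by simpa using dm_tendsto.const_mul t
    simpa using (h1.sqrt).const_mul lam
  have h0 : μ.real {ω | Y t ω = 0} ≤ 0 := ge_of_tendsto' hlim main2
  have h1 := le_antisymm h0 measureReal_nonneg
  rwa [measureReal_eq_zero_iff] at h1

end Zero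

end Part5

section Part6

section Uniq

variable {μ : Measure Ω} {F : ℝ → MeasurableSpace Ω} {W : ℝ → Ω → ℝ}

lemma ae_all_of_cont {f f' : ℝ → Ω → ℝ} (hf : ∀ᵐ ω ∂μ, ContinuousOn (fun t => f t ω) (Ici 0))
    (hf' : ∀ᵐ ω ∂μ, ContinuousOn (fun t => f' t ω) (Ici 0))
    (h : ∀ t, 0 ≤ t → f t =ᵐ[μ] f' t) : ∀ᵐ ω ∂μ, ∀ t, 0 ≤ t → f t ω = f' t ω := by
  have h1 : ∀ᵐ ω ∂μ, ∀ q : ℚ, f (max (q:ℝ) 0) ω = f' (max (q:ℝ) 0) ω :=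
    ae_all_iff.2 fun q => h _ (le_max_right _ _)
  filter_upwards [hf, hf', h1] with ω c c' e t ht
  have k : Continuous (fun t : ℝ => f (max t 0) ω) :=
    c.comp_continuous (f := fun t : ℝ => max t 0) (by fun_prop)
      fun t => mem_Ici.2 (le_max_right _ _)
  have k' : Continuous (fun t : ℝ => f' (max t 0) ω) :=
    c'.comp_continuous (f := fun t : ℝ => max t 0) (by fun_prop)
      fun t => mem_Ici.2 (le_max_right _ _)
  have := Continuous.ext_on Rat.denseRange_cast k k' (by rintro _ ⟨q, rfl⟩; exact e q)
  have := congrFun this t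
  simpa [max_eq_left ht] using this

lemma ite_ii (a b : ℝ) {u v : ℝ → ℝ} (hu : Measurable u) (hv : Measurable v) (p q : ℝ) :
    IntervalIntegrable (fun s => if u s ≤ v s then a else b) volume p q := by
  refine (intervalIntegrable_const (c := |a| + |b|)).mono_fun
    (Measurable.ite (measurableSet_le hu hv) measurable_const measurable_const).aestronglyMeasurable
    (ae_of_all _ fun s => ?_)
  have h1 := abs_nonneg a
  have h2 := abs_nonneg b
  simp only [Real.norm_eq_abs]
  rw [abs_of_nonneg (add_nonneg h1 h2)]
  split_ifs <;> linarith

/-- the common part of the notion of solution -/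
structure Sys (μ : Measure Ω) (F : ℝ → MeasurableSpace Ω) (g h x₁ x₂ : ℝ)
    (X₁ X₂ I₁ I₂ : ℝ → Ω → ℝ) : Prop where
  m1 : ∀ t, 0 ≤ t → Measurable[F t] (X₁ t)
  m2 : ∀ t, 0 ≤ t → Measurable[F t] (X₂ t)
  cont : ∀ᵐ ω ∂μ, Continuous (fun t => X₁ t ω) ∧ Continuous (fun t => X₂ t ω)
  eq : ∀ᵐ ω ∂μ, ∀ t : ℝ, 0 ≤ t →
      X₁ t ω = x₁ + (∫ s in (0:ℝ)..t, (if X₁ s ω ≤ X₂ s ω then g else -h)) + I₁ t ω ∧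
      X₂ t ω = x₂ + (∫ s in (0:ℝ)..t, (if X₁ s ω ≤ X₂ s ω then -h else g)) + I₂ t ω

lemma sys_meas {X₁ X₂ : ℝ → Ω → ℝ} {t : ℝ}
    (h : MeasurableSpace.comap (fun ω => (X₁ t ω, X₂ t ω)) inferInstance ≤ F t) :
    Measurable[F t] (X₁ t) ∧ Measurable[F t] (X₂ t) := by
  have h1 : Measurable[F t] (fun ω => (X₁ t ω, X₂ t ω)) := measurable_iff_comap_le.2 h
  exact ⟨measurable_fst.comp h1, measurable_snd.comp h1⟩

lemma Solves47.sys {g h x₁ x₂ : ℝ} {X₁ X₂ : ℝ → Ω → ℝ} (H : Solves47 μ F g h x₁ x₂ W X₁ X₂) :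
    ∃ I₁ I₂ : ℝ → Ω → ℝ, Sys μ F g h x₁ x₂ X₁ X₂ I₁ I₂ ∧
    IsSI μ (fun s ω => if X₁ s ω ≤ X₂ s ω then (0:ℝ) else 1) W I₁ ∧
    IsSI μ (fun s ω => if X₁ s ω ≤ X₂ s ω then (-1:ℝ) else 0) W I₂ := by
  obtain ⟨a, b, I₁, I₂, c, d, e⟩ := H
  exact ⟨I₁, I₂, ⟨fun t ht => (sys_meas (a t ht)).1, fun t ht => (sys_meas (a t ht)).2, b, e⟩, c, d⟩

lemma Solves49.sys {g h x₁ x₂ : ℝ} {X₁ X₂ : ℝ → Ω → ℝ} (H : Solves49 μ F g h x₁ x₂ W X₁ X₂) :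
    ∃ I₁ I₂ : ℝ → Ω → ℝ, Sys μ F g h x₁ x₂ X₁ X₂ I₁ I₂ ∧
    IsSI μ (fun s ω => if X₁ s ω ≤ X₂ s ω then (0:ℝ) else 1) W I₁ ∧
    IsSI μ (fun s ω => if X₁ s ω ≤ X₂ s ω then (1:ℝ) else 0) W I₂ := by
  obtain ⟨a, b, I₁, I₂, c, d, e⟩ := H
  exact ⟨I₁, I₂, ⟨fun t ht => (sys_meas (a t ht)).1, fun t ht => (sys_meas (a t ht)).2, b, e⟩, c, d⟩

lemma Sys.diff {g h x₁ x₂ : ℝ} {X₁ X₂ I₁ I₂ : ℝ → Ω → ℝ} (S : Sys μ F g h x₁ x₂ X₁ X₂ I₁ I₂) :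
    ∀ᵐ ω ∂μ, ∀ t : ℝ, 0 ≤ t → X₁ t ω - X₂ t ω = (x₁ - x₂ + (I₁ t ω - I₂ t ω)) +
      ∫ s in (0:ℝ)..t, bd (g + h) (X₁ s ω - X₂ s ω) := by
  filter_upwards [S.cont, S.eq] with ω hc he t ht
  have i1 := ite_ii g (-h) hc.1.measurable hc.2.measurable 0 t
  have i2 := ite_ii (-h) g hc.1.measurable hc.2.measurable 0 t
  have : ∫ s in (0:ℝ)..t, bd (g + h) (X₁ s ω - X₂ s ω)
      = (∫ s in (0:ℝ)..t, (if X₁ s ω ≤ X₂ s ω then g else -h))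
        - ∫ s in (0:ℝ)..t, (if X₁ s ω ≤ X₂ s ω then -h else g) := by
    rw [← intervalIntegral.integral_sub i1 i2]
    congr 1; ext s
    unfold bd
    by_cases hs : X₁ s ω ≤ X₂ s ω
    · simp [hs]
    · simp [hs]; ring
  have h1 := (he t ht).1
  have h2 := (he t ht).2
  linarith

lemma Sys.contY {g h x₁ x₂ : ℝ} {X₁ X₂ I₁ I₂ : ℝ → Ω → ℝ} (S : Sys μ F g h x₁ x₂ X₁ X₂ I₁ I₂) :
    ∀ᵐ ω ∂μ, Continuous (fun t => X₁ t ω - X₂ t ω) := by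
  filter_upwards [S.cont] with ω h
  exact h.1.sub h.2

lemma bd_cont {lam : ℝ} (hl : 0 ≤ lam) {u : ℝ → ℝ} (hu : Measurable u) :
    Continuous fun t => ∫ s in (0:ℝ)..t, bd lam (u s) :=
  intervalIntegral.continuous_primitive (bd_ii hl hu) 0

lemma Sys.contI {g h x₁ x₂ : ℝ} (hgh : 0 ≤ g + h) {X₁ X₂ I₁ I₂ : ℝ → Ω → ℝ}
    (S : Sys μ F g h x₁ x₂ X₁ X₂ I₁ I₂) :
    ∀ᵐ ω ∂μ, ContinuousOn (fun t => I₁ t ω - I₂ t ω) (Ici 0) := by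
  filter_upwards [S.diff, S.contY] with ω hd hc
  have h1 : Continuous (fun t => X₁ t ω - X₂ t ω - (x₁ - x₂) -
      ∫ s in (0:ℝ)..t, bd (g + h) (X₁ s ω - X₂ s ω)) :=
    (hc.sub continuous_const).sub (bd_cont hgh hc.measurable)
  refine h1.continuousOn.congr fun t ht => ?_
  have := hd t ht
  simp only; linarith

lemma rsum_one (W : ℝ → Ω → ℝ) (t : ℝ) (n : ℕ) (ω : Ω) :
    rsum (fun _ _ => 1) W t n ω = W t ω - W 0 ω := by
  unfold rsum
  have := Finset.sum_range_sub (fun i : ℕ => W (t * i / 2 ^ n) ω) (2 ^ n)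
  push_cast at this
  simp only [one_mul]
  rw [this]
  congr 2
  · field_simp
  · simp

lemma solves47_Y {g h x₁ x₂ : ℝ} (hgh : 0 ≤ g + h) [IsProbabilityMeasure μ]
    {X₁ X₂ I₁ I₂ : ℝ → Ω → ℝ} (hB : IsBM μ F W)
    (S : Sys μ F g h x₁ x₂ X₁ X₂ I₁ I₂)
    (h1 : IsSI μ (fun s ω => if X₁ s ω ≤ X₂ s ω then (0:ℝ) else 1) W I₁)
    (h2 : IsSI μ (fun s ω => if X₁ s ω ≤ X₂ s ω then (-1:ℝ) else 0) W I₂) :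
    ∀ᵐ ω ∂μ, ∀ t : ℝ, 0 ≤ t → X₁ t ω - X₂ t ω = (x₁ - x₂ + (W t ω - W 0 ω)) +
      ∫ s in (0:ℝ)..t, bd (g + h) (X₁ s ω - X₂ s ω) := by
  have hI : ∀ t, 0 ≤ t → (fun ω => I₁ t ω - I₂ t ω) =ᵐ[μ] fun ω => W t ω - W 0 ω := by
    intro t ht
    have a := tim_sub (h1.2 t ht) (h2.2 t ht)
    refine tendstoInMeasure_ae_unique a ?_
    refine TendstoInMeasure.congr_left (f := fun _ ω => W t ω - W 0 ω) (fun n => ?_) tim_const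
    refine ae_of_all _ fun ω => ?_
    beta_reduce
    rw [← rsum_one W t n ω]
    unfold rsum
    rw [← Finset.sum_sub_distrib]
    refine Finset.sum_congr rfl fun i _ => ?_
    beta_reduce
    split_ifs <;> ring
  have h3 := ae_all_of_cont (f := fun t ω => I₁ t ω - I₂ t ω) (f' := fun t ω => W t ω - W 0 ω)
    (S.contI hgh) (hB.cont.mono fun ω hω => (hω.sub continuous_const).continuousOn) hI
  filter_upwards [h3, S.diff] with ω a b t ht
  rw [b t ht, ← a t ht]

lemma part2 (g h : ℝ) (hgh : 0 ≤ g + h) (x₁ x₂ : ℝ) [IsProbabilityMeasure μ]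
    {X₁ X₂ X₁' X₂' : ℝ → Ω → ℝ} (hB : IsBM μ F W)
    (H : Solves47 μ F g h x₁ x₂ W X₁ X₂) (H' : Solves47 μ F g h x₁ x₂ W X₁' X₂') :
    ∀ᵐ ω ∂μ, ∀ t : ℝ, 0 ≤ t → X₁ t ω = X₁' t ω ∧ X₂ t ω = X₂' t ω := by
  obtain ⟨I₁, I₂, S, s1, s2⟩ := H.sys
  obtain ⟨I₁', I₂', S', s1', s2'⟩ := H'.sys
  have hY := solves47_Y hgh hB S s1 s2
  have hY' := solves47_Y hgh hB S' s1' s2'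
  have hYY : ∀ᵐ ω ∂μ, ∀ t : ℝ, 0 ≤ t → X₁ t ω - X₂ t ω = X₁' t ω - X₂' t ω := by
    filter_upwards [hY, hY', S.contY, S'.contY] with ω a a' c c' t ht
    have := comparison_abs hgh (z := fun t => x₁ - x₂ + (W t ω - W 0 ω)) (η := 0) (T := t)
      c.measurable c'.measurable le_rfl (fun s hs => a s hs.1) (fun s hs => a' s hs.1)
      (by simp) (by simp) t ⟨ht, le_rfl⟩
    simp only [mul_zero] at this
    exact sub_eq_zero.1 (abs_eq_zero.1 (le_antisymm this (abs_nonneg _)))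
  have hle : ∀ᵐ ω ∂μ, ∀ t : ℝ, 0 ≤ t → (X₁ t ω ≤ X₂ t ω ↔ X₁' t ω ≤ X₂' t ω) := by
    filter_upwards [hYY] with ω a t ht
    rw [← sub_nonpos, a t ht, sub_nonpos]
  have hI : ∀ t, 0 ≤ t → I₁ t =ᵐ[μ] I₁' t := by
    intro t ht
    refine tendstoInMeasure_ae_unique (s1.2 t ht) ?_
    refine TendstoInMeasure.congr_left (fun n => ?_) (s1'.2 t ht)
    filter_upwards [hle] with ω a
    unfold rsum
    refine Finset.sum_congr rfl fun i _ => ?_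
    have := a (t * i / 2 ^ n) (by positivity)
    simp only [this]
  have hX : ∀ᵐ ω ∂μ, ∀ t, 0 ≤ t → X₁ t ω = X₁' t ω := by
    refine ae_all_of_cont (S.cont.mono fun ω h => h.1.continuousOn)
      (S'.cont.mono fun ω h => h.1.continuousOn) fun t ht => ?_
    filter_upwards [hle, hI t ht, S.eq, S'.eq] with ω a b c c'
    rw [(c t ht).1, (c' t ht).1, b]
    congr 2
    refine intervalIntegral.integral_congr fun s hs => ?_
    rw [uIcc_of_le ht] at hs
    simp only [a s hs.1]
  filter_upwards [hX, hYY] with ω a b t ht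
  refine ⟨a t ht, ?_⟩
  have := b t ht
  rw [a t ht] at this
  linarith

end Uniq

end Part6

section Part7

section ContVersion

variable {μ : Measure Ω} {F : ℝ → MeasurableSpace Ω} {W : ℝ → Ω → ℝ}

lemma tim_double [IsFiniteMeasure μ] {f : ℕ → ℕ → Ω → ℝ} {g : ℕ → Ω → ℝ}
    (h1 : ∀ n, TendstoInMeasure μ (f n) atTop (g n))
    (h2 : TendstoInMeasure μ (fun p : ℕ × ℕ => f p.1 p.2) (atTop ×ˢ atTop) (fun _ => 0)) :
    TendstoInMeasure μ g atTop (fun _ => 0) := by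
  rw [tim_iff] at *
  intro ε hε
  rw [Metric.tendsto_atTop']
  intro δ hδ
  have h3 := (h2 (ε/2) (by positivity)).eventually (gt_mem_nhds (show (0:ℝ) < δ/2 by positivity))
  rw [prod_atTop_atTop_eq, eventually_atTop] at h3
  obtain ⟨⟨N, M⟩, h3⟩ := h3
  refine ⟨N, fun n hn => ?_⟩
  have h4 := ((tim_iff.1 (h1 n)) (ε/2) (by positivity)).eventually
    (gt_mem_nhds (show (0:ℝ) < δ/2 by positivity))
  obtain ⟨p, hp, hp'⟩ := (h4.and (eventually_ge_atTop M)).exists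
  have h5 := h3 (n, p) ⟨hn.le, hp'⟩
  rw [Real.dist_eq, sub_zero, abs_of_nonneg measureReal_nonneg]
  calc μ.real {x | ε ≤ |g n x - 0|}
      ≤ μ.real ({x | ε/2 ≤ |f n p x - 0|} ∪ {x | ε/2 ≤ |f n p x - g n x|}) := by
        refine measureReal_mono fun x hx => ?_
        simp only [mem_union, mem_ofPred_eq, sub_zero] at hx ⊢
        by_contra! hcon
        have := abs_sub_abs_le_abs_sub (g n x) (f n p x)
        rw [abs_sub_comm] at this
        linarith [hcon.1, hcon.2]
    _ ≤ _ := measureReal_union_le _ _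
    _ < δ := by linarith

lemma meas_limUnder {α : Type*} {mα : MeasurableSpace α} {f : ℕ → α → ℝ}
    (h : ∀ n, Measurable (f n)) : Measurable (fun a => limUnder atTop fun n => f n a) :=
  (StronglyMeasurable.limUnder (l := atTop) fun n => (h n).stronglyMeasurable).measurable

lemma gs_measF (hB : IsBM μ F W) {H : ℝ → Ω → ℝ} {C : ℝ} (hH : AB F C H) {t : ℝ} (ht : 0 ≤ t)
    (n : ℕ) : Measurable[F t] (gs H W t n) := by
  have h := usum_meas hB (dm_pos n).le ⌊t / dm n⌋₊ hH
  refine h.mono (hB.mono ?_) le_rfl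
  have := Nat.floor_le (div_nonneg ht (dm_pos n).le)
  rw [le_div_iff₀ (dm_pos n)] at this
  linarith

lemma dm_floor_tendsto {t : ℝ} (ht : 0 ≤ t) :
    Tendsto (fun n => dm n * (⌊t / dm n⌋₊ : ℝ)) atTop (nhds t) :=
  floor_tendsto dm_pos dm_tendsto ht

lemma exists_lim (hB : IsBM μ F W) [IsProbabilityMeasure μ] {H : ℝ → Ω → ℝ} {C : ℝ}
    (hH : AB F C H) (hc : CA μ H) {t : ℝ} (ht : 0 ≤ t) :
    ∃ b : Ω → ℝ, Measurable[F t] b ∧ TendstoInMeasure μ (fun n => gs H W t n) atTop b := by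
  have hm : ∀ n, MemLp (gs H W t n) 2 μ := fun n => usum_memLp hB (dm_pos n).le _ hH
  have hL2 : Tendsto (fun p : ℕ × ℕ => ∫ ω, (gs H W t p.1 ω - gs H W t p.2 ω) ^ 2 ∂μ)
      atTop (nhds 0) := by
    have hf1 : Tendsto (fun p : ℕ × ℕ => p.1) atTop atTop := by
      rw [← prod_atTop_atTop_eq]; exact tendsto_fst
    have hf2 : Tendsto (fun p : ℕ × ℕ => p.2) atTop atTop := by
      rw [← prod_atTop_atTop_eq]; exact tendsto_snd
    refine (usum_tendsto hB (c := fun p : ℕ × ℕ => dm p.1) (c' := fun p => dm p.2)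
      (fun p => dm_pos _) (fun p => dm_pos _) (fun _ => hH) (fun _ => hH)
      ((dm_floor_tendsto ht).comp hf1) ((dm_floor_tendsto ht).comp hf2) ?_).1
    intro s hs hst
    filter_upwards [hc s hs] with ω hω
    have a := (hω.tendsto.comp (dm_floor_tendsto hs.le))
    simpa using (a.comp hf1).sub (a.comp hf2)
  have hcs : CauchySeq (fun n => (hm n).toLp (gs H W t n)) := by
    rw [Lp.cauchySeq_Lp_iff_cauchySeq_eLpNorm]
    have : ∀ p : ℕ × ℕ, eLpNorm (⇑((hm p.1).toLp (gs H W t p.1)) - ⇑((hm p.2).toLp (gs H W t p.2))) 2 μ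
        = ENNReal.ofReal ((∫ ω, (gs H W t p.1 ω - gs H W t p.2 ω) ^ 2 ∂μ) ^ (1/2:ℝ)) := by
      intro p
      have e : (⇑((hm p.1).toLp (gs H W t p.1)) - ⇑((hm p.2).toLp (gs H W t p.2)))
          =ᵐ[μ] (gs H W t p.1 - gs H W t p.2) :=
        (hm p.1).coeFn_toLp.sub (hm p.2).coeFn_toLp
      rw [eLpNorm_congr_ae e, MemLp.eLpNorm_eq_integral_rpow_norm (by norm_num) (by norm_num)
        ((hm p.1).sub (hm p.2))]
      simp
    simp_rw [this]
    have h2 := (hL2.rpow_const (p := (1/2:ℝ)) (by right; norm_num))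
    rw [Real.zero_rpow (by norm_num)] at h2
    simpa [Function.comp_def] using (ENNReal.continuous_ofReal.tendsto _).comp h2
  obtain ⟨f, hf⟩ := cauchySeq_tendsto_of_complete hcs
  have htim : TendstoInMeasure μ (fun n => gs H W t n) atTop f :=
    (tendstoInMeasure_of_tendsto_Lp hf).congr_left fun n => (hm n).coeFn_toLp
  obtain ⟨ns, hns, hae⟩ := htim.exists_seq_tendsto_ae
  refine ⟨fun ω => limUnder atTop fun i => gs H W t (ns i) ω, ?_, ?_⟩
  · exact meas_limUnder fun i => gs_measF hB hH ht (ns i)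
  · refine htim.congr_right ?_
    filter_upwards [hae] with ω hω
    exact hω.limUnder_eq.symm

lemma dm_succ (n : ℕ) : dm (n+1) * 2 = dm n := by unfold dm; rw [pow_succ]; field_simp

lemma dyadic_step {b : ℝ → ℝ} {q : ℝ} {T n : ℕ}
    (h : ∀ k < T * 2 ^ (n+1), |b (dm (n+1) * ((k:ℝ) + 1)) - b (dm (n+1) * k)| ≤ q ^ (n+1)) (hq : 0 ≤ q)
    {t : ℝ} (ht : 0 ≤ t) (htT : t < T) :
    |b (dm (n+1) * ⌊t / dm (n+1)⌋₊) - b (dm n * ⌊t / dm n⌋₊)| ≤ q ^ (n+1) := by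
  have hd := dm_succ n
  set x := t / dm n with hx
  have hp := dm_pos (n+1)
  have hxx : t / dm (n+1) = 2 * x := by rw [hx, ← hd]; field_simp
  have hx0 : 0 ≤ x := div_nonneg ht (dm_pos n).le
  have h1 := Nat.floor_le hx0
  have h2 := Nat.lt_floor_add_one x
  have hk : 2 * ⌊x⌋₊ < T * 2 ^ (n+1) := by
    have : (2 * ⌊x⌋₊ : ℝ) < T * 2 ^ (n+1) := by
      have : x * dm n < T := by rw [hx, div_mul_cancel₀ _ (dm_pos n).ne']; exact htT
      have e : x * 2 = x * dm n * 2 ^ (n+1) := by unfold dm; rw [pow_succ]; field_simp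
      have : x * dm n * 2 ^ (n+1) < T * 2 ^ (n+1) := by gcongr
      linarith
    exact_mod_cast this
  have hb : dm n * (⌊x⌋₊:ℝ) = dm (n+1) * ((2 * ⌊x⌋₊ : ℕ) : ℝ) := by
    rw [← hd]; push_cast; ring
  rw [hxx, hb]
  have : ⌊2 * x⌋₊ = 2 * ⌊x⌋₊ ∨ ⌊2 * x⌋₊ = 2 * ⌊x⌋₊ + 1 := by
    rcases lt_or_ge (2 * x) (2 * ⌊x⌋₊ + 1) with h | h
    · left; rw [Nat.floor_eq_iff (by positivity)]; push_cast; constructor <;> linarith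
    · right; rw [Nat.floor_eq_iff (by positivity)]; push_cast; constructor <;> linarith
  rcases this with e | e
  · rw [e]; simp; positivity
  · rw [e]; simpa using h _ hk

lemma dyadic_adj {b : ℝ → ℝ} {q : ℝ} {T n : ℕ}
    (h : ∀ k < T * 2 ^ n, |b (dm n * ((k:ℝ) + 1)) - b (dm n * k)| ≤ q ^ n) (hq : 0 ≤ q)
    {s t : ℝ} (hs : 0 ≤ s) (hst : s ≤ t) (hd : t - s < dm n) (htT : t < T) :
    |b (dm n * ⌊t / dm n⌋₊) - b (dm n * ⌊s / dm n⌋₊)| ≤ q ^ n := by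
  have hp := dm_pos n
  have hs0 : 0 ≤ s / dm n := by positivity
  have h1 := Nat.floor_le hs0
  have h2 := Nat.lt_floor_add_one (s / dm n)
  have ht1 : t / dm n < s / dm n + 1 := by
    rw [div_add_one hp.ne', div_lt_div_iff_of_pos_right hp]; linarith
  have ht0 : s / dm n ≤ t / dm n := by gcongr
  have hk : ⌊s / dm n⌋₊ < T * 2 ^ n := by
    have : (⌊s / dm n⌋₊ : ℝ) < T * 2 ^ n := by
      have e : s / dm n = s * 2 ^ n := by unfold dm; field_simp
      have : s * 2 ^ n < T * 2 ^ n := by gcongr; linarith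
      linarith
    exact_mod_cast this
  have : ⌊t / dm n⌋₊ = ⌊s / dm n⌋₊ ∨ ⌊t / dm n⌋₊ = ⌊s / dm n⌋₊ + 1 := by
    rcases lt_or_ge (t / dm n) (⌊s / dm n⌋₊ + 1) with h | h
    · left; rw [Nat.floor_eq_iff (by linarith)]; constructor <;> linarith
    · right; rw [Nat.floor_eq_iff (by linarith)]; push_cast; constructor <;> linarith
  rcases this with e | e
  · rw [e]; simp; positivity
  · rw [e]; simpa using h _ hk

/-- limit of the values at lower dyadic approximations -/
def dext (b : ℝ → ℝ) (t : ℝ) : ℝ :=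
  limUnder atTop fun n => b (dm n * ⌊max t 0 / dm n⌋₊)

lemma dext_close {b : ℝ → ℝ} {q : ℝ} (hq : 0 ≤ q) (hq1 : q < 1) {T N : ℕ}
    (h : ∀ n ≥ N, ∀ k < T * 2 ^ n, |b (dm n * ((k:ℝ) + 1)) - b (dm n * k)| ≤ q ^ n)
    {t : ℝ} (ht : 0 ≤ t) (htT : t < T) :
    Tendsto (fun n => b (dm n * ⌊t / dm n⌋₊)) atTop (nhds (dext b t)) ∧
    ∀ n ≥ N, |b (dm n * ⌊t / dm n⌋₊) - dext b t| ≤ q ^ n / (1 - q) := by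
  have key : ∀ n ≥ N, ∀ k, dist (b (dm (n + k) * ⌊t / dm (n + k)⌋₊))
      (b (dm (n + (k + 1)) * ⌊t / dm (n + (k+1))⌋₊)) ≤ q ^ n * q ^ k := by
    intro n hn k
    rw [dist_comm, Real.dist_eq]
    refine (dyadic_step (h (n + k + 1) (by omega)) hq ht htT).trans ?_
    rw [← pow_add]
    exact pow_le_pow_of_le_one hq hq1.le (by omega)
  have hlim : ∃ L, Tendsto (fun n => b (dm n * ⌊t / dm n⌋₊)) atTop (nhds L) := by
    obtain ⟨L, hL⟩ := cauchySeq_tendsto_of_complete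
      (cauchySeq_of_le_geometric q (q ^ N) hq1 (key N le_rfl))
    refine ⟨L, ?_⟩
    rw [← tendsto_add_atTop_iff_nat N]
    simpa only [add_comm] using hL
  have hlim' : Tendsto (fun n => b (dm n * ⌊t / dm n⌋₊)) atTop (nhds (dext b t)) := by
    obtain ⟨L, hL⟩ := hlim
    have : dext b t = L := by unfold dext; rw [max_eq_left ht]; exact hL.limUnder_eq
    rwa [this]
  refine ⟨hlim', fun n hn => ?_⟩
  have h1 : Tendsto (fun k => b (dm (n + k) * ⌊t / dm (n + k)⌋₊)) atTop (nhds (dext b t)) := by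
    have := (tendsto_add_atTop_iff_nat n).2 hlim'
    simpa only [add_comm] using this
  have := dist_le_of_le_geometric_of_tendsto₀ q (q ^ n) hq1 (key n hn) h1
  simpa [Real.dist_eq] using this

lemma dext_cont {b : ℝ → ℝ} {q : ℝ} (hq : 0 ≤ q) (hq1 : q < 1)
    (h : ∀ T : ℕ, ∃ N : ℕ, ∀ n ≥ N, ∀ k < T * 2 ^ n,
      |b (dm n * ((k:ℝ) + 1)) - b (dm n * k)| ≤ q ^ n) : Continuous (dext b) := by
  have hmax : ∀ t, dext b t = dext b (max t 0) := by intro t; simp [dext]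
  have hon : ContinuousOn (dext b) (Ici 0) := by
    intro t ht
    rw [mem_Ici] at ht
    obtain ⟨T, hT⟩ := exists_nat_gt (t + 1)
    obtain ⟨N, hN⟩ := h T
    rw [Metric.continuousWithinAt_iff]
    intro ε hε
    have hz : Tendsto (fun n => q ^ n / (1 - q) + (q ^ n + q ^ n / (1 - q))) atTop (nhds 0) := by
      have := tendsto_pow_atTop_nhds_zero_of_lt_one hq hq1
      simpa using (this.div_const (1-q)).add (this.add (this.div_const (1-q)))
    obtain ⟨n, hn, hnN⟩ := ((hz.eventually (gt_mem_nhds hε)).and (eventually_ge_atTop N)).exists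
    refine ⟨min (dm n) 1, lt_min (dm_pos n) one_pos, fun {s} hs hd => ?_⟩
    rw [mem_Ici] at hs
    rw [Real.dist_eq] at hd ⊢
    have hd1 := hd.trans_le (min_le_left _ _)
    have hd2 := hd.trans_le (min_le_right _ _)
    rw [abs_lt] at hd1 hd2
    have c1 := (dext_close hq hq1 hN hs (by linarith [hd2.2])).2 n hnN
    have c2 := (dext_close hq hq1 hN ht (by linarith)).2 n hnN
    have c3 : |b (dm n * ⌊t / dm n⌋₊) - b (dm n * ⌊s / dm n⌋₊)| ≤ q ^ n := by
      rcases le_total s t with hst | hst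
      · exact dyadic_adj (hN n hnN) hq hs hst (by linarith [hd1.1]) (by linarith)
      · rw [abs_sub_comm]
        exact dyadic_adj (hN n hnN) hq ht hst (by linarith [hd1.2]) (by linarith [hd2.2])
    rw [abs_le] at c1 c2 c3
    rw [abs_lt]
    constructor <;> linarith [c1.1, c1.2, c2.1, c2.2, c3.1, c3.2]
  have := hon.comp_continuous (f := fun t : ℝ => max t 0) (by fun_prop)
    fun t => mem_Ici.2 (le_max_right _ _)
  exact this.congr fun t => (hmax t).symm

end ContVersion

end Part7

section Part8

section ContVersion2

variable {μ : Measure Ω} {F : ℝ → MeasurableSpace Ω} {W : ℝ → Ω → ℝ}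

lemma gauss_tail [IsProbabilityMeasure μ] {S : Ω → ℝ} (hS : Measurable S) {v : NNReal}
    (hl : μ.map S = gaussianReal 0 v) {r θ : ℝ} (hθ : 0 ≤ θ) :
    μ.real {ω | r ≤ |S ω|} ≤ 2 * Real.exp (-θ * r + v * θ ^ 2 / 2) := by
  have hInt : ∀ a : ℝ, Integrable (fun ω => Real.exp (a * S ω)) μ := by
    intro a
    have := integrable_exp_mul_gaussianReal (μ := 0) (v := v) a
    rw [← hl] at this
    exact (integrable_map_measure (by fun_prop) hS.aemeasurable).1 this
  have h1 := measure_ge_le_exp_mul_mgf (X := S) (μ := μ) r hθ (hInt θ)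
  have h2 := measure_le_le_exp_mul_mgf (X := S) (μ := μ) (-r) (t := -θ) (by linarith) (hInt (-θ))
  rw [mgf_gaussianReal hl] at h1 h2
  rw [← Real.exp_add] at h1 h2
  have e1 : -θ * r + (0 * θ + v * θ ^ 2 / 2) = -θ * r + v * θ ^ 2 / 2 := by ring
  have e2 : - -θ * -r + (0 * -θ + v * (-θ) ^ 2 / 2) = -θ * r + v * θ ^ 2 / 2 := by ring
  rw [e1] at h1
  rw [e2] at h2
  calc μ.real {ω | r ≤ |S ω|} ≤ μ.real ({ω | r ≤ S ω} ∪ {ω | S ω ≤ -r}) := by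
        refine measureReal_mono fun ω hω => ?_
        simp only [mem_union, mem_ofPred_eq] at hω ⊢
        rcases le_abs'.1 hω with h | h
        · exact Or.inr h
        · exact Or.inl h
    _ ≤ _ := measureReal_union_le _ _
    _ ≤ _ := by linarith

lemma dm_mul_pow {n p : ℕ} (h : n ≤ p) : dm p * 2 ^ (p - n) = dm n := by
  unfold dm
  have : (2:ℝ) ^ p = 2 ^ n * 2 ^ (p - n) := by rw [← pow_add]; congr 1; omega
  rw [this]; field_simp

lemma dm_floor {n p : ℕ} (h : n ≤ p) (k : ℕ) : ⌊dm n * k / dm p⌋₊ = 2 ^ (p - n) * k := by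
  have : dm n * k / dm p = ((2 ^ (p - n) * k : ℕ) : ℝ) := by
    rw [← dm_mul_pow h]; have := (dm_pos p).ne'; push_cast; field_simp
  rw [this, Nat.floor_natCast]

lemma incr_law (hB : IsBM μ F W) [IsProbabilityMeasure μ] {H : ℝ → Ω → ℝ}
    (hH : ∀ s, 0 ≤ s → Measurable[F s] (H s)) (hH1 : ∀ s ω, H s ω = 1 ∨ H s ω = -1)
    {n p : ℕ} (h : n ≤ p) (k : ℕ) :
    Measurable (fun ω => gs H W (dm n * ((k:ℝ)+1)) p ω - gs H W (dm n * k) p ω) ∧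
    μ.map (fun ω => gs H W (dm n * ((k:ℝ)+1)) p ω - gs H W (dm n * k) p ω)
      = gaussianReal 0 (dm n).toNNReal := by
  have hp := dm_pos p
  have hg := gauss_block hB (a := fun j : ℕ => dm p * ((2 ^ (p - n) * k + j : ℕ):ℝ))
    (by intro i j hij; have : (i:ℝ) ≤ j := by exact_mod_cast hij
        dsimp only; gcongr) (by positivity)
    (H := fun j => H (dm p * ((2 ^ (p - n) * k + j : ℕ):ℝ))) (fun j => hH _ (by positivity))
    (fun j ω => hH1 _ ω) (2 ^ (p - n)) (A := fun _ => 0) measurable_const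
  have e : (fun ω => gs H W (dm n * ((k:ℝ)+1)) p ω - gs H W (dm n * k) p ω)
      = fun ω => ∑ j ∈ Finset.range (2 ^ (p - n)), H (dm p * ((2 ^ (p - n) * k + j : ℕ):ℝ)) ω *
        (W (dm p * ((2 ^ (p - n) * k + (j + 1) : ℕ):ℝ)) ω - W (dm p * ((2 ^ (p - n) * k + j : ℕ):ℝ)) ω) := by
    ext ω
    have h1 := dm_floor h k
    have h2 := dm_floor h (k+1)
    push_cast at h2
    unfold gs usum
    rw [h1, h2, mul_add, mul_one, Finset.sum_range_add]
    simp [add_assoc]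
  rw [e]
  refine ⟨hg.1, hg.2.1.trans ?_⟩
  congr 2
  rw [← dm_mul_pow h]
  push_cast; ring

lemma tail_lim [IsProbabilityMeasure μ] {S : ℕ → Ω → ℝ} {D : Ω → ℝ}
    (h : TendstoInMeasure μ S atTop D) {r c : ℝ} (hr : 0 < r)
    (hS : ∀ᶠ p in atTop, μ.real {ω | r / 2 ≤ |S p ω|} ≤ c) : μ.real {ω | r ≤ |D ω|} ≤ c := by
  have h1 := (tim_iff.1 h) (r/2) (by positivity)
  have h2 : Tendsto (fun p => c + μ.real {ω | r/2 ≤ |S p ω - D ω|}) atTop (nhds c) := by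
    simpa using h1.const_add c
  refine ge_of_tendsto h2 ?_
  filter_upwards [hS] with p hp
  calc μ.real {ω | r ≤ |D ω|} ≤ μ.real ({ω | r/2 ≤ |S p ω|} ∪ {ω | r/2 ≤ |S p ω - D ω|}) := by
        refine measureReal_mono fun x hx => ?_
        simp only [mem_union, mem_ofPred_eq] at hx ⊢
        by_contra! hcon
        have := abs_sub_abs_le_abs_sub (D x) (S p x)
        rw [abs_sub_comm] at this
        linarith [hcon.1, hcon.2]
    _ ≤ _ := measureReal_union_le _ _
    _ ≤ _ := by linarith

lemma exp_bound {x : ℝ} (hx : 0 < x) : Real.exp (-x) ≤ 24 / x ^ 4 := by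
  have h := Real.pow_div_factorial_le_exp x hx.le 4
  rw [Real.exp_neg, ← one_div, div_le_div_iff₀ (Real.exp_pos x) (by positivity)]
  have : ((Nat.factorial 4 : ℕ) : ℝ) = 24 := by norm_num [Nat.factorial]
  rw [this, div_le_iff₀ (by norm_num)] at h
  linarith

lemma incr_bound (hB : IsBM μ F W) [IsProbabilityMeasure μ] {H : ℝ → Ω → ℝ}
    (hH : ∀ s, 0 ≤ s → Measurable[F s] (H s)) (hH1 : ∀ s ω, H s ω = 1 ∨ H s ω = -1)
    {b : ℝ → Ω → ℝ} (hb : ∀ t, 0 ≤ t → TendstoInMeasure μ (fun n => gs H W t n) atTop (b t))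
    (n k : ℕ) :
    μ.real {ω | (9/10:ℝ) ^ n ≤ |b (dm n * ((k:ℝ)+1)) ω - b (dm n * k) ω|}
      ≤ 2 * Real.exp (1/2) * 384 * (10000/26244) ^ n := by
  have hn := dm_pos n
  refine tail_lim (tim_sub (hb _ (by positivity)) (hb _ (by positivity))) (by positivity) ?_
  filter_upwards [eventually_ge_atTop n] with p hp
  obtain ⟨m1, l1⟩ := incr_law hB hH hH1 hp k
  have h1 := gauss_tail m1 l1 (r := (9/10:ℝ)^n/2) (θ := (√2) ^ n) (by positivity)
  refine h1.trans ?_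
  have hv : ((dm n).toNNReal : ℝ) * ((√2) ^ n) ^ 2 / 2 = 1/2 := by
    rw [Real.coe_toNNReal _ hn.le, ← pow_mul, mul_comm n 2, pow_mul, Real.sq_sqrt (by norm_num)]
    unfold dm; field_simp
  rw [hv, add_comm, Real.exp_add, mul_assoc, mul_assoc]
  have h2 := exp_bound (x := (√2) ^ n * ((9/10:ℝ)^n/2)) (by positivity)
  have h3 : 24 / ((√2) ^ n * ((9/10:ℝ)^n/2)) ^ 4 = 384 * (10000/26244:ℝ) ^ n := by
    have e4 : ((√2) ^ n) ^ 4 = (4:ℝ) ^ n := by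
      rw [← pow_mul, mul_comm, pow_mul]
      congr 1
      have := Real.sq_sqrt (show (0:ℝ) ≤ 2 by norm_num)
      calc (√2) ^ 4 = ((√2)^2)^2 := by ring
        _ = 4 := by rw [this]; norm_num
    have e5 : ((9/10:ℝ)^n)^4 = (6561/10000) ^ n := by
      rw [← pow_mul, mul_comm, pow_mul]; norm_num
    have e6 : (10000/26244:ℝ) ^ n * (4 ^ n * (6561/10000) ^ n) = 1 := by
      rw [← mul_pow, ← mul_pow]; norm_num
    rw [mul_pow, div_pow, e4, e5, div_eq_iff (by positivity)]
    linear_combination (-24) * e6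
  rw [h3] at h2
  have e7 : -√2 ^ n * ((9/10:ℝ)^n/2) = -((√2) ^ n * ((9/10:ℝ)^n/2)) := by ring
  rw [e7]
  gcongr

lemma incr_ae (hB : IsBM μ F W) [IsProbabilityMeasure μ] {H : ℝ → Ω → ℝ}
    (hH : ∀ s, 0 ≤ s → Measurable[F s] (H s)) (hH1 : ∀ s ω, H s ω = 1 ∨ H s ω = -1)
    {b : ℝ → Ω → ℝ} (hb : ∀ t, 0 ≤ t → TendstoInMeasure μ (fun n => gs H W t n) atTop (b t)) :
    ∀ᵐ ω ∂μ, ∀ T : ℕ, ∃ N : ℕ, ∀ n ≥ N, ∀ k < T * 2 ^ n,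
      |b (dm n * ((k:ℝ) + 1)) ω - b (dm n * k) ω| ≤ (9/10:ℝ) ^ n := by
  rw [ae_all_iff]
  intro T
  set A : ℕ → Set Ω := fun n => ⋃ k ∈ Finset.range (T * 2 ^ n),
    {ω | (9/10:ℝ) ^ n ≤ |b (dm n * ((k:ℝ)+1)) ω - b (dm n * k) ω|} with hA
  set c : ℝ := 2 * Real.exp (1/2) * 384 with hc
  have hc0 : 0 ≤ c := by positivity
  have h1 : ∀ n, μ (A n) ≤ ENNReal.ofReal (T * c * (20000/26244) ^ n) := by
    intro n
    rw [← ofReal_measureReal (measure_ne_top _ _)]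
    refine ENNReal.ofReal_le_ofReal ?_
    refine (measureReal_biUnion_finset_le _ _).trans ?_
    refine (Finset.sum_le_sum fun k _ => incr_bound hB hH hH1 hb n k).trans ?_
    rw [Finset.sum_const, Finset.card_range, nsmul_eq_mul]
    push_cast
    refine le_of_eq ?_
    have : (20000/26244:ℝ) ^ n = 2 ^ n * (10000/26244) ^ n := by rw [← mul_pow]; norm_num
    rw [this, ← hc]; ring
  have h2 : ∑' n, μ (A n) ≠ ⊤ := by
    refine ne_top_of_le_ne_top ?_ (ENNReal.tsum_le_tsum h1)
    refine Summable.tsum_ofReal_ne_top ?_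
    exact (summable_geometric_of_lt_one (by norm_num) (by norm_num)).mul_left _
  filter_upwards [ae_eventually_notMem h2] with ω hω
  obtain ⟨N, hN⟩ := eventually_atTop.1 hω
  refine ⟨N, fun n hn k hk => ?_⟩
  have := hN n hn
  simp only [hA, mem_iUnion, not_exists, mem_ofPred_eq, not_le, Finset.mem_range] at this
  exact (this k hk).le

lemma cont_version (hB : IsBM μ F W) [IsProbabilityMeasure μ] {H : ℝ → Ω → ℝ}
    (hH : AB F 1 H) (hH1 : ∀ s ω, H s ω = 1 ∨ H s ω = -1) (hc : CA μ H) :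
    ∃ B : ℝ → Ω → ℝ, (∀ t, 0 ≤ t → Measurable[F t] (B t)) ∧
      (∀ᵐ ω ∂μ, Continuous fun t => B t ω) ∧ (∀ᵐ ω ∂μ, B 0 ω = 0) ∧
      ∀ t, 0 ≤ t → TendstoInMeasure μ (fun n => rsum H W t n) atTop (B t) := by
  have hex : ∀ t : ℝ, ∃ b : Ω → ℝ, 0 ≤ t → Measurable[F t] b ∧
      TendstoInMeasure μ (fun n => gs H W t n) atTop b := by
    intro t
    by_cases ht : 0 ≤ t
    · obtain ⟨b, hb⟩ := exists_lim hB hH hc ht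
      exact ⟨b, fun _ => hb⟩
    · exact ⟨fun _ => 0, fun h => absurd h ht⟩
  choose b hb using hex
  have hbm := fun t ht => (hb t ht).1
  have hbt := fun t ht => (hb t ht).2
  have hae := incr_ae hB hH.meas hH1 hbt
  have hTIM : ∀ t, 0 ≤ t → TendstoInMeasure μ (fun n => rsum H W t n) atTop
      (fun ω => dext (fun s => b s ω) t) := by
    intro t ht
    refine rsum_of_gs hB hH hc ht ((hbt t ht).congr_right ?_)
    have hfl : ∀ n, 0 ≤ dm n * (⌊t / dm n⌋₊:ℝ) := fun n => by have := dm_pos n; positivity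
    have hd : TendstoInMeasure μ (fun n ω => b (dm n * ⌊t / dm n⌋₊) ω - b t ω) atTop (fun _ => 0) := by
      refine tim_double (fun n => tim_sub (hbt _ (hfl n)) (hbt t ht)) ?_
      have hf1 : Tendsto (fun p : ℕ × ℕ => p.1) (atTop ×ˢ atTop) atTop := tendsto_fst
      have hf2 : Tendsto (fun p : ℕ × ℕ => p.2) (atTop ×ˢ atTop) atTop := tendsto_snd
      refine (usum_tendsto hB (c := fun p : ℕ × ℕ => dm p.2) (c' := fun p => dm p.2)
        (fun p => dm_pos _) (fun p => dm_pos _) (fun _ => hH) (fun _ => hH) (t := t)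
        ?_ ((dm_floor_tendsto ht).comp hf2) ?_).2
      · have h1 := (dm_floor_tendsto ht).comp hf1
        have h2 := h1.sub (dm_tendsto.comp hf2)
        rw [sub_zero] at h2
        refine tendsto_of_tendsto_of_tendsto_of_le_of_le h2 h1 (fun p => ?_) (fun p => ?_)
        · have := Nat.lt_floor_add_one (dm p.1 * (⌊t / dm p.1⌋₊:ℝ) / dm p.2)
          rw [div_lt_iff₀ (dm_pos _)] at this
          simp only [Function.comp]
          linarith
        · have := Nat.floor_le (div_nonneg (hfl p.1) (dm_pos p.2).le)
          rw [le_div_iff₀ (dm_pos _)] at this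
          simp only [Function.comp]
          linarith
      · intro s hs hst
        refine ae_of_all _ fun ω => ?_
        simp
    have hd' : TendstoInMeasure μ (fun n ω => b (dm n * ⌊t / dm n⌋₊) ω) atTop (b t) := by
      simpa using tim_add hd (tim_const (μ := μ) (l := (atTop : Filter ℕ)) (g := b t))
    have hd'' : TendstoInMeasure μ (fun n ω => b (dm n * ⌊t / dm n⌋₊) ω) atTop
        (fun ω => dext (fun s => b s ω) t) := by
      have hmb : ∀ n, Measurable (b (dm n * ⌊t / dm n⌋₊)) := fun n =>
        (hbm _ (hfl n)).mono (hB.le _) le_rfl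
      refine tim_of_ae (fun n => (hmb n).aemeasurable) ?_ ?_
      · refine (meas_limUnder fun n => ?_).aemeasurable
        rw [max_eq_left ht]
        exact hmb n
      · filter_upwards [hae] with ω hω
        obtain ⟨T, hT⟩ := exists_nat_gt t
        obtain ⟨N, hN⟩ := hω T
        exact (dext_close (by norm_num) (by norm_num) hN ht hT).1
    exact tendstoInMeasure_ae_unique hd' hd''
  refine ⟨fun t ω => dext (fun s => b s ω) t, fun t ht => ?_, ?_, ?_, hTIM⟩
  · refine meas_limUnder fun n => ?_
    have hfl : 0 ≤ dm n * (⌊max t 0 / dm n⌋₊:ℝ) := by have := dm_pos n; positivity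
    refine (hbm _ hfl).mono (hB.mono ?_) le_rfl
    rw [max_eq_left ht]
    have := Nat.floor_le (div_nonneg ht (dm_pos n).le)
    rw [le_div_iff₀ (dm_pos _)] at this
    linarith
  · filter_upwards [hae] with ω hω
    exact dext_cont (by norm_num) (by norm_num) hω
  · refine tendstoInMeasure_ae_unique (hTIM 0 le_rfl) ?_
    refine TendstoInMeasure.congr_left (f := fun _ _ => 0) (fun n => ?_) tim_const
    exact ae_of_all _ fun ω => (rsum_zero H W n ω).symm

end ContVersion2

end Part8

section Part9

section Exist

variable {μ : Measure Ω} {F : ℝ → MeasurableSpace Ω} {W : ℝ → Ω → ℝ}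

lemma natSA_mono {E : Type*} [MeasurableSpace E] (Ξ : ℝ → Ω → E) : Monotone (natSA Ξ) := by
  intro s t hst
  refine iSup₂_le fun r hr => ?_
  exact le_iSup₂_of_le r ⟨hr.1, hr.2.trans hst⟩ le_rfl

lemma natSA_meas (W : ℝ → Ω → ℝ) {s t : ℝ} (hs : 0 ≤ s) (hst : s ≤ t) :
    Measurable[natSA W t] (W s) := by
  refine measurable_iff_comap_le.2 ?_
  exact le_iSup₂_of_le (f := fun s (_ : s ∈ Icc (0:ℝ) t) =>
    MeasurableSpace.comap (W s) inferInstance) s ⟨hs, hst⟩ le_rfl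

lemma natSA_le_F (hB : IsBM μ F W) (t : ℝ) : natSA W t ≤ F t :=
  iSup₂_le fun s hs => (hB.adapted s hs.1).trans (hB.mono hs.2)

lemma IsBM.nat (hB : IsBM μ F W) : IsBM μ (natSA W) W where
  le t := (natSA_le_F hB t).trans (hB.le t)
  mono := natSA_mono W
  adapted t ht := (natSA_meas W ht le_rfl).comap_le
  init := hB.init
  cont := hB.cont
  law := hB.law
  indep s t hs hst := indep_of_indep_of_le_right (hB.indep s t hs hst) (natSA_le_F hB s)

lemma psgn_eq (y : ℝ) : psgn y = if y ≤ 0 then -1 else 1 := by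
  unfold psgn
  by_cases hy : y ≤ 0
  · simp [hy, not_lt.2 hy]
  · simp [hy, not_le.1 hy]

lemma psgn_meas : Measurable psgn :=
  Measurable.ite measurableSet_Ioi measurable_const measurable_const

lemma psgn_pm (y : ℝ) : psgn y = 1 ∨ psgn y = -1 := by unfold psgn; split_ifs <;> simp

lemma psgn_cont {x : ℝ} (hx : x ≠ 0) : ContinuousAt psgn x := by
  rcases lt_or_gt_of_ne hx with h | h
  · have : psgn =ᶠ[nhds x] fun _ => -1 := by
      filter_upwards [gt_mem_nhds h] with y hy
      simp [psgn, hy.not_gt]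
    exact continuousAt_const.congr this.symm
  · have : psgn =ᶠ[nhds x] fun _ => 1 := by
      filter_upwards [lt_mem_nhds h] with y hy
      simp [psgn, hy]
    exact continuousAt_const.congr this.symm

lemma AB_pm {H : ℝ → Ω → ℝ} (hm : ∀ s, 0 ≤ s → Measurable[F s] (H s))
    (h : ∀ s ω, H s ω = 1 ∨ H s ω = -1) : AB F 1 H :=
  ⟨hm, fun s ω => by rcases h s ω with h | h <;> simp [h]⟩

lemma psgn_CA {Y : ℝ → Ω → ℝ} (hY : ∀ᵐ ω ∂μ, Continuous fun t => Y t ω)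
    (h0 : ∀ t, 0 < t → μ {ω | Y t ω = 0} = 0) : CA μ (fun t ω => psgn (Y t ω)) := by
  intro s hs
  have h1 : ∀ᵐ ω ∂μ, Y s ω ≠ 0 := by rw [ae_iff]; simpa using h0 s hs
  filter_upwards [hY, h1] with ω h2 h3
  exact ContinuousAt.comp (f := fun r => Y r ω) (g := psgn) (psgn_cont h3) h2.continuousAt

lemma ae_ae_ne [SFinite μ] {Y : ℝ → Ω → ℝ} (hYm : ∀ t, 0 ≤ t → Measurable (Y t))
    (hY : ∀ᵐ ω ∂μ, Continuous fun t => Y t ω)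
    (h0 : ∀ t, 0 < t → μ {ω | Y t ω = 0} = 0) :
    ∀ᵐ ω ∂μ, ∀ᵐ s ∂(volume.restrict (Ioi (0:ℝ))), Y s ω ≠ 0 := by
  set Z : ℝ × Ω → ℝ := fun p => limUnder atTop fun n => Y (dm n * ⌊p.1 / dm n⌋₊) p.2 with hZ
  have hZm : Measurable Z := by
    refine meas_limUnder fun n => ?_
    have h1 : Measurable (fun q : ℕ × Ω => Y (dm n * q.1) q.2) :=
      measurable_from_prod_countable_right fun k => hYm (dm n * k) (by have := dm_pos n; positivity)
    have h2 : Measurable (fun p : ℝ × Ω => (⌊p.1 / dm n⌋₊, p.2)) := by fun_prop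
    exact h1.comp h2
  have hZY : ∀ᵐ ω ∂μ, ∀ s, 0 ≤ s → Z (s, ω) = Y s ω := by
    filter_upwards [hY] with ω hω s hs
    exact ((hω.tendsto s).comp (dm_floor_tendsto hs)).limUnder_eq
  have h1 : ∀ᵐ s ∂(volume.restrict (Ioi (0:ℝ))), ∀ᵐ ω ∂μ, Z (s, ω) ≠ 0 := by
    filter_upwards [ae_restrict_mem measurableSet_Ioi] with s hs
    have h2 : ∀ᵐ ω ∂μ, Y s ω ≠ 0 := by rw [ae_iff]; simpa using h0 s hs
    filter_upwards [hZY, h2] with ω a b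
    rw [a s (le_of_lt hs)]; exact b
  rw [Measure.ae_ae_comm (p := fun s ω => Z (s, ω) ≠ 0)
    ((hZm (measurableSet_singleton 0)).compl)] at h1
  filter_upwards [h1, hZY] with ω a b
  filter_upwards [a, ae_restrict_mem measurableSet_Ioi] with s hs hs0
  rwa [← b s (le_of_lt hs0)]

lemma part1 (g h : ℝ) (hgh : 0 ≤ g + h) (x₁ x₂ : ℝ) [IsProbabilityMeasure μ]
    (hB : IsBM μ F W) :
    ∃ X₁ X₂ : ℝ → Ω → ℝ, Solves47 μ F g h x₁ x₂ W X₁ X₂ ∧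
      ∀ t : ℝ, 0 ≤ t → natFilt μ (fun s ω => (X₁ s ω, X₂ s ω)) t ≤ natFilt μ W t := by
  have hN := hB.nat
  set Y : ℝ → Ω → ℝ := fun t ω => Psi (g + h) (x₁ - x₂) (max t 0) (dyv fun s => W s ω) with hYdef
  have hYm : ∀ t, 0 ≤ t → Measurable[natSA W t] (Y t) := by
    intro t ht
    refine meas_limUnder fun n => ?_
    rw [max_eq_left ht]
    refine @eul_meas Ω (natSA W t) (g+h) (x₁-x₂) (dm n) (fun ω k => W (dm n * k) ω) _ fun k hk => ?_
    have hp := dm_pos n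
    refine natSA_meas W (by positivity) ?_
    have h1 := Nat.floor_le (div_nonneg ht hp.le)
    rw [le_div_iff₀ hp] at h1
    have h2 : (k:ℝ) ≤ ⌊t / dm n⌋₊ := by exact_mod_cast hk
    nlinarith
  have hLip : ∀ᵐ ω ∂μ, ∀ s t, 0 ≤ s → 0 ≤ t →
      |(Y t ω - (W t ω - W 0 ω)) - (Y s ω - (W s ω - W 0 ω))| ≤ (g + h) * |t - s| := by
    filter_upwards [hB.cont] with ω hω s t hs ht
    have := Psi_lip hgh (x₁ - x₂) hω hs ht
    simp only [hYdef, max_eq_left hs, max_eq_left ht]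
    refine le_trans (le_of_eq ?_) this
    congr 1; ring
  have h0 : ∀ t, 0 < t → μ {ω | Y t ω = 0} = 0 := by
    intro t ht
    refine zero_prob hN (H := fun _ _ => 1) (B := fun t ω => W t ω - W 0 ω)
      (fun _ _ => measurable_const) (fun _ _ => Or.inl rfl) (fun t ht => ?_) hYm hgh hLip ht
    refine TendstoInMeasure.congr_left (f := fun _ ω => W t ω - W 0 ω) (fun n => ?_) tim_const
    exact ae_of_all _ fun ω => (rsum_one W t n ω).symm
  have hYc : ∀ᵐ ω ∂μ, Continuous fun t => Y t ω := by
    filter_upwards [hB.cont, hLip] with ω hω hL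
    have h1 : LipschitzOnWith (g+h).toNNReal (fun t => Y t ω - (W t ω - W 0 ω)) (Ici 0) := by
      refine LipschitzOnWith.of_dist_le_mul fun t ht s hs => ?_
      rw [Real.dist_eq, Real.dist_eq, Real.coe_toNNReal _ hgh]
      exact hL s t hs ht
    have h2 : Continuous (fun t => Y (max t 0) ω - (W (max t 0) ω - W 0 ω)) :=
      h1.continuousOn.comp_continuous (f := fun t : ℝ => max t 0) (by fun_prop)
        fun t => mem_Ici.2 (le_max_right _ _)
    have h3 : Continuous (fun t => W (max t 0) ω) := hω.comp (by fun_prop)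
    have h4 := h2.add (h3.sub (continuous_const (y := W 0 ω)))
    refine h4.congr fun t => ?_
    simp [hYdef]
  have hne := ae_ae_ne (fun t ht => (hYm t ht).mono (hN.le t) le_rfl) hYc h0
  have hYeq : ∀ᵐ ω ∂μ, ∀ t, 0 ≤ t → Y t ω = (x₁ - x₂ + (W t ω - W 0 ω)) +
      ∫ s in (0:ℝ)..t, bd (g + h) (Y s ω) := by
    filter_upwards [hne, hB.cont] with ω h1 h2 t ht
    have h3 := Psi_solves hgh (x₁ - x₂) h2 (by
      filter_upwards [h1, ae_restrict_mem measurableSet_Ioi] with s hs hs0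
      simpa [hYdef, max_eq_left (le_of_lt (mem_Ioi.1 hs0))] using hs) ht
    have e1 : Y t ω = Psi (g+h) (x₁-x₂) t (dyv fun s => W s ω) := by
      simp [hYdef, max_eq_left ht]
    rw [e1, h3]
    congr 1
    refine intervalIntegral.integral_congr fun s hs => ?_
    rw [uIcc_of_le ht] at hs
    simp [hYdef, max_eq_left hs.1]
  have hCA := psgn_CA hYc h0
  have hAB : AB (natSA W) 1 (fun t ω => psgn (Y t ω)) :=
    AB_pm (fun s hs => psgn_meas.comp (hYm s hs)) fun s ω => psgn_pm _
  obtain ⟨B, hBm, hBc, hB0, hBt⟩ := cont_version hN hAB (fun s ω => psgn_pm _) hCA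
  set X₁ : ℝ → Ω → ℝ := fun t ω => x₁ + (Y t ω - (x₁ - x₂)) / 2 + (g - h) * t / 2 + B t ω / 2 with hX₁
  set X₂ : ℝ → Ω → ℝ := fun t ω => X₁ t ω - Y t ω with hX₂
  have hX₁m : ∀ t, 0 ≤ t → Measurable[natSA W t] (X₁ t) := by
    intro t ht
    have h1 := hYm t ht
    have h2 := hBm t ht
    exact (((measurable_const.add ((h1.sub measurable_const).div_const 2)).add
      measurable_const).add (h2.div_const 2))
  have hX₂m : ∀ t, 0 ≤ t → Measurable[natSA W t] (X₂ t) := fun t ht => (hX₁m t ht).sub (hYm t ht)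
  have hle : ∀ t ω, X₁ t ω ≤ X₂ t ω ↔ Y t ω ≤ 0 := by
    intro t ω; simp only [hX₂]; constructor <;> intro h <;> linarith
  have hcom : ∀ t, 0 ≤ t →
      MeasurableSpace.comap (fun ω => (X₁ t ω, X₂ t ω)) inferInstance ≤ natSA W t := fun t ht =>
    ((hX₁m t ht).prodMk (hX₂m t ht)).comap_le
  refine ⟨X₁, X₂, ⟨fun t ht => (hcom t ht).trans (natSA_le_F hB t), ?_,
    fun t ω => (B t ω + (W t ω - W 0 ω)) / 2, fun t ω => (B t ω - (W t ω - W 0 ω)) / 2, ⟨?_, ?_⟩,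
      ⟨?_, ?_⟩, ?_⟩, ?_⟩
  · filter_upwards [hYc, hBc] with ω h1 h2
    have h3 : Continuous (fun t => X₁ t ω) := by
      simp only [hX₁]; fun_prop
    exact ⟨h3, h3.sub h1⟩
  · filter_upwards [hB0] with ω h1
    simp [h1]
  · intro t ht
    have h1 := tim_mul_bdd (a := fun _ => (1/2:ℝ)) (C := 1/2) (fun _ => by norm_num)
      (tim_add (hBt t ht) (tim_const (g := fun ω => W t ω - W 0 ω)))
    refine (h1.congr_right (ae_of_all _ fun ω => ?_)).congr_left fun n => ae_of_all _ fun ω => ?_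
    · ring
    · beta_reduce
      rw [← rsum_one W t n ω]
      unfold rsum
      rw [← Finset.sum_add_distrib, Finset.mul_sum]
      refine Finset.sum_congr rfl fun i _ => ?_
      simp only [hle, psgn_eq]
      split_ifs <;> ring
  · filter_upwards [hB0] with ω h1
    simp [h1]
  · intro t ht
    have h1 := tim_mul_bdd (a := fun _ => (1/2:ℝ)) (C := 1/2) (fun _ => by norm_num)
      (tim_sub (hBt t ht) (tim_const (g := fun ω => W t ω - W 0 ω)))
    refine (h1.congr_right (ae_of_all _ fun ω => ?_)).congr_left fun n => ae_of_all _ fun ω => ?_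
    · ring
    · beta_reduce
      rw [← rsum_one W t n ω]
      unfold rsum
      rw [← Finset.sum_sub_distrib, Finset.mul_sum]
      refine Finset.sum_congr rfl fun i _ => ?_
      simp only [hle, psgn_eq]
      split_ifs <;> ring
  · filter_upwards [hYeq, hYc] with ω h1 h2 t ht
    have h3 := h1 t ht
    have i0 := bd_ii hgh h2.measurable 0 t
    have e1 : ∫ s in (0:ℝ)..t, (if X₁ s ω ≤ X₂ s ω then g else -h)
        = (∫ s in (0:ℝ)..t, bd (g + h) (Y s ω)) / 2 + (g - h) * t / 2 := by
      have : ∀ s, (if X₁ s ω ≤ X₂ s ω then g else -h) = bd (g+h) (Y s ω) / 2 + (g - h) / 2 := by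
        intro s; simp only [hle, bd]; split_ifs <;> ring
      simp_rw [this]
      rw [intervalIntegral.integral_add (i0.div_const 2) (by simp), intervalIntegral.integral_div,
        intervalIntegral.integral_const]
      simp; ring
    have e2 : ∫ s in (0:ℝ)..t, (if X₁ s ω ≤ X₂ s ω then -h else g)
        = -((∫ s in (0:ℝ)..t, bd (g + h) (Y s ω)) / 2) + (g - h) * t / 2 := by
      have : ∀ s, (if X₁ s ω ≤ X₂ s ω then -h else g) = bd (g+h) (Y s ω) / (-2) + (g - h) / 2 := by
        intro s; simp only [hle, bd]; split_ifs <;> ring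
      simp_rw [this]
      rw [intervalIntegral.integral_add (i0.div_const (-2)) (by simp),
        intervalIntegral.integral_div, intervalIntegral.integral_const]
      simp; ring
    rw [e1, e2]
    simp only [hX₂, hX₁]
    constructor <;> linarith
  · intro t ht
    refine sup_le_sup_right (iSup₂_le fun s hs => (hcom s hs.1).trans (natSA_mono W hs.2)) _

end Exist

end Part9

section Part10

section Law

variable {μ : Measure Ω} {F : ℝ → MeasurableSpace Ω} {W : ℝ → Ω → ℝ}

lemma charfun_dct [IsProbabilityMeasure μ] {S : ℕ → Ω → ℝ} {D : Ω → ℝ}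
    (hS : ∀ n, Measurable (S n)) (h : ∀ᵐ ω ∂μ, Tendsto (fun n => S n ω) atTop (nhds (D ω))) :
    Tendsto (fun n => ∫ ω, Complex.exp ((S n ω : ℝ) * Complex.I) ∂μ) atTop
      (nhds (∫ ω, Complex.exp ((D ω : ℝ) * Complex.I) ∂μ)) := by
  refine tendsto_integral_of_dominated_convergence (fun _ => 1) (fun n => ?_) (integrable_const _)
    (fun n => ?_) ?_
  · have := hS n
    exact (by fun_prop : Measurable fun ω => Complex.exp ((S n ω : ℝ) * Complex.I)).aestronglyMeasurable
  · exact ae_of_all _ fun ω => by rw [Complex.norm_exp_ofReal_mul_I]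
  · filter_upwards [h] with ω hω
    have hc : Continuous fun x : ℝ => Complex.exp ((x : ℝ) * Complex.I) := by fun_prop
    exact (hc.tendsto _).comp hω

/-- a common subsequence along which two sequences converge almost surely -/
lemma common_subseq {f f' : ℕ → Ω → ℝ} {g g' : Ω → ℝ} (h : TendstoInMeasure μ f atTop g)
    (h' : TendstoInMeasure μ f' atTop g') : ∃ ns : ℕ → ℕ, StrictMono ns ∧
      (∀ᵐ ω ∂μ, Tendsto (fun n => f (ns n) ω) atTop (nhds (g ω))) ∧
      ∀ᵐ ω ∂μ, Tendsto (fun n => f' (ns n) ω) atTop (nhds (g' ω)) := by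
  obtain ⟨ns, hns, hae⟩ := h.exists_seq_tendsto_ae
  have h2 : TendstoInMeasure μ (fun n => f' (ns n)) atTop g' := fun ε hε =>
    (h' ε hε).comp hns.tendsto_atTop
  obtain ⟨ms, hms, hae'⟩ := h2.exists_seq_tendsto_ae
  refine ⟨ns ∘ ms, hns.comp hms, ?_, hae'⟩
  filter_upwards [hae] with ω hω
  exact hω.comp hms.tendsto_atTop

lemma gs_comb (H W : ℝ → Ω → ℝ) {ι : Type*} (S : Finset ι) (θ t : ι → ℝ) (p : ℕ) (ω : Ω) :
    ∑ x ∈ S, θ x * gs H W (t x) p ω =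
      ∑ k ∈ Finset.range (∑ x ∈ S, ⌊t x / dm p⌋₊),
        (∑ x ∈ S, if k < ⌊t x / dm p⌋₊ then θ x else 0) *
          (H (dm p * k) ω * (W (dm p * ((k + 1 : ℕ) : ℝ)) ω - W (dm p * k) ω)) := by
  simp only [Finset.sum_mul]
  rw [Finset.sum_comm]
  refine Finset.sum_congr rfl fun x hx => ?_
  have hle : ⌊t x / dm p⌋₊ ≤ ∑ x ∈ S, ⌊t x / dm p⌋₊ :=
    Finset.single_le_sum (f := fun x => ⌊t x / dm p⌋₊) (fun _ _ => Nat.zero_le _) hx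
  unfold gs usum
  rw [Finset.mul_sum]
  rw [← Finset.sum_subset (Finset.range_mono hle) (fun k _ hk => ?_)]
  · refine Finset.sum_congr rfl fun k hk => ?_
    rw [if_pos (Finset.mem_range.1 hk)]
    push_cast; ring
  · rw [if_neg (fun h => hk (Finset.mem_range.2 h)), zero_mul]

lemma charF_eq [IsProbabilityMeasure μ] (hB : IsBM μ F W) {H H' B B' : ℝ → Ω → ℝ}
    (hH : ∀ s, 0 ≤ s → Measurable[F s] (H s)) (hH1 : ∀ s ω, H s ω = 1 ∨ H s ω = -1)
    (hH' : ∀ s, 0 ≤ s → Measurable[F s] (H' s)) (hH1' : ∀ s ω, H' s ω = 1 ∨ H' s ω = -1)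
    (hBt : ∀ t, 0 ≤ t → TendstoInMeasure μ (fun n => gs H W t n) atTop (B t))
    (hBt' : ∀ t, 0 ≤ t → TendstoInMeasure μ (fun n => gs H' W t n) atTop (B' t))
    {ι : Type*} (S : Finset ι) (θ t : ι → ℝ) (ht : ∀ x, 0 ≤ t x) :
    ∫ ω, Complex.exp (((∑ x ∈ S, θ x * B (t x) ω : ℝ) : ℂ) * Complex.I) ∂μ =
    ∫ ω, Complex.exp (((∑ x ∈ S, θ x * B' (t x) ω : ℝ) : ℂ) * Complex.I) ∂μ := by
  have key : ∀ {H B : ℝ → Ω → ℝ}, (∀ s, 0 ≤ s → Measurable[F s] (H s)) →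
      (∀ s ω, H s ω = 1 ∨ H s ω = -1) →
      (∀ t, 0 ≤ t → TendstoInMeasure μ (fun n => gs H W t n) atTop (B t)) → 
      (∀ n, Measurable (fun ω => ∑ x ∈ S, θ x * gs H W (t x) n ω)) ∧
      TendstoInMeasure μ (fun n ω => ∑ x ∈ S, θ x * gs H W (t x) n ω) atTop
        (fun ω => ∑ x ∈ S, θ x * B (t x) ω) ∧ 
      ∀ n, ∫ ω, Complex.exp (((∑ x ∈ S, θ x * gs H W (t x) n ω : ℝ) : ℂ) * Complex.I) ∂μ =
        Complex.exp (-((∑ k ∈ Finset.range (∑ x ∈ S, ⌊t x / dm n⌋₊),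
          (∑ x ∈ S, if k < ⌊t x / dm n⌋₊ then θ x else 0) ^ 2 *
            (dm n * ((k + 1 : ℕ) : ℝ) - dm n * k) / 2 : ℝ) : ℂ)) := by
    intro H B hH hH1 hBt
    refine ⟨fun n => ?_, ?_, fun n => ?_⟩
    · refine Finset.measurable_sum _ fun x _ => Measurable.const_mul ?_ _
      exact (gs_measF hB (AB_pm hH hH1) (ht x) n).mono (hB.le _) le_rfl
    · exact tim_sum S (f := fun x n ω => θ x * gs H W (t x) n ω) (g := fun x ω => θ x * B (t x) ω)
        fun x _ => tim_mul_bdd (a := fun _ => θ x) (fun _ => le_rfl) (hBt _ (ht x))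
    · have hp := dm_pos n
      have := hB.gauss_sum (a := fun k : ℕ => dm n * k)
        (fun i j hij => mul_le_mul_of_nonneg_left (by exact_mod_cast hij) hp.le) (by simp)
        (Z := fun _ => 1) measurable_const (C := 1) (by simp) (H := fun k => H (dm n * k))
        (fun k => hH _ (by positivity)) (fun k ω => hH1 _ ω)
        (fun k => ∑ x ∈ S, if k < ⌊t x / dm n⌋₊ then θ x else 0) (∑ x ∈ S, ⌊t x / dm n⌋₊)
      simp only [one_mul, integral_const, probReal_univ, one_smul] at this
      rw [← this]
      simp_rw [gs_comb]
  obtain ⟨a1, a2, a3⟩ := key hH hH1 hBt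
  obtain ⟨b1, b2, b3⟩ := key hH' hH1' hBt'
  obtain ⟨ns, hns, h1, h2⟩ := common_subseq a2 b2
  refine tendsto_nhds_unique (charfun_dct (fun n => a1 (ns n)) h1) ?_
  have h3 := charfun_dct (fun n => b1 (ns n)) h2
  refine h3.congr fun n => ?_
  rw [a3, b3]

lemma law_eq [IsProbabilityMeasure μ] (hB : IsBM μ F W) {H H' B B' : ℝ → Ω → ℝ}
    (hH : ∀ s, 0 ≤ s → Measurable[F s] (H s)) (hH1 : ∀ s ω, H s ω = 1 ∨ H s ω = -1)
    (hH' : ∀ s, 0 ≤ s → Measurable[F s] (H' s)) (hH1' : ∀ s ω, H' s ω = 1 ∨ H' s ω = -1)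
    (hBt : ∀ t, 0 ≤ t → TendstoInMeasure μ (fun n => gs H W t n) atTop (B t))
    (hBt' : ∀ t, 0 ≤ t → TendstoInMeasure μ (fun n => gs H' W t n) atTop (B' t))
    (hm : ∀ t, 0 ≤ t → Measurable (B t)) (hm' : ∀ t, 0 ≤ t → Measurable (B' t)) :
    Measurable (fun ω => dyv fun s => B s ω) ∧ Measurable (fun ω => dyv fun s => B' s ω) ∧ 
    μ.map (fun ω => dyv fun s => B s ω) = μ.map (fun ω => dyv fun s => B' s ω) := by
  have hnn : ∀ x : ℕ × ℕ, 0 ≤ dm x.1 * (x.2 : ℝ) := fun x => by have := dm_pos x.1; positivity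
  have m1 : Measurable (fun ω => dyv fun s => B s ω) := measurable_pi_lambda _ fun x => hm _ (hnn x)
  have m2 : Measurable (fun ω => dyv fun s => B' s ω) := measurable_pi_lambda _ fun x => hm' _ (hnn x)
  refine ⟨m1, m2, ?_⟩
  rw [map_eq_iff_forall_finset_map_restrict_eq (X := fun (x : ℕ × ℕ) ω => dyv (fun s => B s ω) x)
    (Y := fun (x : ℕ × ℕ) ω => dyv (fun s => B' s ω) x) m1.aemeasurable m2.aemeasurable]
  intro S
  have r1 : Measurable fun ω => S.restrict (fun x : ℕ × ℕ => dyv (fun s => B s ω) x) :=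
    measurable_pi_lambda _ fun x => hm _ (hnn x)
  have r2 : Measurable fun ω => S.restrict (fun x : ℕ × ℕ => dyv (fun s => B' s ω) x) :=
    measurable_pi_lambda _ fun x => hm' _ (hnn x)
  have := Measure.isProbabilityMeasure_map (μ := μ) r1.aemeasurable
  have := Measure.isProbabilityMeasure_map (μ := μ) r2.aemeasurable
  refine Measure.ext_of_charFunDual ?_
  ext L
  rw [charFunDual_apply, charFunDual_apply, integral_map r1.aemeasurable (by fun_prop),
    integral_map r2.aemeasurable (by fun_prop)]
  have hL : ∀ v : S → ℝ, L v = ∑ x, L (Pi.single x 1) * v x := by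
    intro v
    have := LinearMap.pi_apply_eq_sum_univ (L : (S → ℝ) →ₗ[ℝ] ℝ) v
    refine this.trans (Finset.sum_congr rfl fun x _ => ?_)
    rw [smul_eq_mul, mul_comm]
    have e : (fun j => if x = j then (1:ℝ) else 0) = Pi.single x 1 := by
      funext j
      simp [Pi.single_apply, eq_comm]
    rw [← e]
    rfl
  have := charF_eq hB hH hH1 hH' hH1' hBt hBt' Finset.univ (fun x : S => L (Pi.single x 1))
    (fun x => dm x.1.1 * (x.1.2 : ℝ)) fun x => hnn x
  have e1 : ∀ ω, L (S.restrict fun x => dyv (fun s => B s ω) x) =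
      ∑ x : S, L (Pi.single x 1) * B (dm x.1.1 * (x.1.2 : ℝ)) ω := fun ω => hL _
  have e2 : ∀ ω, L (S.restrict fun x => dyv (fun s => B' s ω) x) =
      ∑ x : S, L (Pi.single x 1) * B' (dm x.1.1 * (x.1.2 : ℝ)) ω := fun ω => hL _
  clear hL
  simp only [e1, e2]
  exact this

end Law

end Part10

section Part11

section LemD

variable {μ : Measure Ω} {F : ℝ → MeasurableSpace Ω} {W : ℝ → Ω → ℝ}

/-- freezing a process on the dyadic grid -/
def fz (K : ℝ → Ω → ℝ) (n : ℕ) : ℝ → Ω → ℝ := fun s ω => K (dm n * ⌊s / dm n⌋₊) ω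

lemma dm_floor_le (n : ℕ) {s : ℝ} (hs : 0 ≤ s) : dm n * (⌊s / dm n⌋₊ : ℝ) ≤ s := by
  have := Nat.floor_le (div_nonneg hs (dm_pos n).le)
  rw [le_div_iff₀ (dm_pos _)] at this
  linarith

lemma dm_lt_floor (n : ℕ) (s : ℝ) : s < dm n * (⌊s / dm n⌋₊ : ℝ) + dm n := by
  have := Nat.lt_floor_add_one (s / dm n)
  rw [div_lt_iff₀ (dm_pos _)] at this
  linarith

lemma gs_dy (H V : ℝ → Ω → ℝ) {n p : ℕ} (h : n ≤ p) (k : ℕ) (ω : Ω) :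
    gs H V (dm n * k) p ω = usum (dm p) (2 ^ (p - n) * k) H V ω := by
  unfold gs; rw [dm_floor h]

lemma usum_fz (K H V : ℝ → Ω → ℝ) {n p : ℕ} (h : n ≤ p) (N : ℕ) (ω : Ω) :
    ∑ k ∈ Finset.range N, K (dm n * k) ω *
      (gs H V (dm n * ((k + 1 : ℕ) : ℝ)) p ω - gs H V (dm n * k) p ω) =
    usum (dm p) (2 ^ (p - n) * N) (fun s ω => fz K n s ω * H s ω) V ω := by
  induction N with
  | zero => simp [usum]
  | succ N ih =>
    rw [Finset.sum_range_succ, ih, gs_dy H V h, gs_dy H V h]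
    unfold usum
    rw [mul_add, mul_one, Finset.sum_range_add, Finset.sum_range_add, add_sub_cancel_left,
      Finset.mul_sum]
    congr 1
    refine Finset.sum_congr rfl fun j hj => ?_
    have hj := Finset.mem_range.1 hj
    have hfl : ⌊dm p * ((2 ^ (p - n) * N + j : ℕ) : ℝ) / dm n⌋₊ = N := by
      have hp := dm_pos p
      rw [← dm_mul_pow h, mul_div_mul_left _ _ hp.ne']
      have : ((2:ℝ) ^ (p - n)) = ((2 ^ (p - n) : ℕ) : ℝ) := by push_cast; rfl
      rw [this, Nat.floor_div_eq_div]
      rw [Nat.mul_add_div (by positivity), Nat.div_eq_of_lt hj, add_zero]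
    unfold fz
    beta_reduce
    rw [hfl]
    ring

lemma AB_fz {K : ℝ → Ω → ℝ} (hB : IsBM μ F W) {C : ℝ} (hK : AB F C K) (n : ℕ) : AB F C (fz K n) := by
  refine ⟨fun s hs => ?_, fun s ω => hK.bdd _ _⟩
  exact (hK.meas _ (by have := dm_pos n; positivity)).mono (hB.mono (dm_floor_le n hs)) le_rfl

lemma AB_mul {K H : ℝ → Ω → ℝ} (hK : AB F 1 K) (hH : AB F 1 H) : AB F 1 (fun s ω => K s ω * H s ω) :=
  ⟨fun s hs => (hK.meas s hs).mul (hH.meas s hs), fun s ω => by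
    rw [abs_mul]; exact mul_le_one₀ (hK.bdd s ω) (abs_nonneg _) (hH.bdd s ω)⟩

lemma CA_mul {K H : ℝ → Ω → ℝ} (hK : CA μ K) (hH : CA μ H) : CA μ (fun s ω => K s ω * H s ω) :=
  fun s hs => by
    filter_upwards [hK s hs, hH s hs] with ω a b
    exact a.mul b

lemma lemD [IsProbabilityMeasure μ] (hB : IsBM μ F W) {K H B : ℝ → Ω → ℝ}
    (hK : AB F 1 K) (hKc : CA μ K) (hH : AB F 1 H) (hHc : CA μ H)
    (hBt : ∀ t, 0 ≤ t → TendstoInMeasure μ (fun n => gs H W t n) atTop (B t)) {t : ℝ} (ht : 0 ≤ t) :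
    TendstoInMeasure μ (fun n ω => gs K B t n ω - gs (fun s ω => K s ω * H s ω) W t n ω) atTop
      (fun _ => 0) := by
  have hnn : ∀ n k : ℕ, 0 ≤ dm n * (k:ℝ) := fun n k => by have := dm_pos n; positivity
  refine tim_double (f := fun n p ω => (∑ k ∈ Finset.range ⌊t / dm n⌋₊, K (dm n * k) ω *
      (gs H W (dm n * ((k + 1 : ℕ) : ℝ)) (max n p) ω - gs H W (dm n * k) (max n p) ω)) -
      gs (fun s ω => K s ω * H s ω) W t n ω) (fun n => ?_) ?_
  · refine tim_sub ?_ tim_const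
    have hmx : Tendsto (fun p => max n p) atTop atTop := tendsto_atTop_mono (fun p => le_max_right n p) tendsto_id
    have := tim_sum (μ := μ) (Finset.range ⌊t / dm n⌋₊) (l := (atTop : Filter ℕ)) 
      (f := fun k p ω => K (dm n * k) ω *
      (gs H W (dm n * ((k + 1 : ℕ) : ℝ)) (max n p) ω - gs H W (dm n * k) (max n p) ω))
      (g := fun k ω => K (dm n * k) ω * (B (dm n * ((k + 1 : ℕ) : ℝ)) ω - B (dm n * k) ω))
      (fun k _ => tim_mul_bdd (C := 1) (fun ω => hK.bdd _ ω) (tim_sub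
        (fun ε hε => (hBt _ (hnn _ _) ε hε).comp hmx) (fun ε hε => (hBt _ (hnn _ _) ε hε).comp hmx)))
    refine this.congr_right (ae_of_all _ fun ω => ?_)
    simp [gs, usum]
  · have hf1 : Tendsto (fun p : ℕ × ℕ => p.1) (atTop ×ˢ atTop) atTop := tendsto_fst
    have hf2 : Tendsto (fun p : ℕ × ℕ => max p.1 p.2) (atTop ×ˢ atTop) atTop :=
      tendsto_atTop_mono (fun p => le_max_left p.1 p.2) hf1
    have key := (usum_tendsto hB (l := (atTop ×ˢ atTop : Filter (ℕ × ℕ)))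
      (c := fun p : ℕ × ℕ => dm (max p.1 p.2)) (c' := fun p => dm p.1)
        (N := fun p => 2 ^ (max p.1 p.2 - p.1) * ⌊t / dm p.1⌋₊) (N' := fun p => ⌊t / dm p.1⌋₊)
        (K := fun p s ω => fz K p.1 s ω * H s ω) (K' := fun p s ω => K s ω * H s ω) (C := 1)
        (fun p => dm_pos _) (fun p => dm_pos _) (fun p => AB_mul (AB_fz hB hK p.1) hH)
        (fun _ => AB_mul hK hH) (t := t) ?_ ((dm_floor_tendsto ht).comp hf1) ?_).2
    · refine key.congr_left fun p => ae_of_all _ fun ω => ?_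
      beta_reduce
      rw [usum_fz K H W (le_max_left p.1 p.2)]
      rfl
    · refine ((dm_floor_tendsto ht).comp hf1).congr fun p => ?_
      have := dm_mul_pow (le_max_left p.1 p.2)
      simp only [Function.comp]
      push_cast
      rw [← this]; ring
    · intro s hs hst
      filter_upwards [hKc s hs, hHc s hs] with ω a b
      have t1 : Tendsto (fun p : ℕ × ℕ => dm (max p.1 p.2) * (⌊s / dm (max p.1 p.2)⌋₊ : ℝ))
        (atTop ×ˢ atTop) (nhds s) := (dm_floor_tendsto hs.le).comp hf2
      have t2 : Tendsto (fun p : ℕ × ℕ => dm p.1 * (⌊s / dm p.1⌋₊ : ℝ))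
        (atTop ×ˢ atTop) (nhds s) := (dm_floor_tendsto hs.le).comp hf1
      have t3 : Tendsto (fun p : ℕ × ℕ => dm p.1 *
          (⌊(dm (max p.1 p.2) * (⌊s / dm (max p.1 p.2)⌋₊ : ℝ)) / dm p.1⌋₊ : ℝ))
          (atTop ×ˢ atTop) (nhds s) := by
        have h2 := t1.sub (dm_tendsto.comp hf1)
        rw [sub_zero] at h2
        refine tendsto_of_tendsto_of_tendsto_of_le_of_le h2 t1 (fun p => ?_) (fun p => ?_)
        · have := dm_lt_floor p.1 (dm (max p.1 p.2) * (⌊s / dm (max p.1 p.2)⌋₊ : ℝ))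
          simp only [Function.comp]
          linarith
        · exact dm_floor_le p.1 (hnn _ _)
      have := ((a.tendsto.comp t3).mul (b.tendsto.comp t1)).sub
        ((a.tendsto.comp t2).mul (b.tendsto.comp t2))
      rw [sub_self] at this
      exact this

/-- recovering the driving noise -/
lemma recover [IsProbabilityMeasure μ] (hB : IsBM μ F W) {K H B : ℝ → Ω → ℝ}
    (hK : AB F 1 K) (hKc : CA μ K) (hH : AB F 1 H) (hHc : CA μ H)
    (hBt : ∀ t, 0 ≤ t → TendstoInMeasure μ (fun n => gs H W t n) atTop (B t))
    (hKH : ∀ s, 0 < s → ∀ᵐ ω ∂μ, K s ω * H s ω = 1) {t : ℝ} (ht : 0 ≤ t) :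
    TendstoInMeasure μ (fun n => gs K B t n) atTop (W t) := by
  refine tim_of_sub (lemD hB hK hKc hH hHc hBt ht) ?_
  have h1 : AB F 1 (fun (_ : ℝ) (_ : Ω) => (1:ℝ)) := ⟨fun _ _ => measurable_const, fun _ _ => by simp⟩
  refine tim_of_sub (f' := fun n => gs (fun _ _ => 1) W t n) (usum_tendsto hB (fun n => dm_pos n)
    (fun n => dm_pos n) (fun _ => AB_mul hK hH) (fun _ => h1) (t := t) (dm_floor_tendsto ht)
    (dm_floor_tendsto ht) fun s hs _ => ?_).2 ?_
  · filter_upwards [CA_mul hKc hHc s hs, hKH s hs] with ω a b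
    have := (a.tendsto.comp (dm_floor_tendsto hs.le)).sub_const 1
    rw [b, sub_self] at this
    exact this
  · have e : ∀ n ω, gs (fun _ _ => 1) W t n ω = W (dm n * ⌊t / dm n⌋₊) ω - W 0 ω := by
      intro n ω
      unfold gs usum
      have := Finset.sum_range_sub (fun k : ℕ => W (dm n * k) ω) ⌊t / dm n⌋₊
      simp only [Nat.cast_zero, mul_zero] at this
      rw [← this]
      simp
    refine tim_of_ae (fun n => ?_) (hB.meas ht).aemeasurable ?_
    · exact ((gs_measF hB h1 ht n).mono (hB.le _) le_rfl).aemeasurable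
    · filter_upwards [hB.cont, hB.init] with ω a b
      simp_rw [e, b, sub_zero]
      exact (a.tendsto t).comp (dm_floor_tendsto ht)

end LemD

end Part11

section Part12

section Reflect

/-- no zero of the path up to time `s`, tested on dyadic times -/
def nz (y : ℝ → ℝ) (s : ℝ) : Prop :=
  ∃ j : ℕ, ∀ p k : ℕ, dm p * (k:ℝ) ≤ s → 1 / ((j:ℝ) + 1) ≤ |y (dm p * k)|

open Classical in
/-- sign that flips at the first zero of the path -/
def eps (y : ℝ → ℝ) (s : ℝ) : ℝ := if nz y s then 1 else -1

lemma eps_pm (y : ℝ → ℝ) (s : ℝ) : eps y s = 1 ∨ eps y s = -1 := by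
  unfold eps; split_ifs <;> simp

lemma nz_iff {y : ℝ → ℝ} (hy : Continuous y) (s : ℝ) : nz y s ↔ ∀ r ∈ Icc 0 s, y r ≠ 0 := by
  constructor
  · rintro ⟨j, hj⟩ r hr h0
    have h1 : ∀ n, 1 / ((j:ℝ) + 1) ≤ |y (dm n * ⌊r / dm n⌋₊)| := fun n =>
      hj n _ ((dm_floor_le n hr.1).trans hr.2)
    have h2 : Tendsto (fun n => |y (dm n * ⌊r / dm n⌋₊)|) atTop (nhds |y r|) :=
      (hy.abs.tendsto r).comp (dm_floor_tendsto hr.1)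
    have h3 := ge_of_tendsto' h2 h1
    rw [h0, abs_zero] at h3
    have : (0:ℝ) < 1 / ((j:ℝ) + 1) := by positivity
    linarith
  · intro h
    rcases lt_or_ge s 0 with hs | hs
    · refine ⟨0, fun p k hk => ?_⟩
      have := dm_pos p
      have : 0 ≤ dm p * (k:ℝ) := by positivity
      linarith
    · obtain ⟨r, hr, hmin⟩ := isCompact_Icc.exists_isMinOn (nonempty_Icc.2 hs) hy.abs.continuousOn
      obtain ⟨j, hj⟩ := exists_nat_one_div_lt (abs_pos.2 (h r hr))
      refine ⟨j, fun p k hk => hj.le.trans (hmin ⟨?_, hk⟩)⟩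
      have := dm_pos p
      positivity

lemma nz_tau {y : ℝ → ℝ} (hy : Continuous y) :
    (∀ s, nz y s) ∨ ∃ τ, 0 ≤ τ ∧ y τ = 0 ∧ ∀ r, nz y r ↔ r < τ := by
  by_cases hall : ∀ s, nz y s
  · exact Or.inl hall
  right
  push Not at hall
  obtain ⟨s, hs⟩ := hall
  rw [nz_iff hy] at hs
  push Not at hs
  obtain ⟨r, hr, h0⟩ := hs
  set Z : Set ℝ := {r | 0 ≤ r ∧ y r = 0} with hZ
  have hc : IsClosed Z := (isClosed_le continuous_const continuous_id).inter
    (isClosed_eq hy continuous_const)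
  have hne : Z.Nonempty := ⟨r, hr.1, h0⟩
  have hbd : BddBelow Z := ⟨0, fun _ h => h.1⟩
  have hm := hc.csInf_mem hne hbd
  refine ⟨sInf Z, hm.1, hm.2, fun q => ?_⟩
  rw [nz_iff hy]
  constructor
  · intro h
    by_contra hq
    exact h _ ⟨hm.1, not_lt.1 hq⟩ hm.2
  · intro h p hp h0
    have := csInf_le hbd (show p ∈ Z from ⟨hp.1, h0⟩)
    linarith [hp.2]

lemma eps_cont {y : ℝ → ℝ} (hy : Continuous y) {s : ℝ} (h : y s ≠ 0) : ContinuousAt (eps y) s := by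
  rcases nz_tau hy with ha | ⟨τ, h0, h1, h2⟩
  · have : eps y = fun _ => 1 := by funext r; simp [eps, ha]
    rw [this]; exact continuousAt_const
  · have hne : s ≠ τ := fun e => h (e ▸ h1)
    rcases lt_or_gt_of_ne hne with hlt | hlt
    · have : eps y =ᶠ[nhds s] fun _ => 1 := by
        filter_upwards [gt_mem_nhds hlt] with r hr
        simp [eps, h2, hr]
      exact continuousAt_const.congr this.symm
    · have : eps y =ᶠ[nhds s] fun _ => -1 := by
        filter_upwards [lt_mem_nhds hlt] with r hr
        simp [eps, h2, hr.le]
      exact continuousAt_const.congr this.symm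

lemma eps_meas {F : ℝ → MeasurableSpace Ω} (hF : Monotone F) {Y : ℝ → Ω → ℝ}
    (hY : ∀ s, 0 ≤ s → Measurable[F s] (Y s)) (s : ℝ) :
    Measurable[F s] (fun ω => eps (fun r => Y r ω) s) := by
  have : MeasurableSet[F s] {ω | nz (fun r => Y r ω) s} := by
    have e : {ω | nz (fun r => Y r ω) s} = ⋃ j : ℕ, ⋂ p : ℕ, ⋂ k : ℕ, ⋂ _ : dm p * (k:ℝ) ≤ s,
        {ω | 1 / ((j:ℝ) + 1) ≤ |Y (dm p * k) ω|} := by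
      ext ω; simp [nz]
    rw [e]
    refine MeasurableSet.iUnion fun j => MeasurableSet.iInter fun p => MeasurableSet.iInter fun k =>
      MeasurableSet.iInter fun hk => ?_
    have hm : Measurable[F s] (Y (dm p * k)) :=
      (hY _ (by have := dm_pos p; positivity)).mono (hF hk) le_rfl
    have hm2 : Measurable[F s] (fun ω => |Y (dm p * k) ω|) := measurable_norm.comp hm
    exact hm2 measurableSet_Ici
  classical
  unfold eps
  exact Measurable.ite this measurable_const measurable_const

/-- pathwise Riemann sums of a sign which flips at time `τ` -/
lemma flip_sum {b e : ℝ → ℝ} {τ : ℝ} (hτ : 0 ≤ τ) {c : ℝ} (hc : 0 < c) (N : ℕ)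
    (he1 : ∀ r, 0 ≤ r → r < τ → e r = 1)
    (he2 : ∀ r, 0 ≤ r → τ ≤ r → r < c * N → e r = -1) :
    ∑ k ∈ Finset.range N, e (c * k) * (b (c * (k + 1)) - b (c * k)) =
      2 * b (c * (min N ⌈τ / c⌉₊ : ℕ)) - b (c * N) - b 0 := by
  induction N with
  | zero => simp; ring
  | succ N ih =>
    rw [Finset.sum_range_succ, ih (fun r h0 h1 h2 => he2 r h0 h1 (h2.trans (by
      push_cast; nlinarith)))]
    by_cases hN : N < ⌈τ / c⌉₊
    · have h1 : c * N < τ := by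
        rw [Nat.lt_ceil, lt_div_iff₀ hc] at hN; linarith
      rw [he1 _ (by positivity) h1, min_eq_left hN.le, min_eq_left (Nat.succ_le_of_lt hN)]
      push_cast; ring
    · have h1 : τ ≤ c * N := by
        rw [Nat.lt_ceil, lt_div_iff₀ hc] at hN; linarith
      rw [he2 _ (by positivity) h1 (by push_cast; nlinarith), min_eq_right (not_lt.1 hN),
        min_eq_right ((not_lt.1 hN).trans (Nat.le_succ _))]
      push_cast; ring

lemma ceil_tendsto {τ : ℝ} (hτ : 0 ≤ τ) :
    Tendsto (fun n => dm n * (⌈τ / dm n⌉₊ : ℝ)) atTop (nhds τ) := by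
  have h1 : Tendsto (fun n => τ + dm n) atTop (nhds τ) := by simpa using dm_tendsto.const_add τ
  refine tendsto_of_tendsto_of_tendsto_of_le_of_le tendsto_const_nhds h1 (fun n => ?_) (fun n => ?_)
  · have := Nat.le_ceil (τ / dm n)
    rw [div_le_iff₀ (dm_pos n)] at this
    linarith
  · have := (Nat.ceil_lt_add_one (div_nonneg hτ (dm_pos n).le)).le
    have h2 := dm_pos n
    rw [← sub_le_iff_le_add, le_div_iff₀ h2] at this
    simp only
    nlinarith

lemma flip_lim {b e : ℝ → ℝ} (hb : Continuous b) {τ : ℝ} (hτ : 0 ≤ τ) {s : ℝ} (hs : 0 ≤ s)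
    (he1 : ∀ r, 0 ≤ r → r < τ → e r = 1) (he2 : ∀ r, 0 ≤ r → τ ≤ r → r < s → e r = -1) :
    Tendsto (fun n => ∑ k ∈ Finset.range ⌊s / dm n⌋₊, e (dm n * k) *
      (b (dm n * (k + 1)) - b (dm n * k))) atTop (nhds (2 * b (min s τ) - b s - b 0)) := by
  have h1 := dm_floor_tendsto hs
  have h2 := ceil_tendsto hτ
  have h3 := ((((hb.tendsto _).comp (h1.min h2)).const_mul 2).sub
    ((hb.tendsto s).comp h1)).sub_const (b 0)
  refine h3.congr fun n => ?_
  rw [flip_sum hτ (dm_pos n) _ he1 (fun r a c d => he2 r a c (d.trans_le (dm_floor_le n hs)))]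
  simp only [Function.comp]
  push_cast
  rw [mul_min_of_nonneg _ _ (dm_pos n).le]

/-- the pathwise reflected equation -/
lemma reflect {y b b' : ℝ → ℝ} {lam y0 : ℝ} (hl : 0 ≤ lam) (hy : Continuous y) (hb : Continuous b)
    (hb0 : b 0 = 0) (heq : ∀ t, 0 ≤ t → y t = y0 + b t + ∫ s in (0:ℝ)..t, bd lam (y s))
    (hne : ∀ᵐ s ∂(volume.restrict (Ioi (0:ℝ))), y s ≠ 0) (hb' : Continuous b')
    (hlim : ∀ n k : ℕ, ∀ L, Tendsto (fun m => ∑ i ∈ Finset.range ⌊dm n * (k:ℝ) / dm m⌋₊,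
      eps y (dm m * i) * (b (dm m * (i + 1)) - b (dm m * i))) atTop (nhds L) → b' (dm n * k) = L) :
    Continuous (fun t => eps y t * y t) ∧
    ∀ t, 0 ≤ t → eps y t * y t = y0 + b' t + ∫ s in (0:ℝ)..t, bd lam (eps y s * y s) := by
  have ext : ∀ f : ℝ → ℝ, Continuous f → (∀ n k : ℕ, b' (dm n * k) = f (dm n * k)) →
      ∀ t, 0 ≤ t → b' t = f t := by
    intro f hf h t ht
    refine tendsto_nhds_unique ((hb'.tendsto t).comp (dm_floor_tendsto ht)) ?_
    refine ((hf.tendsto t).comp (dm_floor_tendsto ht)).congr fun n => (h n _).symm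
  have hnn : ∀ n k : ℕ, 0 ≤ dm n * (k:ℝ) := fun n k => by have := dm_pos n; positivity
  rcases nz_tau hy with ha | ⟨τ, h0, h1, h2⟩
  · have he : eps y = fun _ => 1 := by funext r; simp [eps, ha]
    have hbb : ∀ t, 0 ≤ t → b' t = b t := by
      refine ext b hb fun n k => hlim n k _ ?_
      have := flip_lim (e := eps y) hb (τ := dm n * k) (hnn n k) (hnn n k)
        (fun r _ _ => by rw [he]) (fun r _ h3 h4 => absurd h4 (not_lt.2 h3))
      convert this using 2
      rw [min_self, hb0]; ring
    simp only [he, one_mul]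
    refine ⟨hy, fun t ht => ?_⟩
    rw [hbb t ht]; exact heq t ht
  · have he1 : ∀ r, r < τ → eps y r = 1 := fun r hr => by simp [eps, h2, hr]
    have he2 : ∀ r, τ ≤ r → eps y r = -1 := fun r hr => by simp [eps, h2, hr]
    have hbb : ∀ t, 0 ≤ t → b' t = 2 * b (min t τ) - b t := by
      refine ext (fun t => 2 * b (min t τ) - b t) (by fun_prop) fun n k => hlim n k _ ?_
      have := flip_lim (e := eps y) hb h0 (hnn n k) (fun r _ hr => he1 r hr) (fun r _ hr _ => he2 r hr)
      rwa [hb0, sub_zero] at this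
    have hY' : ∀ t, eps y t * y t = y (min t τ) - y (max t τ) := by
      intro t
      rcases lt_or_ge t τ with ht | ht
      · rw [he1 t ht, min_eq_left ht.le, max_eq_right ht.le, h1]; ring
      · rw [he2 t ht, min_eq_right ht, max_eq_left ht, h1]; ring
    have hc : Continuous (fun t => eps y t * y t) := by
      simp_rw [hY']; fun_prop
    refine ⟨hc, fun t ht => ?_⟩
    have hin : ∀ t, 0 ≤ t → t ≤ τ → ∫ s in (0:ℝ)..t, bd lam (eps y s * y s) =
        ∫ s in (0:ℝ)..t, bd lam (y s) := by
      intro t ht htτ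
      refine intervalIntegral.integral_congr_ae ?_
      have hτ0 : ∀ᵐ s : ℝ, s ≠ τ := by simp [ae_iff]
      filter_upwards [hτ0] with s hs hst
      rw [uIoc_of_le ht] at hst
      rw [he1 s (lt_of_le_of_ne (hst.2.trans htτ) hs), one_mul]
    rcases lt_or_ge t τ with htτ | htτ
    · rw [hbb t ht, hin t ht htτ.le, he1 t htτ, min_eq_left htτ.le, heq t ht]; ring
    · have i1 := bd_ii hl hc.measurable
      have i2 := bd_ii hl hy.measurable
      have e1 : ∫ s in τ..t, bd lam (eps y s * y s) = -∫ s in τ..t, bd lam (y s) := by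
        rw [← intervalIntegral.integral_neg]
        refine intervalIntegral.integral_congr_ae ?_
        rw [ae_restrict_iff' measurableSet_Ioi] at hne
        filter_upwards [hne] with s hs hst
        rw [uIoc_of_le htτ] at hst
        have h3 := hs (h0.trans_lt hst.1)
        rw [he2 s hst.1.le]
        unfold bd
        rcases lt_or_gt_of_ne h3 with h | h
        · rw [if_neg (by linarith), if_pos h.le]
        · rw [if_pos (by linarith), if_neg (by linarith)]; ring
      have a1 := intervalIntegral.integral_add_adjacent_intervals (i1 0 τ) (i1 τ t)
      have a2 := intervalIntegral.integral_add_adjacent_intervals (i2 0 τ) (i2 τ t)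
      have q1 := heq τ h0
      have q2 := heq t ht
      rw [hbb t ht, min_eq_right htτ, ← a1, hin τ h0 le_rfl, e1, he2 t htτ]
      rw [h1] at q1
      rw [← a2] at q2
      linarith

end Reflect

end Part12

section Part13

section Transfer

variable {μ : Measure Ω} {F : ℝ → MeasurableSpace Ω} {V : ℝ → Ω → ℝ}

lemma repr_dy (hB : IsBM μ F V) {T : ℝ} {A : Set Ω}
    (hA : MeasurableSet[natFilt μ V T] A) :
    ∃ C : Set (ℕ × ℕ → ℝ), MeasurableSet C ∧ ∀ᵐ ω ∂μ, (ω ∈ A ↔ dyv (fun s => V s ω) ∈ C) := by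
  set D : Ω → (ℕ × ℕ → ℝ) := fun ω => dyv fun s => V s ω with hD
  have hle : natFilt μ V T ≤ eventuallyMeasurableSpace (MeasurableSpace.comap D inferInstance) (ae μ) := by
    refine sup_le (iSup₂_le fun s hs => ?_) (MeasurableSpace.generateFrom_le fun A hA => ?_)
    · rintro _ ⟨C, hC, rfl⟩
      set f : (ℕ × ℕ → ℝ) → ℝ := fun b => limUnder atTop fun n => b (n, ⌊s / dm n⌋₊) with hf
      have hfm : Measurable f := meas_limUnder fun n => measurable_pi_apply _
      refine ⟨D ⁻¹' (f ⁻¹' C), ⟨_, hfm hC, rfl⟩, ?_⟩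
      filter_upwards [hB.cont] with ω hω
      have : f (D ω) = V s ω := ((hω.tendsto s).comp (dm_floor_tendsto hs.1)).limUnder_eq
      change (V s ω ∈ C) = (f (D ω) ∈ C)
      rw [this]
    · exact ⟨∅, @MeasurableSet.empty _ (MeasurableSpace.comap D inferInstance), ae_eq_empty.2 hA⟩
  obtain ⟨_, ⟨C, hC, rfl⟩, h⟩ := hle A hA
  refine ⟨C, hC, ?_⟩
  filter_upwards [h] with ω hω
  exact iff_of_eq hω

lemma transfer {β β' : Ω → (ℕ × ℕ → ℝ)} (hm : Measurable β) (hm' : Measurable β')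
    (hlaw : μ.map β = μ.map β') {Φ : ℕ → (ℕ × ℕ) → (ℕ × ℕ → ℝ) → ℝ}
    (hΦ : ∀ n x, Measurable (Φ n x)) {v : Ω → (ℕ × ℕ → ℝ)}
    (h1 : ∀ x, TendstoInMeasure μ (fun n ω => Φ n x (β ω)) atTop (fun ω => v ω x))
    (h2 : ∀ x, TendstoInMeasure μ (fun n ω => Φ n x (β' ω)) atTop (fun ω => v ω x))
    {P C : Set (ℕ × ℕ → ℝ)} (hP : MeasurableSet P) (hC : MeasurableSet C)
    (h : ∀ᵐ ω ∂μ, (β ω ∈ P ↔ v ω ∈ C)) : ∀ᵐ ω ∂μ, (β' ω ∈ P ↔ v ω ∈ C) := by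
  choose ns hns a1 a2 using fun x => common_subseq (h1 x) (h2 x)
  set Γ : (ℕ × ℕ → ℝ) → (ℕ × ℕ → ℝ) := fun b x => limUnder atTop fun n => Φ (ns x n) x b with hΓ
  have hΓm : Measurable Γ := measurable_pi_lambda _ fun x => meas_limUnder fun n => hΦ _ _
  have e1 : ∀ᵐ ω ∂μ, Γ (β ω) = v ω := by
    filter_upwards [ae_all_iff.2 a1] with ω hω
    funext x; exact (hω x).limUnder_eq
  have e2 : ∀ᵐ ω ∂μ, Γ (β' ω) = v ω := by
    filter_upwards [ae_all_iff.2 a2] with ω hω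
    funext x; exact (hω x).limUnder_eq
  have hQ : MeasurableSet {b | b ∈ P ↔ Γ b ∈ C} := by
    have : MeasurableSet (symmDiff P (Γ ⁻¹' C)) := hP.symmDiff (hΓm hC)
    convert this.compl using 1
    ext b
    simp only [mem_ofPred_eq, mem_compl_iff, Set.mem_symmDiff, mem_preimage]
    tauto
  have h3 : ∀ᵐ b ∂(μ.map β), (b ∈ P ↔ Γ b ∈ C) := by
    rw [ae_map_iff hm.aemeasurable hQ]
    filter_upwards [h, e1] with ω a b
    rw [b]; exact a
  rw [hlaw, ae_map_iff hm'.aemeasurable hQ] at h3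
  filter_upwards [h3, e2] with ω a b
  rw [← b]; exact a

/-- reconstruction functional -/
def Phi (lam y0 : ℝ) (n : ℕ) (x : ℕ × ℕ) (b : ℕ × ℕ → ℝ) : ℝ :=
  ∑ i ∈ Finset.range ⌊dm x.1 * (x.2 : ℝ) / dm n⌋₊,
    psgn (Psi lam y0 (dm n * i) b) * (b (n, i + 1) - b (n, i))

lemma Phi_meas (lam y0 : ℝ) (n : ℕ) (x : ℕ × ℕ) : Measurable (Phi lam y0 n x) := by
  refine Finset.measurable_sum _ fun i _ => ?_
  exact (psgn_meas.comp (Psi_meas lam y0 _)).mul ((measurable_pi_apply _).sub (measurable_pi_apply _))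

lemma Phi_tim [IsProbabilityMeasure μ] (hB : IsBM μ F V) {lam y0 : ℝ} (hl : 0 ≤ lam)
    {H B Y : ℝ → Ω → ℝ} (hH : AB F 1 H) (hHc : CA μ H)
    (hBt : ∀ t, 0 ≤ t → TendstoInMeasure μ (fun n => gs H V t n) atTop (B t))
    (hBc : ∀ᵐ ω ∂μ, Continuous fun t => B t ω) (hB0 : ∀ᵐ ω ∂μ, B 0 ω = 0)
    (hYm : ∀ s, 0 ≤ s → Measurable[F s] (Y s))
    (hYc : ∀ᵐ ω ∂μ, Continuous fun t => Y t ω)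
    (hY0 : ∀ t, 0 < t → μ {ω | Y t ω = 0} = 0)
    (hYeq : ∀ᵐ ω ∂μ, ∀ t, 0 ≤ t → Y t ω = y0 + B t ω + ∫ s in (0:ℝ)..t, bd lam (Y s ω))
    (hKH : ∀ s, 0 < s → ∀ᵐ ω ∂μ, psgn (Y s ω) * H s ω = 1) :
    (∀ᵐ ω ∂μ, ∀ t, 0 ≤ t → Psi lam y0 t (dyv fun s => B s ω) = Y t ω) ∧
    ∀ x, TendstoInMeasure μ (fun n ω => Phi lam y0 n x (dyv fun s => B s ω)) atTop
      (fun ω => dyv (fun s => V s ω) x) := by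
  have hPsi : ∀ᵐ ω ∂μ, ∀ t, 0 ≤ t → Psi lam y0 t (dyv fun s => B s ω) = Y t ω := by
    filter_upwards [hBc, hB0, hYc, hYeq] with ω a b c d t ht
    refine Psi_exact hl y0 a c.measurable (fun t ht => ?_) ht
    rw [b, sub_zero]; exact d t ht
  refine ⟨hPsi, fun x => ?_⟩
  have hnn : ∀ n k : ℕ, 0 ≤ dm n * (k:ℝ) := fun n k => by have := dm_pos n; positivity
  have := recover hB (K := fun s ω => psgn (Y s ω))
    (AB_pm (fun s hs => psgn_meas.comp (hYm s hs)) fun s ω => psgn_pm _) (psgn_CA hYc hY0) hH hHc hBt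
    hKH (hnn x.1 x.2)
  refine this.congr_left fun n => ?_
  filter_upwards [hPsi] with ω hω
  unfold gs usum Phi
  refine Finset.sum_congr rfl fun i _ => ?_
  rw [hω _ (hnn n i)]
  simp [dyv]

end Transfer

end Part13

section Part14

section NoStrong

variable {μ : Measure Ω} {F : ℝ → MeasurableSpace Ω} {V : ℝ → Ω → ℝ}

lemma gs_neg (H V : ℝ → Ω → ℝ) (t : ℝ) (n : ℕ) (ω : Ω) :
    gs (fun s ω => -H s ω) V t n ω = -gs H V t n ω := by
  unfold gs usum
  rw [← Finset.sum_neg_distrib]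
  exact Finset.sum_congr rfl fun i _ => by ring

lemma psgn_neg {y : ℝ} (hy : y ≠ 0) : psgn (-y) = -psgn y := by
  rw [psgn_eq, psgn_eq]
  rcases lt_or_gt_of_ne hy with h | h
  · rw [if_neg (by linarith), if_pos h.le]; ring
  · rw [if_pos (by linarith), if_neg (by linarith)]

lemma part3 {g h : ℝ} (hgh : 0 < g + h) {x₁ x₂ : ℝ} [IsProbabilityMeasure μ]
    (hB : IsBM μ F V) {X₁ X₂ : ℝ → Ω → ℝ} (hS : Solves49 μ F g h x₁ x₂ V X₁ X₂)
    (hA : ∀ t : ℝ, 0 ≤ t → natFilt μ (fun s ω => (X₁ s ω, X₂ s ω)) t ≤ natFilt μ V t) : False := by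
  obtain ⟨I₁, I₂, S, s1, s2⟩ := hS.sys
  set lam := g + h with hlam
  set y0 := x₁ - x₂ with hy0
  set Y : ℝ → Ω → ℝ := fun t ω => X₁ t ω - X₂ t ω with hY
  have hl : 0 ≤ lam := hgh.le
  have hYm : ∀ t, 0 ≤ t → Measurable[F t] (Y t) := fun t ht => (S.m1 t ht).sub (S.m2 t ht)
  have hYc : ∀ᵐ ω ∂μ, Continuous fun t => Y t ω := S.contY
  set H : ℝ → Ω → ℝ := fun t ω => psgn (Y t ω) with hH
  have hH1 : ∀ s ω, H s ω = 1 ∨ H s ω = -1 := fun s ω => psgn_pm _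
  have hHm : ∀ s, 0 ≤ s → Measurable[F s] (H s) := fun s hs => psgn_meas.comp (hYm s hs)
  have hHA : AB F 1 H := AB_pm hHm hH1
  have hI : ∀ t, 0 ≤ t → TendstoInMeasure μ (fun n => rsum H V t n) atTop
      (fun ω => I₁ t ω - I₂ t ω) := by
    intro t ht
    refine (tim_sub (s1.2 t ht) (s2.2 t ht)).congr_left fun n => ae_of_all _ fun ω => ?_
    unfold rsum
    rw [← Finset.sum_sub_distrib]
    refine Finset.sum_congr rfl fun i _ => ?_
    simp only [hH, hY, psgn_eq, sub_nonpos]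
    split_ifs <;> ring
  have hY0 : ∀ t, 0 < t → μ {ω | Y t ω = 0} = 0 := by
    intro t ht
    refine zero_prob hB (B := fun t ω => I₁ t ω - I₂ t ω) hHm hH1 hI hYm hl ?_ ht
    filter_upwards [S.diff, hYc] with ω a b s t hs ht
    have i1 := bd_ii hl b.measurable
    have a1 := intervalIntegral.integral_add_adjacent_intervals (i1 0 s) (i1 s t)
    have q1 := a s hs
    have q2 := a t ht
    have e : (Y t ω - (I₁ t ω - I₂ t ω)) - (Y s ω - (I₁ s ω - I₂ s ω)) =
        ∫ r in s..t, bd lam (Y r ω) := by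
      simp only [hY] at a1 ⊢
      linarith
    rw [e]
    exact bd_lip hl _ s t
  have hHc : CA μ H := psgn_CA hYc hY0
  obtain ⟨B, hBm, hBc, hB0, hBr⟩ := cont_version hB hHA hH1 hHc
  have hBt : ∀ t, 0 ≤ t → TendstoInMeasure μ (fun n => gs H V t n) atTop (B t) := fun t ht =>
    gs_of_rsum hB hHA hHc ht (hBr t ht)
  have hBI := ae_all_of_cont (f := fun t ω => I₁ t ω - I₂ t ω) (f' := B) (S.contI hl)
    (hBc.mono fun ω h => h.continuousOn) fun t ht => tendstoInMeasure_ae_unique (hI t ht) (hBr t ht)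
  have hYeq : ∀ᵐ ω ∂μ, ∀ t, 0 ≤ t → Y t ω = y0 + B t ω + ∫ s in (0:ℝ)..t, bd lam (Y s ω) := by
    filter_upwards [S.diff, hBI] with ω a b t ht
    rw [← b t ht]; exact a t ht
  have hmF : ∀ {Z : ℝ → Ω → ℝ}, (∀ t, 0 ≤ t → Measurable[F t] (Z t)) → ∀ t, 0 ≤ t → Measurable (Z t) :=
    fun h t ht => (h t ht).mono (hB.le t) le_rfl
  -- the reflected objects
  set E : ℝ → Ω → ℝ := fun t ω => eps (fun r => Y r ω) t with hE
  have hEA : AB F 1 E := AB_pm (fun s _ => eps_meas hB.mono hYm s) fun s ω => eps_pm _ _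
  have hEc : CA μ E := by
    intro s hs
    have h1 : ∀ᵐ ω ∂μ, Y s ω ≠ 0 := by rw [ae_iff]; simpa using hY0 s hs
    filter_upwards [hYc, h1] with ω a b
    exact eps_cont a b
  set H' : ℝ → Ω → ℝ := fun t ω => E t ω * H t ω with hH'
  have hHA' : AB F 1 H' := AB_mul hEA hHA
  have hHc' : CA μ H' := CA_mul hEc hHc
  have hH1' : ∀ s ω, H' s ω = 1 ∨ H' s ω = -1 := by
    intro s ω
    rcases eps_pm (fun r => Y r ω) s with h1 | h1 <;> rcases hH1 s ω with h2 | h2 <;>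
      simp [hH', hE, h1, h2]
  obtain ⟨B', hBm', hBc', hB0', hBr'⟩ := cont_version hB hHA' hH1' hHc'
  have hBt' : ∀ t, 0 ≤ t → TendstoInMeasure μ (fun n => gs H' V t n) atTop (B' t) := fun t ht =>
    gs_of_rsum hB hHA' hHc' ht (hBr' t ht)
  have hEB : ∀ t, 0 ≤ t → TendstoInMeasure μ (fun n => gs E B t n) atTop (B' t) := fun t ht =>
    tim_of_sub (lemD hB hEA hEc hHA hHc hBt ht) (hBt' t ht)
  have hnn : ∀ n k : ℕ, 0 ≤ dm n * (k:ℝ) := fun n k => by have := dm_pos n; positivity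
  have hlim : ∀ᵐ ω ∂μ, ∀ n k : ℕ, ∀ L, Tendsto (fun m => gs E B (dm n * k) m ω) atTop (nhds L) →
      B' (dm n * k) ω = L := by
    refine ae_all_iff.2 fun n => ae_all_iff.2 fun k => ?_
    obtain ⟨ns, hns, hae⟩ := (hEB _ (hnn n k)).exists_seq_tendsto_ae
    filter_upwards [hae] with ω a L hL
    exact tendsto_nhds_unique a (hL.comp hns.tendsto_atTop)
  have hne := ae_ae_ne (hmF hYm) hYc hY0
  set Y' : ℝ → Ω → ℝ := fun t ω => E t ω * Y t ω with hY'
  have href : ∀ᵐ ω ∂μ, (Continuous fun t => Y' t ω) ∧ 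
      ∀ t, 0 ≤ t → Y' t ω = y0 + B' t ω + ∫ s in (0:ℝ)..t, bd lam (Y' s ω) := by
    filter_upwards [hYc, hBc, hB0, hYeq, hne, hBc', hlim] with ω a1 a2 a3 a4 a5 a6 a7
    exact reflect hl a1 a2 a3 a4 a5 a6 a7
  have hYm' : ∀ t, 0 ≤ t → Measurable[F t] (Y' t) := fun t ht => (hEA.meas t ht).mul (hYm t ht)
  have hY0' : ∀ t, 0 < t → μ {ω | Y' t ω = 0} = 0 := by
    intro t ht
    refine measure_mono_null (fun ω hω => ?_) (hY0 t ht)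
    rcases mul_eq_zero.1 hω with h1 | h1
    · rcases eps_pm (fun r => Y r ω) t with h2 | h2 <;> simp [hE, h2] at h1
    · exact h1
  obtain ⟨hP, hΦ⟩ := Phi_tim hB hl hHA hHc hBt hBc hB0 hYm hYc hY0 hYeq (fun s hs => by
    refine ae_of_all _ fun ω => ?_
    change psgn (Y s ω) * psgn (Y s ω) = 1
    rcases psgn_pm (Y s ω) with h | h <;> simp [h])
  obtain ⟨hP', hΦ'⟩ := Phi_tim hB hl hHA' hHc' hBt' hBc' hB0' hYm' (href.mono fun ω h => h.1) hY0'
    (href.mono fun ω h => h.2) (fun s hs => by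
      have h1 : ∀ᵐ ω ∂μ, Y s ω ≠ 0 := by rw [ae_iff]; simpa using hY0 s hs
      filter_upwards [h1] with ω hω
      change psgn (E s ω * Y s ω) * (E s ω * psgn (Y s ω)) = 1
      have h3 : psgn (Y s ω) * psgn (Y s ω) = 1 := by
        rcases psgn_pm (Y s ω) with h | h <;> simp [h]
      rcases eps_pm (fun r => Y r ω) s with h2 | h2
      · have : E s ω = 1 := h2
        rw [this, one_mul, one_mul, h3]
      · have : E s ω = -1 := h2
        rw [this, neg_one_mul, neg_one_mul, psgn_neg hω]
        linarith)
  obtain ⟨m1, m2, hlaw⟩ := law_eq hB hHm hH1 hHA'.meas hH1' hBt hBt' (hmF hBm) (hmF hBm')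
  -- no zero up to any time
  have hnz : ∀ T : ℝ, 0 < T → ∀ᵐ ω ∂μ, nz (fun r => Y r ω) T := by
    intro T hT
    have hmeas : MeasurableSet[natFilt μ V T] {ω | 0 < Y T ω} := by
      refine hA T hT.le _ ?_
      refine (le_sup_left : _ ≤ natFilt μ (fun s ω => (X₁ s ω, X₂ s ω)) T) _ ?_
      refine (le_iSup₂_of_le (f := fun s (_ : s ∈ Icc (0:ℝ) T) =>
        MeasurableSpace.comap (fun ω => (X₁ s ω, X₂ s ω)) inferInstance) T ⟨hT.le, le_rfl⟩ le_rfl) _ ?_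
      refine ⟨{p : ℝ × ℝ | p.2 < p.1}, measurableSet_lt measurable_snd measurable_fst, ?_⟩
      ext ω; simp [hY]
    obtain ⟨C, hC, hAC⟩ := repr_dy hB hmeas
    have hPm : MeasurableSet {b | 0 < Psi lam y0 T b} := measurableSet_lt measurable_const (Psi_meas _ _ _)
    have htr := transfer m1 m2 hlaw (Phi_meas lam y0) hΦ hΦ' hPm hC (by
      filter_upwards [hAC, hP] with ω a b
      rw [← a]
      change 0 < Psi lam y0 T _ ↔ 0 < Y T ω
      rw [b T hT.le])
    have h1 : ∀ᵐ ω ∂μ, Y T ω ≠ 0 := by rw [ae_iff]; simpa using hY0 T hT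
    filter_upwards [htr, hAC, hP', h1] with ω a b c d
    by_contra hn
    have e1 : E T ω = -1 := by simp [hE, eps, hn]
    rw [← b] at a
    change 0 < Psi lam y0 T _ ↔ 0 < Y T ω at a
    rw [c T hT.le] at a
    change 0 < E T ω * Y T ω ↔ _ at a
    rw [e1] at a
    rcases lt_or_gt_of_ne d with h2 | h2
    · have := a.1 (by linarith); linarith
    · have := a.2 h2; linarith
  -- symmetry of the law
  obtain ⟨m3, m4, hsym⟩ := law_eq hB (H' := fun s ω => -H s ω) (B' := fun t ω => -B t ω) hHm hH1
    (fun s hs => (hHm s hs).neg) (fun s ω => by rcases hH1 s ω with h | h <;> simp [h]) hBt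
    (fun t ht => by
      have := tim_mul_bdd (a := fun _ => (-1:ℝ)) (C := 1) (by simp) (hBt t ht)
      simp only [neg_one_mul] at this
      refine this.congr_left fun n => ae_of_all _ fun ω => ?_
      exact (gs_neg H V t n ω).symm) (hmF hBm) (hmF fun t ht => (hBm t ht).neg)
  obtain ⟨T, hT⟩ := exists_nat_gt (max (|y0| / lam) 1)
  have hT1 : (1:ℝ) < T := (le_max_right _ _).trans_lt hT
  have hT2 : |y0| < lam * T := by
    have := (le_max_left _ _).trans_lt hT
    rw [div_lt_iff₀ hgh] at this
    linarith
  have hT0 : (0:ℝ) < T := by linarith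
  have hdm : dm 0 * (T:ℝ) = T := by simp [dm]
  have hone : ∀ᵐ ω ∂μ, (0 < y0 ∧ 0 < B T ω) ∨ (y0 < 0 ∧ B T ω < 0) := by
    filter_upwards [hnz T hT0, hYc, hYeq, hB0] with ω a b c d
    rw [nz_iff b] at a
    have c0 := c 0 le_rfl
    rw [d, intervalIntegral.integral_same, add_zero, add_zero] at c0
    have hy := a 0 ⟨le_rfl, hT0.le⟩
    have cT := c T hT0.le
    rw [c0] at hy
    rcases lt_or_gt_of_ne hy with h1 | h1
    · right
      have hneg : ∀ s ∈ Icc (0:ℝ) T, Y s ω < 0 := by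
        intro s hs
        by_contra hcon
        obtain ⟨r, hr, hr0⟩ := intermediate_value_Icc hs.1 (f := fun r => Y r ω) b.continuousOn
          (show (0:ℝ) ∈ Icc (Y 0 ω) (Y s ω) from ⟨by linarith, not_lt.1 hcon⟩)
        exact a r ⟨hr.1, hr.2.trans hs.2⟩ hr0
      have hInt : ∫ s in (0:ℝ)..T, bd lam (Y s ω) = lam * T := by
        rw [intervalIntegral.integral_congr (g := fun _ => lam)]
        · simp; ring
        · intro s hs
          rw [uIcc_of_le hT0.le] at hs
          simp [bd, (hneg s hs).le]
      rw [hInt] at cT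
      have := hneg T ⟨hT0.le, le_rfl⟩
      rw [abs_of_neg h1] at hT2
      exact ⟨h1, by linarith⟩
    · left
      have hpos : ∀ s ∈ Icc (0:ℝ) T, 0 < Y s ω := by
        intro s hs
        by_contra hcon
        obtain ⟨r, hr, hr0⟩ := intermediate_value_Icc' hs.1 (f := fun r => Y r ω) b.continuousOn
          (show (0:ℝ) ∈ Icc (Y s ω) (Y 0 ω) from ⟨not_lt.1 hcon, by linarith⟩)
        exact a r ⟨hr.1, hr.2.trans hs.2⟩ hr0
      have hInt : ∫ s in (0:ℝ)..T, bd lam (Y s ω) = -lam * T := by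
        rw [intervalIntegral.integral_congr (g := fun _ => -lam)]
        · simp; ring
        · intro s hs
          rw [uIcc_of_le hT0.le] at hs
          simp [bd, hpos s hs]
      rw [hInt] at cT
      have := hpos T ⟨hT0.le, le_rfl⟩
      rw [abs_of_pos h1] at hT2
      exact ⟨h1, by linarith⟩
  have hQ : MeasurableSet {b : ℕ × ℕ → ℝ | (0 < y0 ∧ 0 < b (0, T)) ∨ (y0 < 0 ∧ b (0, T) < 0)} := by
    have h1 : Measurable fun b : ℕ × ℕ → ℝ => b (0, T) := measurable_pi_apply _
    exact ((MeasurableSet.const _).inter (measurableSet_lt measurable_const h1)).union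
      ((MeasurableSet.const _).inter (measurableSet_lt h1 measurable_const))
  have h3 : ∀ᵐ b ∂(μ.map fun ω => dyv fun s => B s ω),
      (0 < y0 ∧ 0 < b (0, T)) ∨ (y0 < 0 ∧ b (0, T) < 0) := by
    rw [ae_map_iff m1.aemeasurable hQ]
    filter_upwards [hone] with ω hω
    simpa only [dyv, hdm] using hω
  rw [hsym, ae_map_iff m4.aemeasurable hQ] at h3
  have hfalse : ∀ᵐ ω ∂μ, False := by
    filter_upwards [h3, hone] with ω a b
    simp only [dyv, hdm] at a
    rcases a with a | a <;> rcases b with b | b <;> linarith [a.1, a.2, b.1, b.2]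
  exact hfalse.exists.elim fun _ h => h

end NoStrong

end Part14

/-- second part of Theorem 1 of the paper; degenerate case
`ρ = 1, σ = 0`.  The system (4.7)-(4.8) admits a strong solution — one adapted to the
augmented filtration of the driving Brownian motion `W` — which is pathwise unique;
whereas the system (4.9)-(4.10), driven by a Brownian motion `V`, admits no strong
solution. -/
theorem degenerate_strong_47_and_no_strong_49
    (g h : ℝ) (hg : 0 ≤ g) (hh : 0 ≤ h) (hgh : 0 < g + h) (x₁ x₂ : ℝ) :
    (∀ (Ω : Type) [mΩ : MeasurableSpace Ω] (μ : Measure Ω) [IsProbabilityMeasure μ]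
        (F : ℝ → MeasurableSpace Ω) (W : ℝ → Ω → ℝ),
      IsBM μ F W →
        ∃ X₁ X₂ : ℝ → Ω → ℝ, Solves47 μ F g h x₁ x₂ W X₁ X₂ ∧
          ∀ t : ℝ, 0 ≤ t →
            natFilt μ (fun s ω => (X₁ s ω, X₂ s ω)) t ≤ natFilt μ W t) ∧
    (∀ (Ω : Type) [mΩ : MeasurableSpace Ω] (μ : Measure Ω) [IsProbabilityMeasure μ]
        (F : ℝ → MeasurableSpace Ω) (W X₁ X₂ X₁' X₂' : ℝ → Ω → ℝ),
      IsBM μ F W →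
        Solves47 μ F g h x₁ x₂ W X₁ X₂ →
        Solves47 μ F g h x₁ x₂ W X₁' X₂' →
        ∀ᵐ ω ∂μ, ∀ t : ℝ, 0 ≤ t → X₁ t ω = X₁' t ω ∧ X₂ t ω = X₂' t ω) ∧
    (∀ (Ω : Type) [mΩ : MeasurableSpace Ω] (μ : Measure Ω) [IsProbabilityMeasure μ]
        (F : ℝ → MeasurableSpace Ω) (V : ℝ → Ω → ℝ),
      IsBM μ F V →
        ¬ ∃ X₁ X₂ : ℝ → Ω → ℝ, Solves49 μ F g h x₁ x₂ V X₁ X₂ ∧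
            ∀ t : ℝ, 0 ≤ t →
              natFilt μ (fun s ω => (X₁ s ω, X₂ s ω)) t ≤ natFilt μ V t) := by
  have h0 : 0 ≤ g + h := hgh.le
  refine ⟨?_, ?_, ?_⟩
  · intro Ω mΩ μ hμ F W hB
    exact part1 g h h0 x₁ x₂ hB
  · intro Ω mΩ μ hμ F W X₁ X₂ X₁' X₂' hB H H'
    exact part2 g h h0 x₁ x₂ hB H H'
  · rintro Ω mΩ μ hμ F V hB ⟨X₁, X₂, hS, hA⟩
    exact part3 hgh hB hS hA

end SDEPaper
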